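/- Let g = (g_1,…,g_m) be a tuple of polynomials in ℝ[X_1,…,X_n] such that S(g) is convex with nonempty interior and the quadratic module M(g) is Archimedean. Suppose that each g_i is strictly quasiconcave on S(g) ∩ Z(g_i) or is g-sos-concave. Then there is d ∈ ℕ₀ such that every polynomial f ∈ ℝ[X_1,…,X_n] of degree at most 1 with f ≥ 0 on S(g) lies in M_d(g). -/

import Mathlib

open MvPolynomial Matrix

noncomputable section

/-- `S(g) = {x ∈ ℝⁿ : g₁(x) ≥ 0, …, g_m(x) ≥ 0}`. -/
def SolSet {n m : ℕ} (g : Fin m → MvPolynomial (Fin n) ℝ) : Set (Fin n → ℝ) :=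
  {x | ∀ i, 0 ≤ eval x (g i)}

/-- The extended tuple `(g₀, g₁, …, g_m)` with `g₀ := 1`. -/
def withOne {n m : ℕ} (g : Fin m → MvPolynomial (Fin n) ℝ) :
    Fin (m + 1) → MvPolynomial (Fin n) ℝ :=
  Fin.cons 1 g

/-- A polynomial is a sum of squares. -/
def IsSOS {n : ℕ} (p : MvPolynomial (Fin n) ℝ) : Prop :=
  ∃ (l : ℕ) (q : Fin l → MvPolynomial (Fin n) ℝ), p = ∑ i, q i ^ 2

/-- The quadratic module `M(g)` generated by `g₁,…,g_m` (with `g₀ := 1`). -/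
def QM {n m : ℕ} (g : Fin m → MvPolynomial (Fin n) ℝ) : Set (MvPolynomial (Fin n) ℝ) :=
  {f | ∃ s : Fin (m + 1) → MvPolynomial (Fin n) ℝ,
    (∀ i, IsSOS (s i)) ∧ f = ∑ i, s i * withOne g i}

/-- A quadratic module is Archimedean if for every polynomial `p` there is `N ∈ ℕ`
with `N - p ∈ M`. -/
def IsArchimedeanQM {n : ℕ} (M : Set (MvPolynomial (Fin n) ℝ)) : Prop :=
  ∀ p : MvPolynomial (Fin n) ℝ, ∃ N : ℕ, (N : MvPolynomial (Fin n) ℝ) - p ∈ M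

/-- `p ∈ ℝ[X]_{r_i}` where `r_i = (d - deg g_i)/2` if `g_i ≠ 0` and `r_i = -∞` if `g_i = 0`:
either `p = 0`, or `g_i ≠ 0` and `2 deg p + deg g_i ≤ d`. -/
def DegOK {n : ℕ} (d : ℕ) (gi p : MvPolynomial (Fin n) ℝ) : Prop :=
  p = 0 ∨ (gi ≠ 0 ∧ 2 * p.totalDegree + gi.totalDegree ≤ d)

/-- The `d`-truncated `k×k` matricial quadratic module `M_d^{k×k}(g)`. -/
def MatTruncQM {n : ℕ} (d : ℕ) {m : ℕ} (g : Fin m → MvPolynomial (Fin n) ℝ) (k : ℕ) :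
    Set (Matrix (Fin k) (Fin k) (MvPolynomial (Fin n) ℝ)) :=
  {H | ∃ (N : ℕ) (P : Fin (m + 1) → Fin N → Matrix (Fin k) (Fin k) (MvPolynomial (Fin n) ℝ)),
    (∀ i j a b, DegOK d (withOne g i) (P i j a b)) ∧
    H = ∑ i, ∑ j, withOne g i • ((P i j)ᵀ * P i j)}


/-- The `d`-truncated quadratic module `M_d(g)`. -/
def TruncQM {n : ℕ} (d : ℕ) {m : ℕ} (g : Fin m → MvPolynomial (Fin n) ℝ) :
    Set (MvPolynomial (Fin n) ℝ) :=
  {f | ∃ (N : ℕ) (p : Fin (m + 1) → Fin N → MvPolynomial (Fin n) ℝ),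
    (∀ i j, DegOK d (withOne g i) (p i j)) ∧
    f = ∑ i, ∑ j, p i j ^ 2 * withOne g i}

/-- The degree `d` Lasserre relaxation `S_d(g)`: all `x ∈ ℝⁿ` admitting a linear functional
`L` on `ℝ[X]_d` with `L(1) = 1`, `L(X_i) = x_i` and `L ≥ 0` on `M_d(g)`. -/
def Lasserre {n : ℕ} (d : ℕ) {m : ℕ} (g : Fin m → MvPolynomial (Fin n) ℝ) :
    Set (Fin n → ℝ) :=
  {x | ∃ L : MvPolynomial.restrictTotalDegree (Fin n) ℝ d →ₗ[ℝ] ℝ,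
    (∀ p : MvPolynomial.restrictTotalDegree (Fin n) ℝ d,
      (p : MvPolynomial (Fin n) ℝ) = 1 → L p = 1) ∧
    (∀ i : Fin n, ∀ p : MvPolynomial.restrictTotalDegree (Fin n) ℝ d,
      (p : MvPolynomial (Fin n) ℝ) = X i → L p = x i) ∧
    (∀ p : MvPolynomial.restrictTotalDegree (Fin n) ℝ d,
      (p : MvPolynomial (Fin n) ℝ) ∈ TruncQM d g → 0 ≤ L p)}


/-- The real zero set `Z(p)` of a polynomial `p`. -/
def ZSet {n : ℕ} (p : MvPolynomial (Fin n) ℝ) : Set (Fin n → ℝ) :=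
  {x | eval x p = 0}

/-- The gradient `∇g(x)` of a polynomial `g` at a point `x`. -/
def gradEval {n : ℕ} (g : MvPolynomial (Fin n) ℝ) (x : Fin n → ℝ) : Fin n → ℝ :=
  fun i => eval x (pderiv i g)

/-- The Hessian `(Hess g)(x)` of a polynomial `g` at a point `x`. -/
def hessEval {n : ℕ} (g : MvPolynomial (Fin n) ℝ) (x : Fin n → ℝ) :
    Matrix (Fin n) (Fin n) ℝ :=
  Matrix.of fun i j => eval x (pderiv i (pderiv j g))

/-- `g` is strictly quasiconcave at `x`. -/
def StrictlyQuasiconcaveAt {n : ℕ} (g : MvPolynomial (Fin n) ℝ) (x : Fin n → ℝ) : Prop :=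
  ∀ v : Fin n → ℝ, v ≠ 0 → gradEval g x ⬝ᵥ v = 0 → v ⬝ᵥ (hessEval g x) *ᵥ v < 0

/-- `f` is `g`-sos-concave: `-Hess f ∈ M^{n×n}(g) = ⋃_d M_d^{n×n}(g)`. -/
def SosConcave {n m : ℕ} (g : Fin m → MvPolynomial (Fin n) ℝ)
    (f : MvPolynomial (Fin n) ℝ) : Prop :=
  ∃ d : ℕ,
    (Matrix.of fun a b => -(pderiv a (pderiv b f)) :
      Matrix (Fin n) (Fin n) (MvPolynomial (Fin n) ℝ)) ∈ MatTruncQM d g n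

set_option linter.all false

set_option linter.unusedSectionVars false

/-- quadratic modules in a commutative real algebra -/
structure IsQMod {A : Type*} [CommRing A] [Algebra ℝ A] (P : Set A) : Prop where
  add : ∀ {a b}, a ∈ P → b ∈ P → a + b ∈ P
  sqm : ∀ (q : A) {a}, a ∈ P → q ^ 2 * a ∈ P
  one : (1 : A) ∈ P

namespace IsQMod
variable {A : Type*} [CommRing A] [Algebra ℝ A] {P : Set A}

theorem sq (h : IsQMod P) (q : A) : q ^ 2 ∈ P := by simpa using h.sqm q h.one

theorem zero (h : IsQMod P) : (0 : A) ∈ P := by simpa using h.sq 0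

theorem sumsq (h : IsQMod P) {s a : A} (hs : IsSumSq s) (ha : a ∈ P) : s * a ∈ P := by
  induction hs with
  | zero => simpa using h.zero
  | sq_add b hs ih => rw [add_mul, ← pow_two]; exact h.add (h.sqm _ ha) ih

theorem smul (h : IsQMod P) {c : ℝ} (hc : 0 ≤ c) {a : A} (ha : a ∈ P) : c • a ∈ P := by
  have := h.sqm (algebraMap ℝ A (Real.sqrt c)) ha
  rwa [← map_pow, Real.sq_sqrt hc, ← Algebra.smul_def] at this

theorem cst (h : IsQMod P) {c : ℝ} (hc : 0 ≤ c) : algebraMap ℝ A c ∈ P := by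
  rw [Algebra.algebraMap_eq_smul_one]; exact h.smul hc h.one

theorem sum (h : IsQMod P) {ι : Type*} (s : Finset ι) (f : ι → A) (hf : ∀ i ∈ s, f i ∈ P) :
    ∑ i ∈ s, f i ∈ P := by
  classical
  induction s using Finset.induction_on with
  | empty => simpa using h.zero
  | insert a s ha ih =>
    rw [Finset.sum_insert ha]
    exact h.add (hf _ (by simp)) (ih fun i hi => hf i (by simp [hi]))

end IsQMod

section putinar
variable {A : Type*} [CommRing A] [Algebra ℝ A]

/-- adjoining an element -/
def adjQ (P : Set A) (a : A) : Set A := {x | ∃ p ∈ P, ∃ s, IsSumSq s ∧ x = p + s * a}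

theorem isQMod_adjQ {P : Set A} (h : IsQMod P) (a : A) : IsQMod (adjQ P a) := by
  refine ⟨?_, ?_, ⟨1, h.one, 0, IsSumSq.zero, by simp⟩⟩
  · rintro _ _ ⟨p, hp, s, hs, rfl⟩ ⟨p', hp', s', hs', rfl⟩
    exact ⟨p + p', h.add hp hp', s + s', hs.add hs', by ring⟩
  · rintro q _ ⟨p, hp, s, hs, rfl⟩
    refine ⟨q ^ 2 * p, h.sqm q hp, q ^ 2 * s, ?_, by ring⟩
    have : IsSumSq (q^2) := by rw [pow_two]; exact IsSumSq.mul_self q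
    exact this.mul hs

theorem subset_adjQ (P : Set A) (a : A) : P ⊆ adjQ P a :=
  fun p hp => ⟨p, hp, 0, IsSumSq.zero, by simp⟩

theorem mem_adjQ {P : Set A} (h : IsQMod P) (a : A) : a ∈ adjQ P a :=
  ⟨0, h.zero, 1, by simpa using IsSumSq.mul_self (1 : A), by simp⟩

theorem exists_max_QMod {P : Set A} (h : IsQMod P) (hP : (-1 : A) ∉ P) :
    ∃ M, P ⊆ M ∧ IsQMod M ∧ (-1 : A) ∉ M ∧ ∀ a, a ∈ M ∨ -a ∈ M := by
  obtain ⟨M, hPM, hM⟩ := zorn_subset_nonempty {M : Set A | IsQMod M ∧ (-1 : A) ∉ M} (by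
    intro c hc hch hne
    refine ⟨⋃₀ c, ⟨⟨?_, ?_, ?_⟩, ?_⟩, fun s hs => Set.subset_sUnion_of_mem hs⟩
    · rintro a b ⟨s, hs, has⟩ ⟨t, ht, hbt⟩
      rcases hch.total hs ht with hst | hst
      · exact ⟨t, ht, (hc ht).1.add (hst has) hbt⟩
      · exact ⟨s, hs, (hc hs).1.add has (hst hbt)⟩
    · rintro q a ⟨s, hs, has⟩
      exact ⟨s, hs, (hc hs).1.sqm q has⟩
    · obtain ⟨s, hs⟩ := hne
      exact ⟨s, hs, (hc hs).1.one⟩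
    · rintro ⟨s, hs, has⟩
      exact (hc hs).2 has) P ⟨h, hP⟩
  have hQ := hM.prop.1
  refine ⟨M, hPM, hQ, hM.prop.2, ?_⟩
  by_contra hcon
  push Not at hcon
  obtain ⟨a, ha, ha'⟩ := hcon
  have key : ∀ b, b ∉ M → (-1 : A) ∈ adjQ M b := by
    intro b hb
    by_contra h1
    exact hb (hM.le_of_ge (y := adjQ M b) ⟨isQMod_adjQ hQ b, h1⟩ (subset_adjQ M b) (mem_adjQ hQ b))
  obtain ⟨q1, hq1, s1, hs1, e1⟩ := key a ha
  obtain ⟨q2, hq2, s2, hs2, e2⟩ := key (-a) ha'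
  have hs1M : s1 ∈ M := by simpa using hQ.sumsq hs1 hQ.one
  have hs2M : s2 ∈ M := by simpa using hQ.sumsq hs2 hQ.one
  have hneg : -s1 ∈ M := by
    have : -s1 = s2 + (s2 * q1 + s1 * q2) := by linear_combination s2 * e1 + s1 * e2
    rw [this]
    exact hQ.add hs2M (hQ.add (hQ.sumsq hs2 hq1) (hQ.sumsq hs1 hq2))
  apply hM.prop.2
  have h2 : (algebraMap ℝ A (1/2)) * 2 = 1 := by
    rw [← map_ofNat (algebraMap ℝ A) 2, ← map_mul]; norm_num
  have : (-1 : A) = q1 + ((algebraMap ℝ A (1/2) * (a + 1))^2 * s1 +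
      (algebraMap ℝ A (1/2) * (a - 1))^2 * (-s1)) := by
    rw [e1]
    have : (algebraMap ℝ A (1/2))^2 * 4 = 1 := by linear_combination (algebraMap ℝ A (1/2) *2 + 1) * h2
    linear_combination (-s1 * a) * this
  rw [this]
  exact hQ.add hq1 (hQ.add (hQ.sqm _ hs1M) (hQ.sqm _ hneg))

/-- infinitesimally near -/
def nearQ (M : Set A) (a : A) (r : ℝ) : Prop :=
  ∀ ε > 0, a - algebraMap ℝ A r + algebraMap ℝ A ε ∈ M ∧ algebraMap ℝ A r - a + algebraMap ℝ A ε ∈ M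

theorem exists_char {P : Set A} (h : IsQMod P) (harch : ∀ a, ∃ N : ℝ, algebraMap ℝ A N - a ∈ P)
    (hP : (-1 : A) ∉ P) : ∃ χ : A →ₐ[ℝ] ℝ, ∀ a ∈ P, 0 ≤ χ a := by
  obtain ⟨M, hPM, hM, hM1, htot⟩ := exists_max_QMod h hP
  set C := algebraMap ℝ A
  have hconst : ∀ r : ℝ, C r ∈ M → 0 ≤ r := by
    intro r hr
    by_contra hneg
    push Not at hneg
    apply hM1
    have := hM.smul (c := (-r)⁻¹) (by rw [inv_nonneg]; linarith) hr
    rw [Algebra.smul_def, ← map_mul] at this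
    have e : (-r)⁻¹ * r = -1 := by rw [inv_neg, neg_mul, inv_mul_cancel₀ hneg.ne]
    rw [e] at this
    simpa using this
  have huniq : ∀ a r s, nearQ M a r → nearQ M a s → r ≤ s := by
    intro a r s hr hs
    apply le_of_forall_pos_le_add
    intro ε hε
    have h1 := (hr (ε/2) (by linarith)).1
    have h2 := (hs (ε/2) (by linarith)).2
    have h3 := hM.add h1 h2
    have : a - C r + C (ε/2) + (C s - a + C (ε/2)) = C (s + ε - r) := by
      have : s + ε - r = s + ε/2 + ε/2 - r := by ring
      rw [this]
      simp only [map_add, map_sub]; ring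
    rw [this] at h3
    linarith [hconst _ h3]
  have hex : ∀ a, ∃ r, nearQ M a r := by
    intro a
    obtain ⟨N, hN⟩ := harch a
    obtain ⟨N', hN'⟩ := harch (-a)
    set T := {r : ℝ | a - C r ∈ M}
    have hne : T.Nonempty := ⟨-N', by
      have := hPM hN'
      simp only [T, Set.mem_ofPred_eq, map_neg]
      convert this using 1; ring⟩
    have hbd : BddAbove T := ⟨N, by
      intro r hr
      have h3 := hM.add hr (hPM hN)
      have : a - C r + (C N - a) = C (N - r) := by simp only [map_sub]; ring
      rw [this] at h3
      linarith [hconst _ h3]⟩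
    refine ⟨sSup T, fun ε hε => ⟨?_, ?_⟩⟩
    · obtain ⟨r, hr, hlt⟩ := exists_lt_of_lt_csSup hne (show sSup T - ε < sSup T by linarith)
      have : a - C (sSup T) + C ε = (a - C r) + C (r - (sSup T - ε)) := by
        simp only [map_sub]; ring
      rw [this]
      exact hM.add hr (hM.cst (by linarith))
    · rcases htot (a - C (sSup T + ε)) with h1 | h1
      · have := le_csSup hbd h1
        linarith
      · convert h1 using 1
        simp only [map_add]; ring
  choose α hα using hex
  have heq : ∀ a r, nearQ M a r → α a = r := fun a r hr =>
    le_antisymm (huniq _ _ _ (hα a) hr) (huniq _ _ _ hr (hα a))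
  have hadd : ∀ a b r s, nearQ M a r → nearQ M b s → nearQ M (a + b) (r + s) := by
    intro a b r s ha hb ε hε
    have h1 := ha (ε/2) (by linarith)
    have h2 := hb (ε/2) (by linarith)
    have e : C ε = C (ε/2) + C (ε/2) := by rw [← map_add]; norm_num
    constructor
    · convert hM.add h1.1 h2.1 using 1
      simp only [map_add]; rw [e]; ring
    · convert hM.add h1.2 h2.2 using 1
      simp only [map_add]; rw [e]; ring
  have hcst : ∀ r, nearQ M (C r) r := by
    intro r ε hε
    have := hM.cst (A := A) hε.le
    constructor <;> simpa [C] using this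
  have hneg : ∀ a r, nearQ M a r → nearQ M (-a) (-r) := by
    intro a r ha ε hε
    refine ⟨?_, ?_⟩
    · convert (ha ε hε).2 using 1
      simp only [map_neg]; ring
    · convert (ha ε hε).1 using 1
      simp only [map_neg]; ring
  have hsmulp : ∀ (c : ℝ) a r, 0 < c → nearQ M a r → nearQ M (C c * a) (c * r) := by
    intro c a r hc ha ε hε
    have h1 := ha (ε / c) (by positivity)
    have e : C ε = C c * C (ε / c) := by rw [← map_mul]; congr 1; field_simp
    constructor
    · convert hM.smul hc.le h1.1 using 1
      rw [Algebra.smul_def, e, map_mul]; ring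
    · convert hM.smul hc.le h1.2 using 1
      rw [Algebra.smul_def, e, map_mul]; ring
  have hsmul : ∀ (c : ℝ) a r, nearQ M a r → nearQ M (C c * a) (c * r) := by
    intro c a r ha
    rcases lt_trichotomy c 0 with hc | hc | hc
    · have := hneg _ _ (hsmulp (-c) a r (by linarith) ha)
      simpa using this
    · subst hc; simpa using hcst 0
    · exact hsmulp c a r hc ha
  have hsq0 : ∀ a, nearQ M a 0 → nearQ M (a ^ 2) 0 := by
    intro a ha ε hε
    refine ⟨by simpa using hM.add (hM.sq a) (hM.cst hε.le), ?_⟩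
    set δ := Real.sqrt ε
    have hδ : 0 < δ := Real.sqrt_pos.2 hε
    have h1 := ha δ hδ
    simp only [map_zero, sub_zero, zero_sub] at h1 ⊢
    have h2 := hM.smul (c := (2*δ)⁻¹) (by positivity)
      (hM.add (hM.sqm (C δ - a) h1.1) (hM.sqm (C δ + a) h1.2))
    convert h2 using 1
    rw [Algebra.smul_def]
    have e1 : C ε = C δ ^ 2 := by rw [← map_pow, Real.sq_sqrt hε.le]
    have e2 : C (2*δ)⁻¹ * (2 * C δ) = 1 := by
      rw [← map_ofNat C 2, ← map_mul, ← map_mul, inv_mul_cancel₀ (by positivity), map_one]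
    rw [e1]
    linear_combination (-(-a^2 + (C δ)^2)) * e2
  have hsq : ∀ a r, nearQ M a r → nearQ M (a ^ 2) (r ^ 2) := by
    intro a r ha
    have h0 := hadd _ _ _ _ ha (hcst (-r))
    have h1 := hsq0 _ (by simpa using h0)
    have h2 := hadd _ _ _ _ (hadd _ _ _ _ h1 (hsmul (2*r) a r ha)) (hcst (-r^2))
    convert h2 using 1
    · simp only [map_neg, map_mul, map_pow, map_ofNat]; ring
    · ring
  have hmul : ∀ a b r s, nearQ M a r → nearQ M b s → nearQ M (a * b) (r * s) := by
    intro a b r s ha hb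
    have h1 := hsq _ _ (hadd _ _ _ _ ha hb)
    have h2 := hneg _ _ (hsq _ _ (hadd _ _ _ _ ha (hneg _ _ hb)))
    have h3 := hsmul (1/4) _ _ (hadd _ _ _ _ h1 h2)
    have e : C (1/4) * 4 = 1 := by
      rw [← map_ofNat C 4, ← map_mul]; norm_num
    convert h3 using 1
    · linear_combination (-a * b) * e
    · ring
  refine ⟨{ toFun := α
            map_one' := heq _ _ (by simpa using hcst 1)
            map_mul' := fun a b => heq _ _ (hmul _ _ _ _ (hα a) (hα b))
            map_zero' := heq _ _ (by simpa using hcst 0)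
            map_add' := fun a b => heq _ _ (hadd _ _ _ _ (hα a) (hα b))
            commutes' := fun r => heq _ _ (hcst r) }, ?_⟩
  intro a ha
  change 0 ≤ α a
  apply le_of_forall_pos_le_add
  intro ε hε
  apply hconst
  have := hM.add (hPM ha) (hα a ε hε).2
  convert this using 1
  simp only [map_add]; ring

/-- Archimedean positivstellensatz (Putinar / Kadison-Dubois). -/
theorem putinar {P : Set A} (h : IsQMod P) (harch : ∀ a, ∃ N : ℝ, algebraMap ℝ A N - a ∈ P)
    (f : A) (hf : ∀ χ : A →ₐ[ℝ] ℝ, (∀ a ∈ P, 0 ≤ χ a) → 0 < χ f) : f ∈ P := by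
  have h1 : (-1 : A) ∈ adjQ P (-f) := by
    by_contra hcon
    obtain ⟨χ, hχ⟩ := exists_char (isQMod_adjQ h (-f))
      (fun a => by obtain ⟨N, hN⟩ := harch a; exact ⟨N, subset_adjQ _ _ hN⟩) hcon
    have := hf χ fun a ha => hχ a (subset_adjQ _ _ ha)
    have := hχ _ (mem_adjQ h (-f))
    rw [map_neg] at this
    linarith
  obtain ⟨q, hq, s, hs, e⟩ := h1
  set C := algebraMap ℝ A
  have hsf : s * f - 1 ∈ P := by convert hq using 1; linear_combination e
  obtain ⟨N1, hN1⟩ := harch s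
  obtain ⟨N2, hN2⟩ := harch (s ^ 2 * f + 1)
  obtain ⟨N3, hN3⟩ := harch (-f)
  set k : ℝ := max 1 (max N1 N2)
  have hk1 : 1 ≤ k := le_max_left _ _
  have hkN1 : N1 ≤ k := (le_max_left _ _).trans (le_max_right _ _)
  have hkN2 : N2 ≤ k := (le_max_right _ _).trans (le_max_right _ _)
  have ha : 2 * C k - s ∈ P := by
    have : 2 * C k - s = C (2 * k - N1) + (C N1 - s) := by
      simp only [map_sub, map_mul, map_ofNat]; ring
    rw [this]; exact h.add (h.cst (by linarith)) hN1
  have hb : 2 * C k - s ^ 2 * f - 1 ∈ P := by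
    have : 2 * C k - s ^ 2 * f - 1 = C (2 * k - N2) + (C N2 - (s ^ 2 * f + 1)) := by
      simp only [map_sub, map_mul, map_ofNat]; ring
    rw [this]; exact h.add (h.cst (by linarith)) hN2
  have step : ∀ r : ℝ, 0 ≤ r → f + C r ∈ P → f + C (r - (k ^ 2)⁻¹) ∈ P := by
    intro r hr hfr
    have h1 := h.add (h.add (h.add (h.sqm (C k - s) hfr) (h.smul (c := 2 * k) (by linarith) hsf)) hb)
      (h.smul hr (h.sumsq hs ha))
    have h2 := h.smul (c := (k^2)⁻¹) (by positivity) h1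
    convert h2 using 1
    simp only [Algebra.smul_def, map_sub]
    have e1 : C (k^2)⁻¹ * (C k)^2 = 1 := by
      rw [← map_pow, ← map_mul, inv_mul_cancel₀ (by positivity), map_one]
    change _ = C (k^2)⁻¹ * ((C k - s) ^ 2 * (f + C r) + C (2 * k) * (s * f - 1) + (2 * C k - s ^ 2 * f - 1) + C r * (s * (2 * C k - s)))
    rw [map_mul C 2 k, map_ofNat]
    linear_combination (-(f + C r)) * e1
  have iter : ∀ j : ℕ, f ∈ P ∨ f + C (N3 - j * (k ^ 2)⁻¹) ∈ P := by
    intro j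
    induction j with
    | zero => right; convert hN3 using 1; simp; ring
    | succ j ih =>
      rcases ih with ih | ih
      · exact Or.inl ih
      · by_cases hr : 0 ≤ N3 - j * (k ^ 2)⁻¹
        · right
          convert step _ hr ih using 3
          push_cast; ring
        · left
          have := h.add ih (h.cst (A := A) (c := -(N3 - j * (k ^ 2)⁻¹)) (by linarith))
          convert this using 1
          rw [map_neg]; ring
  obtain ⟨j, hj⟩ := exists_nat_gt (N3 * k ^ 2)
  rcases iter j with h1 | h1
  · exact h1
  · have hpos : N3 - j * (k ^ 2)⁻¹ ≤ 0 := by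
      have : N3 ≤ j * (k ^ 2)⁻¹ := by
        rw [← div_eq_mul_inv, le_div_iff₀ (by positivity)]; exact hj.le
      linarith
    have := h.add h1 (h.cst (A := A) (c := -(N3 - j * (k ^ 2)⁻¹)) (by linarith))
    convert this using 1
    rw [map_neg]; ring

end putinar

set_option linter.unusedSectionVars false

section trunc
variable {n m : ℕ} {g : Fin m → MvPolynomial (Fin n) ℝ}

theorem TQ.add {d : ℕ} {a b : MvPolynomial (Fin n) ℝ} (ha : a ∈ TruncQM d g) (hb : b ∈ TruncQM d g) :
    a + b ∈ TruncQM d g := by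
  obtain ⟨N, p, hp, rfl⟩ := ha
  obtain ⟨N', p', hp', rfl⟩ := hb
  refine ⟨N + N', fun i => Fin.append (p i) (p' i), ?_, ?_⟩
  · intro i j
    refine Fin.addCases (fun j => ?_) (fun j => ?_) j
    · simpa using hp i j
    · simpa using hp' i j
  · simp [Fin.sum_univ_add, Finset.sum_add_distrib]

theorem TQ.mono {d e : ℕ} (hde : d ≤ e) {a : MvPolynomial (Fin n) ℝ} (ha : a ∈ TruncQM d g) :
    a ∈ TruncQM e g := by
  obtain ⟨N, p, hp, rfl⟩ := ha
  exact ⟨N, p, fun i j => (hp i j).imp id fun h => ⟨h.1, h.2.trans hde⟩, rfl⟩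

theorem TQ.sqm {d e : ℕ} {a q : MvPolynomial (Fin n) ℝ} (hq : q.totalDegree ≤ e)
    (ha : a ∈ TruncQM d g) : q ^ 2 * a ∈ TruncQM (d + 2 * e) g := by
  obtain ⟨N, p, hp, rfl⟩ := ha
  refine ⟨N, fun i j => q * p i j, fun i j => ?_, ?_⟩
  · rcases hp i j with h | h
    · left; simp [h]
    · right
      refine ⟨h.1, ?_⟩
      have := totalDegree_mul q (p i j)
      have h2 := h.2
      change 2 * (q * p i j).totalDegree + _ ≤ _
      omega
  · simp only [Finset.mul_sum]
    exact Finset.sum_congr rfl fun i _ => Finset.sum_congr rfl fun j _ => by ring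

theorem TQ.zero (d : ℕ) : (0 : MvPolynomial (Fin n) ℝ) ∈ TruncQM d g :=
  ⟨0, fun _ _ => 0, fun _ _ => Or.inl rfl, by simp⟩

theorem TQ.gen {d : ℕ} (i : Fin (m+1)) (q : MvPolynomial (Fin n) ℝ)
    (hq : DegOK d (withOne g i) q) : q ^ 2 * withOne g i ∈ TruncQM d g := by
  refine ⟨1, fun i' _ => if i' = i then q else 0, fun i' j => ?_, ?_⟩
  · by_cases h : i' = i
    · subst h; simpa using hq
    · left; simp [h]
  · rw [Finset.sum_eq_single i]
    · simp
    · intro b _ hb; simp [hb]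
    · simp

theorem TQ.C {c : ℝ} (hc : 0 ≤ c) (d : ℕ) : (C c : MvPolynomial (Fin n) ℝ) ∈ TruncQM d g := by
  have := TQ.gen (g := g) (d := d) 0 (MvPolynomial.C (Real.sqrt c)) (Or.inr ⟨by simp [withOne], by simp [withOne]⟩)
  rwa [← map_pow, Real.sq_sqrt hc, show withOne g 0 = 1 from rfl, mul_one] at this

theorem TQ.ofGen (i : Fin (m+1)) (q : MvPolynomial (Fin n) ℝ) :
    ∃ d, q ^ 2 * withOne g i ∈ TruncQM d g := by
  by_cases h : withOne g i = 0
  · exact ⟨0, by rw [h, mul_zero]; exact TQ.zero 0⟩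
  · exact ⟨_, TQ.gen i q (Or.inr ⟨h, le_rfl⟩)⟩

theorem TQ.exSum {ι : Type*} (s : Finset ι) (f : ι → MvPolynomial (Fin n) ℝ)
    (h : ∀ i ∈ s, ∃ d, f i ∈ TruncQM d g) : ∃ d, ∑ i ∈ s, f i ∈ TruncQM d g := by
  classical
  induction s using Finset.induction_on with
  | empty => exact ⟨0, by simpa using TQ.zero 0⟩
  | insert a s ha ih =>
    obtain ⟨d, hd⟩ := ih fun i hi => h i (by simp [hi])
    obtain ⟨e, he⟩ := h a (by simp)
    rw [Finset.sum_insert ha]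
    exact ⟨max d e, TQ.add (TQ.mono (le_max_right _ _) he) (TQ.mono (le_max_left _ _) hd)⟩

theorem TQ.ofQM {f : MvPolynomial (Fin n) ℝ} (h : f ∈ QM g) : ∃ d, f ∈ TruncQM d g := by
  obtain ⟨s, hs, rfl⟩ := h
  refine TQ.exSum _ _ fun i _ => ?_
  obtain ⟨l, q, hq⟩ := hs i
  rw [hq, Finset.sum_mul]
  exact TQ.exSum _ _ fun j _ => TQ.ofGen i (q j)

theorem TQ.nonneg {d : ℕ} {f : MvPolynomial (Fin n) ℝ} (h : f ∈ TruncQM d g) {x : Fin n → ℝ}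
    (hx : x ∈ SolSet g) : 0 ≤ eval x f := by
  obtain ⟨N, p, hp, rfl⟩ := h
  rw [map_sum]
  refine Finset.sum_nonneg fun i _ => ?_
  rw [map_sum]
  refine Finset.sum_nonneg fun j _ => ?_
  rw [map_mul, map_pow]
  refine mul_nonneg (sq_nonneg _) ?_
  refine Fin.cases ?_ (fun i => ?_) i
  · simp [withOne]
  · simpa [withOne] using hx i

end trunc

section fam
variable {n m : ℕ} (g : Fin m → MvPolynomial (Fin n) ℝ)

/-- generators of the algebra of bounded families indexed by `S(g)` -/
def famGens : Set (SolSet g → MvPolynomial (Fin n) ℝ) :=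
  {F | (∃ i, F = fun _ => X i) ∨ ∃ c : SolSet g → ℝ, (∃ B, ∀ u, |c u| ≤ B) ∧ F = fun u => C (c u)}

/-- bounded families indexed by `S(g)` -/
def FamA : Subalgebra ℝ (SolSet g → MvPolynomial (Fin n) ℝ) := Algebra.adjoin ℝ (famGens g)

/-- uniform membership -/
def FamQ : Set (FamA g) := {F | ∃ d, ∀ u, F.1 u ∈ TruncQM d g}

variable {g}

theorem FamA.deg (F : FamA g) : ∃ D, ∀ u, (F.1 u).totalDegree ≤ D := by
  obtain ⟨F, hF⟩ := F
  induction hF using Algebra.adjoin_induction with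
  | mem F hF =>
    rcases hF with ⟨i, rfl⟩ | ⟨c, -, rfl⟩
    · exact ⟨1, fun u => by simp⟩
    · exact ⟨0, fun u => by simp⟩
  | algebraMap r => exact ⟨0, fun u => by simp [MvPolynomial.algebraMap_eq]⟩
  | add F G hF hG h1 h2 =>
    obtain ⟨D, hD⟩ := h1
    obtain ⟨E, hE⟩ := h2
    exact ⟨max D E, fun u => (totalDegree_add _ _).trans (max_le_max (hD u) (hE u))⟩
  | mul F G hF hG h1 h2 =>
    obtain ⟨D, hD⟩ := h1
    obtain ⟨E, hE⟩ := h2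
    exact ⟨D + E, fun u => (totalDegree_mul _ _).trans (add_le_add (hD u) (hE u))⟩

theorem FamQ.isQMod : IsQMod (FamQ g) := by
  refine ⟨?_, ?_, ?_⟩
  · rintro a b ⟨d, hd⟩ ⟨e, he⟩
    exact ⟨max d e, fun u => TQ.add (TQ.mono (le_max_left _ _) (hd u)) (TQ.mono (le_max_right _ _) (he u))⟩
  · rintro q a ⟨d, hd⟩
    obtain ⟨D, hD⟩ := FamA.deg q
    exact ⟨d + 2 * D, fun u => TQ.sqm (hD u) (hd u)⟩
  · exact ⟨0, fun u => by simpa using TQ.C (g := g) zero_le_one 0⟩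

theorem arch_mul {A : Type*} [CommRing A] [Algebra ℝ A] {P : Set A} (h : IsQMod P) {a b : A}
    (ha : ∃ N : ℝ, algebraMap ℝ A N - a ∈ P ∧ algebraMap ℝ A N + a ∈ P)
    (hb : ∃ N : ℝ, algebraMap ℝ A N - b ∈ P ∧ algebraMap ℝ A N + b ∈ P) :
    ∃ N : ℝ, algebraMap ℝ A N - a * b ∈ P ∧ algebraMap ℝ A N + a * b ∈ P := by
  set C := algebraMap ℝ A
  have hadd : ∀ {a b : A}, (∃ N : ℝ, C N - a ∈ P ∧ C N + a ∈ P) → (∃ N : ℝ, C N - b ∈ P ∧ C N + b ∈ P) →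
      ∃ N : ℝ, C N - (a + b) ∈ P ∧ C N + (a + b) ∈ P := by
    rintro a b ⟨N, h1, h2⟩ ⟨N', h1', h2'⟩
    refine ⟨N + N', ?_, ?_⟩
    · convert h.add h1 h1' using 1; rw [map_add]; ring
    · convert h.add h2 h2' using 1; rw [map_add]; ring
  have hneg : ∀ {a : A}, (∃ N : ℝ, C N - a ∈ P ∧ C N + a ∈ P) → ∃ N : ℝ, C N - (-a) ∈ P ∧ C N + (-a) ∈ P := by
    rintro a ⟨N, h1, h2⟩
    refine ⟨N, ?_, ?_⟩
    · convert h2 using 1; ring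
    · convert h1 using 1; ring
  have hsq : ∀ {a : A}, (∃ N : ℝ, C N - a ∈ P ∧ C N + a ∈ P) → ∃ N : ℝ, C N - a ^ 2 ∈ P ∧ C N + a ^ 2 ∈ P := by
    rintro a ⟨N, h1, h2⟩
    set M := max N 1
    have hM : 0 < M := lt_of_lt_of_le one_pos (le_max_right _ _)
    have h1' : C M - a ∈ P := by
      convert h.add h1 (h.cst (A := A) (c := M - N) (by simp [M])) using 1
      rw [map_sub]; ring
    have h2' : C M + a ∈ P := by
      convert h.add h2 (h.cst (A := A) (c := M - N) (by simp [M])) using 1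
      rw [map_sub]; ring
    refine ⟨M ^ 2, ?_, h.add (h.cst (by positivity)) (h.sq a)⟩
    have h3 := h.smul (c := (2*M)⁻¹) (by positivity)
      (h.add (h.sqm (C M - a) h2') (h.sqm (C M + a) h1'))
    convert h3 using 1
    rw [Algebra.smul_def]
    have e2 : C (2*M)⁻¹ * (2 * C M) = 1 := by
      rw [← map_ofNat C 2, ← map_mul, ← map_mul, inv_mul_cancel₀ (by positivity), map_one]
    rw [map_pow]
    linear_combination (-(-a^2 + (C M)^2)) * e2
  obtain ⟨N, h1, h2⟩ := hadd (hsq (hadd ha hb)) (hneg (hsq (hadd ha (hneg hb))))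
  refine ⟨1/4 * N, ?_, ?_⟩
  · convert h.smul (c := 1/4) (by norm_num) h1 using 1
    rw [Algebra.smul_def, map_mul]
    have e : C (1/4) * 4 = 1 := by
      rw [← map_ofNat C 4, ← map_mul]; norm_num
    linear_combination (a * b) * e
  · convert h.smul (c := 1/4) (by norm_num) h2 using 1
    rw [Algebra.smul_def, map_mul]
    have e : C (1/4) * 4 = 1 := by
      rw [← map_ofNat C 4, ← map_mul]; norm_num
    linear_combination (-a * b) * e

theorem FamQ.arch (harch : IsArchimedeanQM (QM g)) (F : FamA g) :
    ∃ N : ℝ, algebraMap ℝ (FamA g) N - F ∈ FamQ g := by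
  suffices h : ∃ N : ℝ, algebraMap ℝ (FamA g) N - F ∈ FamQ g ∧ algebraMap ℝ (FamA g) N + F ∈ FamQ g by
    obtain ⟨N, h, -⟩ := h; exact ⟨N, h⟩
  obtain ⟨F, hF⟩ := F
  induction hF using Algebra.adjoin_induction with
  | mem F hF =>
    rcases hF with ⟨i, rfl⟩ | ⟨c, ⟨B, hB⟩, rfl⟩
    · obtain ⟨N, hN⟩ := harch (X i)
      obtain ⟨N', hN'⟩ := harch (-X i)
      obtain ⟨d, hd⟩ := TQ.ofQM hN
      obtain ⟨d', hd'⟩ := TQ.ofQM hN'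
      refine ⟨max N N', ⟨d, fun u => ?_⟩, ⟨d', fun u => ?_⟩⟩
      · have := TQ.add hd (TQ.C (g := g) (c := max N N' - N) (by simp) d)
        convert this using 1
        simp [MvPolynomial.algebraMap_eq]
      · have := TQ.add hd' (TQ.C (g := g) (c := max N N' - N') (by simp) d')
        convert this using 1
        simp [MvPolynomial.algebraMap_eq]; ring
    · refine ⟨B, ⟨0, fun u => ?_⟩, ⟨0, fun u => ?_⟩⟩
      · have := TQ.C (g := g) (c := B - c u) (by linarith [abs_le.1 (hB u)]) 0
        simpa [MvPolynomial.algebraMap_eq] using this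
      · have := TQ.C (g := g) (c := B + c u) (by linarith [abs_le.1 (hB u)]) 0
        simpa [MvPolynomial.algebraMap_eq] using this
  | algebraMap r =>
    refine ⟨|r|, ?_, ?_⟩
    · have := FamQ.isQMod (g := g).cst (c := |r| - r) (by linarith [le_abs_self r])
      rwa [map_sub] at this
    · have := FamQ.isQMod (g := g).cst (c := |r| + r) (by linarith [neg_abs_le r])
      rwa [map_add] at this
  | add F G hF hG h1 h2 =>
    obtain ⟨N, h1, h1'⟩ := h1
    obtain ⟨N', h2, h2'⟩ := h2
    refine ⟨N + N', ?_, ?_⟩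
    · convert FamQ.isQMod.add h1 h2 using 1
      rw [map_add]
      change _ = algebraMap ℝ (FamA g) N - (⟨F, hF⟩ : FamA g) + (algebraMap ℝ (FamA g) N' - (⟨G, hG⟩ : FamA g))
      rw [show (⟨F + G, _⟩ : FamA g) = (⟨F, hF⟩ : FamA g) + ⟨G, hG⟩ from rfl]; ring
    · convert FamQ.isQMod.add h1' h2' using 1
      rw [map_add]
      change _ = algebraMap ℝ (FamA g) N + (⟨F, hF⟩ : FamA g) + (algebraMap ℝ (FamA g) N' + (⟨G, hG⟩ : FamA g))
      rw [show (⟨F + G, _⟩ : FamA g) = (⟨F, hF⟩ : FamA g) + ⟨G, hG⟩ from rfl]; ring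
  | mul F G hF hG h1 h2 => 
    exact arch_mul (A := FamA g) (a := ⟨F, hF⟩) (b := ⟨G, hG⟩) FamQ.isQMod h1 h2

theorem SolSet.bdd (harch : IsArchimedeanQM (QM g)) (p : MvPolynomial (Fin n) ℝ) :
    ∃ B, ∀ x ∈ SolSet g, |eval x p| ≤ B := by
  obtain ⟨N, hN⟩ := harch p
  obtain ⟨N', hN'⟩ := harch (-p)
  obtain ⟨d, hd⟩ := TQ.ofQM hN
  obtain ⟨d', hd'⟩ := TQ.ofQM hN'
  refine ⟨max N N', fun x hx => abs_le.2 ⟨?_, ?_⟩⟩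
  · have := TQ.nonneg hd' hx
    simp at this
    linarith [le_max_right (N:ℝ) N']
  · have := TQ.nonneg hd hx
    simp at this
    linarith [le_max_left (N:ℝ) N']

theorem SolSet.closed : IsClosed (SolSet g) := by
  have : SolSet g = ⋂ i, {x | 0 ≤ eval x (g i)} := by ext x; simp [SolSet]
  rw [this]
  exact isClosed_iInter fun i => isClosed_le continuous_const (MvPolynomial.continuous_eval _)

theorem SolSet.compact (harch : IsArchimedeanQM (QM g)) : IsCompact (SolSet g) := by
  choose B hB using fun i => SolSet.bdd harch (X i)
  refine (isCompact_univ_pi (s := fun i => Set.Icc (-B i) (B i)) fun i => isCompact_Icc).of_isClosed_subset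
    SolSet.closed fun x hx i _ => ?_
  have := hB i x hx
  simp at this
  exact abs_le.1 this

/-- the coordinate families -/
def famX (g : Fin m → MvPolynomial (Fin n) ℝ) (i : Fin n) : FamA g :=
  ⟨fun _ => X i, Algebra.subset_adjoin (Or.inl ⟨i, rfl⟩)⟩

/-- bounded function of the parameter -/
def famC {g : Fin m → MvPolynomial (Fin n) ℝ} (c : SolSet g → ℝ) (h : ∃ B, ∀ u, |c u| ≤ B) : FamA g :=
  ⟨fun u => C (c u), Algebra.subset_adjoin (Or.inr ⟨c, h, rfl⟩)⟩

/-- the point family -/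
def famU (harch : IsArchimedeanQM (QM g)) (i : Fin n) : FamA g :=
  famC (fun u => u.1 i) (by
    obtain ⟨B, hB⟩ := SolSet.bdd harch (X i)
    exact ⟨B, fun u => by simpa using hB u.1 u.2⟩)

/-- evaluation at a parameter -/
def famEv (g : Fin m → MvPolynomial (Fin n) ℝ) (u : SolSet g) : FamA g →ₐ[ℝ] MvPolynomial (Fin n) ℝ :=
  (Pi.evalAlgHom ℝ (fun _ : SolSet g => MvPolynomial (Fin n) ℝ) u).comp (FamA g).val

theorem famEv_X (u : SolSet g) (p : MvPolynomial (Fin n) ℝ) : famEv g u (aeval (famX g) p) = p := by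
  rw [← AlgHom.comp_apply, comp_aeval]
  have : (fun i => (famEv g u) (famX g i)) = X := rfl
  rw [this, aeval_X_left, AlgHom.id_apply]

theorem famEv_U (harch : IsArchimedeanQM (QM g)) (u : SolSet g) (p : MvPolynomial (Fin n) ℝ) :
    famEv g u (aeval (famU harch) p) = C (eval u.1 p) := by
  rw [← AlgHom.comp_apply, comp_aeval]
  have : (fun i => (famEv g u) (famU harch i)) = (algebraMap ℝ (MvPolynomial (Fin n) ℝ)) ∘ u.1 := rfl
  rw [this, aeval_algebraMap_apply]
  simp [MvPolynomial.algebraMap_eq, aeval_eq_eval]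

theorem famEv_eq (u : SolSet g) (F : FamA g) : F.1 u = famEv g u F := rfl

theorem FamQ.X (i : Fin m) : aeval (famX g) (g i) ∈ FamQ g := by
  obtain ⟨d, hd⟩ := TQ.ofGen (g := g) i.succ 1
  refine ⟨d, fun u => ?_⟩
  rw [famEv_eq, famEv_X]
  simpa [withOne] using hd

theorem FamQ.U (harch : IsArchimedeanQM (QM g)) (i : Fin m) : aeval (famU harch) (g i) ∈ FamQ g := by
  refine ⟨0, fun u => ?_⟩
  rw [famEv_eq, famEv_U]
  exact TQ.C (u.2 i) 0
end fam


/-! ### compactness of convex hulls and quadrature -/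

theorem isCompact_convexHull_fd {N : ℕ} {K : Set (Fin N → ℝ)} (hK : IsCompact K) :
    IsCompact (convexHull ℝ K) := by
  rcases K.eq_empty_or_nonempty with rfl | ⟨z0, hz0⟩
  · simp
  have hc : IsCompact ((fun p : (Fin (N+1) → ℝ) × (Fin (N+1) → Fin N → ℝ) => ∑ i, p.1 i • p.2 i) ''
      (stdSimplex ℝ (Fin (N+1)) ×ˢ Set.univ.pi fun _ => K)) := by
    refine ((isCompact_stdSimplex ℝ _).prod (isCompact_univ_pi fun _ => hK)).image ?_
    fun_prop
  convert hc using 1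
  apply Set.Subset.antisymm
  · intro x hx
    obtain ⟨ι, _, z, w, hz, haff, hw, hw1, hx⟩ := eq_pos_convex_span_of_mem_convexHull hx
    have hcard : Fintype.card ι ≤ Fintype.card (Fin (N+1)) := by
      have := haff.card_le_finrank_succ
      have h2 := Submodule.finrank_le (vectorSpan ℝ (Set.range z))
      simp at h2 ⊢
      omega
    obtain ⟨f⟩ := Function.Embedding.nonempty_of_card_le hcard
    classical
    refine ⟨(fun i => if h : ∃ j, f j = i then w h.choose else 0,
      fun i => if h : ∃ j, f j = i then z h.choose else z0), ⟨⟨?_, ?_⟩, ?_⟩, ?_⟩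
    · intro i
      dsimp only
      split_ifs with h
      · exact (hw _).le
      · exact le_rfl
    · rw [← hw1]
      rw [← Finset.sum_subset (Finset.subset_univ (Finset.univ.map f))]
      · rw [Finset.sum_map]
        refine Finset.sum_congr rfl fun j _ => ?_
        have h : ∃ j', f j' = f j := ⟨j, rfl⟩
        dsimp only
        rw [dif_pos h, f.injective h.choose_spec]
      · intro i _ hi
        dsimp only
        rw [dif_neg]
        rintro ⟨j, rfl⟩
        exact hi (by simp)
    · intro i _
      dsimp only
      split_ifs with h
      · exact hz ⟨_, rfl⟩
      · exact hz0
    · rw [← hx]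
      dsimp only
      rw [← Finset.sum_subset (Finset.subset_univ (Finset.univ.map f))]
      · rw [Finset.sum_map]
        refine Finset.sum_congr rfl fun j _ => ?_
        have h : ∃ j', f j' = f j := ⟨j, rfl⟩
        rw [dif_pos h, dif_pos h, f.injective h.choose_spec]
      · intro i _ hi
        rw [dif_neg, zero_smul]
        rintro ⟨j, rfl⟩
        exact hi (by simp)
  · rintro _ ⟨⟨w, z⟩, ⟨hw, hz⟩, rfl⟩
    exact (convex_convexHull ℝ K).sum_mem (fun i _ => hw.1 i) hw.2
      fun i _ => subset_convexHull ℝ K (hz i trivial)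

/-- a positive quadrature rule on `[0,1]` exact in degree `≤ D` -/
structure QRule (D : ℕ) where
  k : ℕ
  r : Fin k → ℝ
  ω : Fin k → ℝ
  r0 : ∀ j, 0 ≤ r j
  r1 : ∀ j, r j ≤ 1
  ω0 : ∀ j, 0 ≤ ω j
  mom : ∀ i ≤ D, ∑ j, ω j * r j ^ i = 1 / (i + 1 : ℝ)

theorem exists_QRule (D : ℕ) : Nonempty (QRule D) := by
  let γ : ℝ → Fin (D+1) → ℝ := fun s i => s ^ (i : ℕ)
  have hγ : Continuous γ := by fun_prop
  have hcl : IsClosed (convexHull ℝ (γ '' Set.Icc 0 1)) :=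
    (isCompact_convexHull_fd (isCompact_Icc.image hγ)).isClosed
  let μ := MeasureTheory.volume.restrict (Set.Icc (0:ℝ) 1)
  haveI : MeasureTheory.IsProbabilityMeasure μ := ⟨by simp [μ]⟩
  have hi : MeasureTheory.Integrable γ μ := hγ.continuousOn.integrableOn_Icc
  have hm := (convex_convexHull ℝ (γ '' Set.Icc 0 1)).integral_mem (μ := μ) (f := γ) hcl
    ((MeasureTheory.ae_restrict_iff' measurableSet_Icc).2
      (Filter.Eventually.of_forall fun s hs => subset_convexHull ℝ _ ⟨s, hs, rfl⟩)) hi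
  obtain ⟨ι, _, z, w, hz, -, hw, hw1, hx⟩ := eq_pos_convex_span_of_mem_convexHull hm
  have hz' : ∀ j, ∃ s ∈ Set.Icc (0:ℝ) 1, γ s = z j := fun j => hz ⟨j, rfl⟩
  choose r hr hrz using hz'
  let e := Fintype.equivFin ι
  refine ⟨⟨Fintype.card ι, r ∘ e.symm, w ∘ e.symm, fun j => (hr _).1, fun j => (hr _).2,
    fun j => (hw _).le, fun i hi' => ?_⟩⟩
  have h1 := congrFun hx ⟨i, by omega⟩
  rw [Finset.sum_apply] at h1
  have h2 : (∫ s, γ s ∂μ) ⟨i, by omega⟩ = ∫ s, s ^ i ∂μ := by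
    rw [MeasureTheory.eval_integral]
    intro i
    exact (by fun_prop : Continuous fun s : ℝ => γ s i).continuousOn.integrableOn_Icc
  rw [h2] at h1
  have h3 : ∫ s, s ^ i ∂μ = 1 / (i + 1 : ℝ) := by
    simp only [μ]
    rw [MeasureTheory.integral_Icc_eq_integral_Ioc, ← intervalIntegral.integral_of_le zero_le_one,
      integral_pow]
    simp
  rw [← h3, ← h1]
  simp only [Function.comp]
  rw [e.symm.sum_comp (fun j => w j * r j ^ i)]
  refine Finset.sum_congr rfl fun j _ => ?_
  rw [← hrz]; rfl

/-! ### polynomial calculus over A -/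
section pcalc
variable {A : Type*} [CommRing A] [Algebra ℝ A]
open Polynomial in
theorem QRule.ftc {D : ℕ} (R : QRule D) (P : Polynomial A) (hP : P.natDegree ≤ D + 1) :
    ∑ j, algebraMap ℝ A (R.ω j) * (derivative P).eval (algebraMap ℝ A (R.r j)) =
      P.eval 1 - P.eval 0 := by
  have key : ∀ i ≤ D + 1, ∀ a : A,
    ∑ j, algebraMap ℝ A (R.ω j) * (derivative (Polynomial.monomial i a)).eval (algebraMap ℝ A (R.r j)) =
      (Polynomial.monomial i a).eval 1 - (Polynomial.monomial i a).eval 0 := by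
    intro i hi a
    rcases i with _ | i
    · simp
    · simp only [derivative_monomial, Polynomial.eval_monomial]
      have h := R.mom i (by omega)
      have : ∀ j, algebraMap ℝ A (R.ω j) * (a * ((i + 1 : ℕ) : A) * algebraMap ℝ A (R.r j) ^ (i + 1 - 1)) =
          a * ((i+1 : ℕ) : A) * algebraMap ℝ A (R.ω j * R.r j ^ i) := by
        intro j; rw [map_mul, map_pow]; simp; ring
      simp only [this, ← Finset.mul_sum, ← map_sum]
      rw [h]
      have e : ((i+1 : ℕ) : A) = algebraMap ℝ A (i + 1 : ℝ) := by simp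
      rw [e, mul_assoc, ← map_mul, mul_one_div_cancel (by positivity)]
      simp
  rw [P.as_sum_range' (D + 2) (by omega)]
  simp only [derivative_sum, Polynomial.eval_finsetSum, Finset.mul_sum]
  rw [Finset.sum_comm, ← Finset.sum_sub_distrib]
  exact Finset.sum_congr rfl fun i hi => key i (by simp at hi; omega) _

open Polynomial in
theorem QRule.taylor {D : ℕ} (R : QRule D) (T : Polynomial A) (hT : T.natDegree ≤ D) :
    ∑ j, algebraMap ℝ A (R.ω j) * ((1 - algebraMap ℝ A (R.r j)) *
      (-(derivative (derivative T)).eval (algebraMap ℝ A (R.r j)))) =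
      (derivative T).eval 0 + T.eval 0 - T.eval 1 := by
  have h := R.ftc ((1 - Polynomial.X) * derivative T + T) (by
    refine (natDegree_add_le _ _).trans (max_le ?_ (by omega))
    refine natDegree_mul_le.trans ?_
    have h1 := natDegree_derivative_le T
    have h2 : (1 - Polynomial.X : Polynomial A).natDegree ≤ 1 := by
      exact (natDegree_sub_le _ _).trans (max_le (by simp) natDegree_X_le)
    omega)
  have h' := congrArg Neg.neg h
  rw [← Finset.sum_neg_distrib] at h'
  convert h' using 1
  · refine Finset.sum_congr rfl fun j _ => ?_
    simp [derivative_mul]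
  · simp

open Polynomial in
theorem QRule.chord {D : ℕ} (R : QRule D) (T : Polynomial A) (hT : T.natDegree ≤ D) (t : A) :
    T.eval t = (1 - t) * T.eval 0 + t * T.eval 1 + t * (1 - t) *
      ∑ j, algebraMap ℝ A (R.ω j * R.r j) *
        (t * (-(derivative (derivative T)).eval (t * algebraMap ℝ A (R.r j))) +
          (1 - t) * (-(derivative (derivative T)).eval (1 - (1 - t) * algebraMap ℝ A (R.r j)))) := by
  have hd : (derivative T).natDegree ≤ D := (natDegree_derivative_le T).trans (by omega)
  have hCX : ∀ b : A, (Polynomial.C b * Polynomial.X : Polynomial A).natDegree ≤ 1 := fun b =>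
    (natDegree_C_mul_le _ _).trans natDegree_X_le
  have hlin : ∀ a b : A, (Polynomial.C a + Polynomial.C b * Polynomial.X : Polynomial A).natDegree ≤ 1 := by
    intro a b
    refine (natDegree_add_le _ _).trans (max_le (by simp) ?_)
    exact hCX b
  have hcomp : ∀ (P : Polynomial A) (a b : A), P.natDegree ≤ D →
      (P.comp (Polynomial.C a + Polynomial.C b * Polynomial.X)).natDegree ≤ D := by
    intro P a b hP
    refine natDegree_comp_le.trans ?_
    exact (Nat.mul_le_mul hP (hlin a b)).trans (by simp)
  have h1 := R.ftc (Polynomial.C t * Polynomial.X * (derivative T).comp (Polynomial.C 0 + Polynomial.C t * Polynomial.X)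
      - T.comp (Polynomial.C 0 + Polynomial.C t * Polynomial.X)) (by
    refine (natDegree_sub_le _ _).trans (max_le ?_ ((hcomp _ _ _ hT).trans (by omega)))
    refine natDegree_mul_le.trans ?_
    have := hCX t
    have := hcomp _ 0 t hd
    omega)
  have h2 := R.ftc (- (Polynomial.C (1 - t) * Polynomial.X * (derivative T).comp (Polynomial.C 1 + Polynomial.C (-(1 - t)) * Polynomial.X))
      - T.comp (Polynomial.C 1 + Polynomial.C (-(1-t)) * Polynomial.X)) (by
    refine (natDegree_sub_le _ _).trans (max_le ?_ ((hcomp _ _ _ hT).trans (by omega)))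
    rw [natDegree_neg]
    refine natDegree_mul_le.trans ?_
    have := hCX (1 - t)
    have := hcomp _ 1 (-(1-t)) hd
    omega)
  have e1 : ∀ j, algebraMap ℝ A (R.ω j) * (derivative (Polynomial.C t * Polynomial.X * (derivative T).comp (Polynomial.C 0 + Polynomial.C t * Polynomial.X)
      - T.comp (Polynomial.C 0 + Polynomial.C t * Polynomial.X))).eval (algebraMap ℝ A (R.r j)) =
      t * (algebraMap ℝ A (R.ω j * R.r j) * (t * (derivative (derivative T)).eval (t * algebraMap ℝ A (R.r j)))) := by
    intro j
    simp only [derivative_sub, derivative_mul, derivative_comp, derivative_add, derivative_C, derivative_X,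
      Polynomial.eval_sub, Polynomial.eval_mul, Polynomial.eval_add, Polynomial.eval_comp, Polynomial.eval_C, Polynomial.eval_X, Polynomial.eval_zero, Polynomial.eval_one, zero_mul, zero_add, mul_one, map_mul]
    ring
  have e2 : ∀ j, algebraMap ℝ A (R.ω j) * (derivative (- (Polynomial.C (1 - t) * Polynomial.X * (derivative T).comp (Polynomial.C 1 + Polynomial.C (-(1 - t)) * Polynomial.X))
      - T.comp (Polynomial.C 1 + Polynomial.C (-(1-t)) * Polynomial.X))).eval (algebraMap ℝ A (R.r j)) =
      (1 - t) * (algebraMap ℝ A (R.ω j * R.r j) * ((1 - t) * (derivative (derivative T)).eval (1 - (1 - t) * algebraMap ℝ A (R.r j)))) := by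
    intro j
    simp only [derivative_sub, derivative_neg, derivative_mul, derivative_comp, derivative_add, derivative_C, derivative_X,
      Polynomial.eval_sub, Polynomial.eval_mul, Polynomial.eval_neg, Polynomial.eval_add, Polynomial.eval_comp, Polynomial.eval_C, Polynomial.eval_X, Polynomial.eval_zero, Polynomial.eval_one, zero_mul, zero_add, mul_one, map_mul]
    rw [show (1 : A) + -(1 - t) * (algebraMap ℝ A) (R.r j) = 1 - (1 - t) * algebraMap ℝ A (R.r j) by ring]
    ring
  simp only [e1, ← Finset.mul_sum] at h1
  simp only [e2, ← Finset.mul_sum] at h2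
  simp only [Polynomial.eval_sub, Polynomial.eval_neg, Polynomial.eval_mul, Polynomial.eval_C, Polynomial.eval_X, Polynomial.eval_comp, Polynomial.eval_add, mul_zero, mul_one, zero_add, add_zero,
    neg_zero, zero_mul, zero_sub] at h1 h2
  rw [show (1 : A) + -(1 - t) = t by ring] at h2
  simp only [mul_neg, mul_add, Finset.sum_add_distrib, Finset.sum_neg_distrib]
  simp only [← mul_add, ← neg_mul, ← mul_neg]
  linear_combination (1 - t) * h1 + t * h2

end pcalc


section SBsec
variable {A : Type*} [CommRing A] [Algebra ℝ A] {Q : Set A}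

/-- multipliers of a quadratic module -/
def SB (Q : Set A) (a : A) : Prop := ∀ q ∈ Q, a * q ∈ Q

theorem SB.sq (h : IsQMod Q) (a : A) : SB Q (a ^ 2) := fun q hq => h.sqm a hq
theorem SB.add (h : IsQMod Q) {a b : A} (ha : SB Q a) (hb : SB Q b) : SB Q (a + b) := fun q hq => by
  rw [add_mul]; exact h.add (ha q hq) (hb q hq)
theorem SB.mul {a b : A} (ha : SB Q a) (hb : SB Q b) : SB Q (a * b) := fun q hq => by
  rw [mul_assoc]; exact ha _ (hb q hq)
theorem SB.cst (h : IsQMod Q) {c : ℝ} (hc : 0 ≤ c) : SB Q (algebraMap ℝ A c) := fun q hq => by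
  rw [← Algebra.smul_def]; exact h.smul hc hq
theorem SB.mem (h : IsQMod Q) {a : A} (ha : SB Q a) : a ∈ Q := by simpa using ha 1 h.one
theorem SB.zero (h : IsQMod Q) : SB Q (0 : A) := fun q hq => by simpa using h.zero
theorem SB.one : SB Q (1 : A) := fun q hq => by simpa using hq
theorem SB.sum (h : IsQMod Q) {ι : Type*} (s : Finset ι) (f : ι → A) (hf : ∀ i ∈ s, SB Q (f i)) :
    SB Q (∑ i ∈ s, f i) := fun q hq => by
  rw [Finset.sum_mul]; exact h.sum _ _ fun i hi => hf i hi q hq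

end SBsec

section line
variable {n : ℕ} {A : Type*} [CommRing A] [Algebra ℝ A]

/-- restriction to the line `u + s w` -/
def lineP (u w : Fin n → A) : MvPolynomial (Fin n) ℝ →ₐ[ℝ] Polynomial A :=
  MvPolynomial.aeval fun i => Polynomial.C (u i) + Polynomial.X * Polynomial.C (w i)

theorem lineP_eval (u w : Fin n → A) (p : MvPolynomial (Fin n) ℝ) (r : A) :
    (lineP u w p).eval r = aeval (fun i => u i + r * w i) p := by
  have h : (((Polynomial.aeval r : Polynomial A →ₐ[A] A).restrictScalars ℝ).comp (lineP u w)) =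
      aeval (fun i => u i + r * w i) := by
    apply MvPolynomial.algHom_ext
    intro i
    simp [lineP]; ring
  have := congrArg (fun f => f p) h
  simpa using this

theorem lineP_deriv (u w : Fin n → A) (p : MvPolynomial (Fin n) ℝ) :
    Polynomial.derivative (lineP u w p) = ∑ b, lineP u w (pderiv b p) * Polynomial.C (w b) := by
  induction p using MvPolynomial.induction_on with
  | C a =>
    simp only [pderiv_C, map_zero, zero_mul, Finset.sum_const_zero]
    rw [← MvPolynomial.algebraMap_eq, AlgHom.commutes]
    simp [Polynomial.algebraMap_apply]
  | add p q hp hq => simp [hp, hq, add_mul, Finset.sum_add_distrib]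
  | mul_X p i hp =>
    simp only [map_mul, Polynomial.derivative_mul, hp, pderiv_mul, map_add, add_mul, Finset.sum_add_distrib, pderiv_X]
    congr 1
    · rw [Finset.sum_mul]
      exact Finset.sum_congr rfl fun b _ => by ring
    · have : Polynomial.derivative (lineP u w (X i)) = Polynomial.C (w i) := by simp [lineP]
      rw [this, Finset.sum_eq_single i]
      · simp
      · intro b _ hb; simp [Pi.single_apply, Ne.symm hb]
      · simp

theorem pderiv_comm' (a b : Fin n) (p : MvPolynomial (Fin n) ℝ) :
    pderiv a (pderiv b p) = pderiv b (pderiv a p) := by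
  induction p using MvPolynomial.induction_on with
  | C c => simp
  | add p q hp hq => simp [hp, hq]
  | mul_X p i hp =>
    simp only [pderiv_mul, map_add, hp, pderiv_X]
    have : ∀ c d : Fin n, pderiv c (Pi.single (M := fun _ => MvPolynomial (Fin n) ℝ) d 1 i) = 0 := by
      intro c d
      by_cases h : i = d
      · subst h; simp
      · simp [Pi.single_apply, h]
    rw [this, this]; ring

end line

section forms

open scoped MatrixOrder in
theorem psd_factor {D : ℕ} (A : Matrix (Fin D) (Fin D) ℝ) (hA : A.PosSemidef) :
    ∃ B : Matrix (Fin D) (Fin D) ℝ, ∀ i j, A i j = ∑ e, B e i * B e j := by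
  obtain ⟨X, hX, -, hXX⟩ :=
        sub_zero A ▸ CFC.exists_sqrt_of_isSelfAdjoint_of_quasispectrumRestricts hA.isHermitian
          (QuasispectrumRestricts.nnreal_of_nonneg hA.nonneg)
  refine ⟨X, fun i j => ?_⟩
  rw [← sub_zero A, ← hXX, Matrix.mul_apply]
  refine Finset.sum_congr rfl fun e _ => ?_
  have := congrFun (congrFun hX.star_eq e) i
  simp [Matrix.star_apply] at this
  rw [← this]

theorem hom_cmp {D : ℕ} (q1 q2 : (Fin D → ℝ) → ℝ) (h1 : Continuous q1) (h2 : Continuous q2)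
    (s1 : ∀ c y, q1 (c • y) = c ^ 2 * q1 y) (s2 : ∀ c y, q2 (c • y) = c ^ 2 * q2 y)
    (hpos : ∀ y, y ≠ 0 → 0 < q2 y) : ∃ C > 0, ∀ y, q1 y ≤ C * q2 y := by
  have hc : IsCompact (Metric.sphere (0 : Fin D → ℝ) 1) := isCompact_sphere _ _
  have hne : ∀ y ∈ Metric.sphere (0 : Fin D → ℝ) 1, q2 y ≠ 0 := by
    intro y hy
    refine (hpos y ?_).ne'
    rintro rfl; simp at hy
  obtain ⟨C, hC⟩ := (hc.image_of_continuousOn ((h1.continuousOn).div h2.continuousOn hne)).bddAbove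
  refine ⟨max C 1, by positivity, fun y => ?_⟩
  by_cases hy : y = 0
  · subst hy
    have e1 := s1 0 0
    have e2 := s2 0 0
    simp at e1 e2
    simp [e1, e2]
  have hn : 0 < ‖y‖ := norm_pos_iff.2 hy
  set z := ‖y‖⁻¹ • y
  have hz : z ∈ Metric.sphere (0 : Fin D → ℝ) 1 := by
    simp [z, norm_smul, hn.ne']
  have hyz : y = ‖y‖ • z := by simp [z, smul_smul, hn.ne']
  have h3 : q1 z / q2 z ≤ C := hC ⟨z, hz, rfl⟩
  have hz2 : 0 < q2 z := lt_of_le_of_ne (hpos z (by rintro h; rw [h] at hz; simp at hz)).le (hne z hz).symm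
  rw [div_le_iff₀ hz2] at h3
  rw [hyz, s1, s2]
  have : C * q2 z ≤ max C 1 * q2 z := by gcongr; exact le_max_left _ _
  nlinarith [sq_nonneg ‖y‖]

/-- nodal quadratic form -/
def NF {A : Type*} [CommRing A] [Algebra ℝ A] {K : Type*} [Fintype K] (α ρ : K → ℝ) (Y : Polynomial A) : A :=
  ∑ k, algebraMap ℝ A (α k) * Y.eval (algebraMap ℝ A (ρ k)) ^ 2

variable {A : Type*} [CommRing A] [Algebra ℝ A] {Q : Set A}

theorem NF_SB (hQ : IsQMod Q) {K : Type*} [Fintype K] {α : K → ℝ} (hα : ∀ k, 0 ≤ α k) (ρ : K → ℝ) (Y : Polynomial A) :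
    SB Q (NF α ρ Y) :=
  SB.sum hQ _ _ fun k _ => (SB.cst hQ (hα k)).mul (SB.sq hQ _)

theorem NF_expand {K : Type*} [Fintype K] (α ρ : K → ℝ) (D : ℕ) (Y : Polynomial A) (hY : Y.natDegree < D) :
    NF α ρ Y = ∑ i : Fin D, ∑ j : Fin D, algebraMap ℝ A (∑ k, α k * (ρ k ^ (i:ℕ) * ρ k ^ (j:ℕ))) * (Y.coeff i * Y.coeff j) := by
  have h1 : ∀ r : A, Y.eval r = ∑ i : Fin D, Y.coeff i * r ^ (i:ℕ) := by
    intro r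
    rw [Polynomial.eval_eq_sum_range' hY, Finset.sum_range]
  simp only [NF, h1, map_sum, Finset.sum_mul]
  rw [Finset.sum_comm_cycle] 
  refine Finset.sum_congr rfl fun k _ => ?_
  rw [pow_two, Finset.sum_mul_sum, Finset.mul_sum]
  refine Finset.sum_congr rfl fun i _ => ?_
  rw [Finset.mul_sum]
  refine Finset.sum_congr rfl fun j _ => ?_
  simp only [map_mul, map_pow]; ring

theorem cmp_sb (hQ : IsQMod Q) {K : Type*} [Fintype K] (α ρ : K → ℝ) (D : ℕ)
    (hpos : ∀ Y : Polynomial ℝ, Y.natDegree < D → 0 ≤ NF α ρ Y) (Y : Polynomial A) (hY : Y.natDegree < D) :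
    SB Q (NF α ρ Y) := by
  set G : Matrix (Fin D) (Fin D) ℝ := Matrix.of fun i j => ∑ k, α k * (ρ k ^ (i:ℕ) * ρ k ^ (j:ℕ)) with hG
  have hps : G.PosSemidef := by
    refine Matrix.PosSemidef.of_dotProduct_mulVec_nonneg ?_ ?_
    · ext i j
      simp [G, Matrix.conjTranspose_apply, mul_comm]
    · intro x
      set P : Polynomial ℝ := ∑ i : Fin D, Polynomial.monomial (i:ℕ) (x i)
      have hPd : P.natDegree < D := by
        refine lt_of_le_of_lt (Polynomial.natDegree_sum_le_of_forall_le (n := D - 1) _ _ fun i _ => ?_) (by omega)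
        exact (Polynomial.natDegree_monomial_le _).trans (by omega)
      have hc : ∀ i : Fin D, P.coeff i = x i := by
        intro i
        simp only [P, Polynomial.finset_sum_coeff, Polynomial.coeff_monomial]
        rw [Finset.sum_eq_single i]
        · simp
        · intro b _ hb; rw [if_neg]; exact fun h => hb (Fin.ext h)
        · simp
      have := hpos P hPd
      rw [NF_expand α ρ D P hPd] at this
      simp only [hc, Algebra.algebraMap_self, RingHom.id_apply] at this
      refine le_of_le_of_eq this ?_
      simp only [dotProduct, mulVec, G, Matrix.of_apply, Finset.mul_sum, star_trivial, Pi.star_apply]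
      refine Finset.sum_congr rfl fun i _ => Finset.sum_congr rfl fun j _ => ?_
      ring
  obtain ⟨B, hB⟩ := psd_factor G hps
  have : NF α ρ Y = ∑ e, (∑ i : Fin D, algebraMap ℝ A (B e i) * Y.coeff i) ^ 2 := by
    rw [NF_expand α ρ D Y hY]
    have hGij : ∀ i j : Fin D, ∑ k, α k * (ρ k ^ (i:ℕ) * ρ k ^ (j:ℕ)) = ∑ e, B e i * B e j := by
      intro i j
      have := hB i j
      simpa [G] using this
    simp only [hGij, map_sum, Finset.sum_mul]
    rw [Finset.sum_comm_cycle]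
    refine Finset.sum_congr rfl fun k _ => ?_
    rw [pow_two, Finset.sum_mul_sum]
    refine Finset.sum_congr rfl fun i _ => Finset.sum_congr rfl fun j _ => ?_
    rw [map_mul]; ring
  rw [this]
  exact SB.sum hQ _ _ fun e _ => SB.sq hQ _

theorem form_cmp (hQ : IsQMod Q) {K1 K2 : Type*} [Fintype K1] [Fintype K2] (α1 ρ1 : K1 → ℝ) (α2 ρ2 : K2 → ℝ) (D : ℕ)
    (hpos : ∀ Y : Polynomial ℝ, Y.natDegree < D → Y ≠ 0 → 0 < NF α2 ρ2 Y) :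
    ∃ C : ℝ, 0 < C ∧ ∀ Y : Polynomial A, Y.natDegree < D →
      SB Q (algebraMap ℝ A C * NF α2 ρ2 Y - NF α1 ρ1 Y) := by
  rcases Nat.eq_zero_or_pos D with rfl | hD
  · exact ⟨1, one_pos, fun Y hY => absurd hY (by omega)⟩
  let P : (Fin D → ℝ) → Polynomial ℝ := fun x => ∑ i : Fin D, Polynomial.monomial (i:ℕ) (x i)
  have hPd : ∀ x, (P x).natDegree < D := by
    intro x
    refine lt_of_le_of_lt (Polynomial.natDegree_sum_le_of_forall_le (n := D - 1) _ _ fun i _ => ?_) (by omega)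
    exact (Polynomial.natDegree_monomial_le _).trans (by omega)
  have hPc : ∀ x, ∀ i : Fin D, (P x).coeff i = x i := by
    intro x i
    simp only [P, Polynomial.finset_sum_coeff, Polynomial.coeff_monomial]
    rw [Finset.sum_eq_single i]
    · simp
    · intro b _ hb; rw [if_neg]; exact fun h => hb (Fin.ext h)
    · simp
  have hF : ∀ x, NF α1 ρ1 (P x) = ∑ i : Fin D, ∑ j : Fin D, (∑ k, α1 k * (ρ1 k ^ (i:ℕ) * ρ1 k ^ (j:ℕ))) * (x i * x j) := by
    intro x
    rw [NF_expand α1 ρ1 D _ (hPd x)]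
    simp only [hPc, Algebra.algebraMap_self, RingHom.id_apply]
  have hF' : ∀ x, NF α2 ρ2 (P x) = ∑ i : Fin D, ∑ j : Fin D, (∑ k, α2 k * (ρ2 k ^ (i:ℕ) * ρ2 k ^ (j:ℕ))) * (x i * x j) := by
    intro x
    rw [NF_expand α2 ρ2 D _ (hPd x)]
    simp only [hPc, Algebra.algebraMap_self, RingHom.id_apply]
  obtain ⟨C, hC, hle⟩ := hom_cmp (fun x => NF α1 ρ1 (P x)) (fun x => NF α2 ρ2 (P x))
    (by simp only [hF]; fun_prop) (by simp only [hF']; fun_prop)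
    (by intro c y; simp only [hF, Finset.mul_sum]
        refine Finset.sum_congr rfl fun i _ => Finset.sum_congr rfl fun j _ => ?_
        simp; ring)
    (by intro c y; simp only [hF', Finset.mul_sum]
        refine Finset.sum_congr rfl fun i _ => Finset.sum_congr rfl fun j _ => ?_
        simp; ring)
    (by intro y hy
        refine hpos _ (hPd y) ?_
        intro h
        apply hy; funext i
        rw [← hPc y i, h]; simp)
  refine ⟨C, hC, fun Y hY => ?_⟩
  have hsplit : ∀ {B : Type _} [CommRing B] [Algebra ℝ B] (Y : Polynomial B), NF (Sum.elim (fun k => C * α2 k) (fun k => -α1 k)) (Sum.elim ρ2 ρ1) Y =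
      algebraMap ℝ B C * NF α2 ρ2 Y - NF α1 ρ1 Y := by
    intro B _ _ Y
    simp only [NF, Fintype.sum_sum_type, Sum.elim_inl, Sum.elim_inr, map_mul, map_neg, Finset.mul_sum, neg_mul, Finset.sum_neg_distrib, ← sub_eq_add_neg]
    congr 1
    exact Finset.sum_congr rfl fun k _ => by ring
  have hsplit' : ∀ (Y : Polynomial ℝ), NF (Sum.elim (fun k => C * α2 k) (fun k => -α1 k)) (Sum.elim ρ2 ρ1) Y =
      C * NF α2 ρ2 Y - NF α1 ρ1 Y := by
    intro Y
    simp only [NF, Fintype.sum_sum_type, Sum.elim_inl, Sum.elim_inr, map_mul, map_neg, Finset.mul_sum, neg_mul, Finset.sum_neg_distrib, ← sub_eq_add_neg]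
    congr 1
    exact Finset.sum_congr rfl fun k _ => by simp; ring
  rw [← hsplit]
  refine cmp_sb hQ _ _ D (fun Z hZ => ?_) Y hY
  rw [hsplit']
  have hZP : Z = P (fun i => Z.coeff i) := by
    simp only [P]
    conv_lhs => rw [Z.as_sum_range' D hZ]
    rw [Finset.sum_range]
  have := hle (fun i => Z.coeff i)
  simp only [← hZP] at this
  linarith

end forms

section pos
theorem QRule.integral {D : ℕ} (R : QRule D) (P : Polynomial ℝ) (hP : P.natDegree ≤ D) :
    ∑ j, R.ω j * P.eval (R.r j) = ∫ s in (0:ℝ)..1, P.eval s := by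
  have h : ∀ s : ℝ, P.eval s = ∑ i ∈ Finset.range (D+1), P.coeff i * s ^ i := fun s => by
    rw [Polynomial.eval_eq_sum_range' (n := D+1) (by omega)]
  simp only [h]
  rw [intervalIntegral.integral_finset_sum]
  · simp only [Finset.mul_sum]
    rw [Finset.sum_comm]
    refine Finset.sum_congr rfl fun i hi => ?_
    rw [intervalIntegral.integral_const_mul, integral_pow]
    have := R.mom i (by simp at hi; omega)
    simp only [one_pow, ne_eq, Nat.succ_ne_zero, not_false_eq_true, zero_pow, sub_zero] 
    rw [← this, Finset.mul_sum]
    exact Finset.sum_congr rfl fun j _ => by ring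
  · intro i _
    exact (by fun_prop : Continuous fun s : ℝ => P.coeff i * s ^ i).intervalIntegrable _ _

theorem QRule.pos {D : ℕ} (R : QRule D) (P : Polynomial ℝ) (hP : P.natDegree ≤ D)
    (h0 : ∀ s, 0 ≤ s → s ≤ 1 → 0 ≤ P.eval s) (h1 : ∃ s, 0 ≤ s ∧ s ≤ 1 ∧ P.eval s ≠ 0) :
    0 < ∑ j, R.ω j * P.eval (R.r j) := by
  rw [R.integral P hP]
  obtain ⟨s, hs0, hs1, hs⟩ := h1
  exact intervalIntegral.integral_pos one_pos P.continuous.continuousOn (fun x hx => h0 x hx.1.le hx.2)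
    ⟨s, ⟨hs0, hs1⟩, lt_of_le_of_ne (h0 s hs0 hs1) hs.symm⟩

theorem exists_nonroot (Y : Polynomial ℝ) (hY : Y ≠ 0) {a b : ℝ} (hab : a < b) : ∃ s, a < s ∧ s < b ∧ Y.eval s ≠ 0 := by
  by_contra h
  push Not at h
  apply hY
  apply Polynomial.eq_zero_of_infinite_isRoot
  exact (Set.Ioo_infinite hab).mono fun s hs => h s hs.1 hs.2

open Polynomial in
theorem QRule.psi_pos {D E : ℕ} (R : QRule D) (hE : 2 * E + 2 ≤ D) (Y : Polynomial ℝ) (hY : Y.natDegree < E) (h0 : Y ≠ 0) :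
    0 < NF (A := ℝ) (fun j => R.ω j * (R.r j * (1 - R.r j))) R.r Y := by
  have := R.pos (Polynomial.X * (1 - Polynomial.X) * Y ^ 2) (by
    refine natDegree_mul_le.trans ?_
    have h1 := natDegree_pow_le (p := Y) (n := 2)
    have h2 : (Polynomial.X * (1 - Polynomial.X) : Polynomial ℝ).natDegree ≤ 2 := by compute_degree
    omega) (by
    intro s hs0 hs1
    simp
    have : 0 ≤ s * (1 - s) := mul_nonneg hs0 (by linarith)
    positivity) (by
    obtain ⟨s, hs0, hs1, hs⟩ := exists_nonroot Y h0 (one_pos (α := ℝ))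
    refine ⟨s, hs0.le, hs1.le, ?_⟩
    simp
    exact ⟨⟨hs0.ne', by linarith⟩, hs⟩)
  convert this using 1
  simp only [NF]
  refine Finset.sum_congr rfl fun j _ => ?_
  simp; ring

/-- weights and nodes of the chord form at `t` -/
def chα {D : ℕ} (R : QRule D) (t : ℝ) : Fin R.k × Bool → ℝ :=
  fun p => R.ω p.1 * R.r p.1 * (if p.2 then t else 1 - t)
/-- nodes of the chord form at `t` -/
def chρ {D : ℕ} (R : QRule D) (t : ℝ) : Fin R.k × Bool → ℝ :=
  fun p => if p.2 then t * R.r p.1 else 1 - (1 - t) * R.r p.1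

open Polynomial in
theorem QRule.ch_pos {D E : ℕ} (R : QRule D) (hE : 2 * E + 2 ≤ D) {t : ℝ} (ht0 : 0 ≤ t) (ht1 : t ≤ 1)
    (Y : Polynomial ℝ) (hY : Y.natDegree < E) (h0 : Y ≠ 0) :
    0 < NF (A := ℝ) (chα R t) (chρ R t) Y := by
  have hd : ∀ a b : ℝ, ((Y.comp (Polynomial.C a + Polynomial.C b * Polynomial.X)) ^ 2).natDegree ≤ 2 * E := by
    intro a b
    refine natDegree_pow_le.trans ?_
    have h1 : (Polynomial.C a + Polynomial.C b * Polynomial.X : Polynomial ℝ).natDegree ≤ 1 := by compute_degree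
    have h2 := natDegree_comp_le (p := Y) (q := Polynomial.C a + Polynomial.C b * Polynomial.X)
    have h3 := Nat.mul_le_mul (le_refl Y.natDegree) h1
    omega
  have hX : ∀ c : ℝ, (Polynomial.X * Polynomial.C c : Polynomial ℝ).natDegree ≤ 1 := fun c => by compute_degree
  have := R.pos (Polynomial.X * Polynomial.C t * (Y.comp (Polynomial.C 0 + Polynomial.C t * Polynomial.X)) ^ 2 +
     Polynomial.X * Polynomial.C (1 - t) * (Y.comp (Polynomial.C 1 + Polynomial.C (-(1-t)) * Polynomial.X)) ^ 2) (by
    refine (natDegree_add_le _ _).trans (max_le ?_ ?_)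
    · refine natDegree_mul_le.trans ?_
      have h1 := hX t
      have h2 := hd 0 t
      omega
    · refine natDegree_mul_le.trans ?_
      have h1 := hX (1 - t)
      have h2 := hd 1 (-(1-t))
      omega) (by
    intro s hs0 hs1
    simp only [Polynomial.eval_add, Polynomial.eval_mul, Polynomial.eval_X, Polynomial.eval_C, Polynomial.eval_pow]
    have : 0 ≤ 1 - t := by linarith
    positivity) (by
    rcases ht0.eq_or_lt with h | h
    · obtain ⟨s, hs0, hs1, hs⟩ := exists_nonroot Y h0 (one_pos (α := ℝ))
      refine ⟨1 - s, by linarith, by linarith, ?_⟩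
      subst h
      simp
      exact ⟨by linarith, hs⟩
    · obtain ⟨s, hs0, hs1, hs⟩ := exists_nonroot Y h0 h
      have hst : 0 < s / t := by positivity
      refine ⟨s / t, hst.le, by rw [div_le_one h]; exact hs1.le, ?_⟩
      simp only [Polynomial.eval_add, Polynomial.eval_mul, Polynomial.eval_X, Polynomial.eval_C, Polynomial.eval_pow, Polynomial.eval_comp, zero_add]
      rw [mul_div_cancel₀ _ h.ne']
      have h1 : 0 < s / t * t * Polynomial.eval s Y ^ 2 := by positivity
      have : 0 ≤ 1 - t := by linarith
      have h2 : 0 ≤ s / t * (1 - t) * Polynomial.eval (1 + -(1 - t) * (s / t)) Y ^ 2 := by positivity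
      linarith)
  convert this using 1
  simp only [NF, Fintype.sum_prod_type, Fintype.sum_bool, chα, chρ]
  refine Finset.sum_congr rfl fun j _ => ?_
  simp [← sub_eq_add_neg]; ring_nf

end pos


section setup
variable {n m : ℕ} {A : Type*} [CommRing A] [Algebra ℝ A]

/-- the abstract setting -/
structure Setup (g : Fin m → MvPolynomial (Fin n) ℝ) (Q : Set A) (x u : Fin n → A) : Prop where
  qm : IsQMod Q
  arch : ∀ a, ∃ N : ℝ, algebraMap ℝ A N - a ∈ Q
  hx : ∀ i, aeval x (g i) ∈ Q
  hu : ∀ i, aeval u (g i) ∈ Q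
  conv : Convex ℝ (SolSet g)
  cpt : IsCompact (SolSet g)
  psd : ∀ H : Fin n → Fin n → MvPolynomial (Fin n) ℝ, (∀ i j, H i j = H j i) →
    (∀ z ∈ SolSet g, ∀ v : Fin n → ℝ, 0 ≤ ∑ i, ∑ j, eval z (H i j) * (v i * v j)) →
    ∀ w : Fin n → A, ∑ i, ∑ j, aeval u (H i j) * (w i * w j) ∈ Q

/-- the point `u + s (x - u)` -/
def zPt (x u : Fin n → A) (s : ℝ) : Fin n → A := fun i => u i + algebraMap ℝ A s * (x i - u i)

theorem chi_aeval (χ : A →ₐ[ℝ] ℝ) (z : Fin n → A) (p : MvPolynomial (Fin n) ℝ) :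
    χ (aeval z p) = eval (fun i => χ (z i)) p := by
  rw [← AlgHom.comp_apply, comp_aeval, aeval_eq_eval]

variable {g : Fin m → MvPolynomial (Fin n) ℝ} {Q : Set A} {x u : Fin n → A}

theorem Setup.put (h : Setup g Q x u) {f : A}
    (hf : ∀ χ : A →ₐ[ℝ] ℝ, (fun i => χ (x i)) ∈ SolSet g → (fun i => χ (u i)) ∈ SolSet g → 0 < χ f) : f ∈ Q := by
  refine putinar h.qm h.arch f fun χ hχ => hf χ ?_ ?_
  · intro i; rw [← chi_aeval]; exact hχ _ (h.hx i)
  · intro i; rw [← chi_aeval]; exact hχ _ (h.hu i)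

theorem Setup.zmem (h : Setup g Q x u) {χ : A →ₐ[ℝ] ℝ} (hx : (fun i => χ (x i)) ∈ SolSet g)
    (hu : (fun i => χ (u i)) ∈ SolSet g) {s : ℝ} (h0 : 0 ≤ s) (h1 : s ≤ 1) :
    (fun i => χ (zPt x u s i)) ∈ SolSet g := by
  have := h.conv hu hx (sub_nonneg.2 h1) h0 (by ring)
  convert this using 1
  funext i
  simp [zPt]; ring

/-- positivity on a segment point -/
theorem Setup.putz (h : Setup g Q x u) {s : ℝ} (h0 : 0 ≤ s) (h1 : s ≤ 1) {p : MvPolynomial (Fin n) ℝ}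
    (hp : ∀ z ∈ SolSet g, 0 < eval z p) : aeval (zPt x u s) p ∈ Q :=
  h.put fun χ hx hu => by rw [chi_aeval]; exact hp _ (h.zmem hx hu h0 h1)

theorem Setup.bdd (h : Setup g Q x u) (p : MvPolynomial (Fin n) ℝ) :
    ∃ B > 0, ∀ z ∈ SolSet g, |eval z p| ≤ B := by
  obtain ⟨B, hB⟩ := h.cpt.exists_bound_of_continuousOn (MvPolynomial.continuous_eval p).continuousOn
  exact ⟨max B 1, by positivity, fun z hz => (hB z hz).trans (le_max_left _ _)⟩

theorem zPt_zero : zPt x u 0 = u := by funext i; simp [zPt]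
theorem zPt_one : zPt x u 1 = x := by funext i; simp [zPt]

end setup

section cpt

theorem cpt_sep {X : Type*} [TopologicalSpace X] {K : Set X} (hK : IsCompact K) {f p : X → ℝ}
    (hf : Continuous f) (hp : Continuous p) (hp0 : ∀ z ∈ K, 0 ≤ p z) (hneg : ∀ z ∈ K, p z = 0 → f z < 0) :
    ∃ δ > 0, ∃ C > 0, ∀ z ∈ K, f z ≤ -δ + C * p z := by
  obtain ⟨C, hC, h1⟩ : ∃ C > 0, ∀ z ∈ K, f z - C * p z < 0 := by
    have hK' : IsCompact (K ∩ {z | 0 ≤ f z}) := hK.inter_right (isClosed_le continuous_const hf)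
    rcases (K ∩ {z | 0 ≤ f z}).eq_empty_or_nonempty with he | hne
    · refine ⟨1, one_pos, fun z hz => ?_⟩
      have : ¬ (0 ≤ f z) := fun h => by
        have : z ∈ K ∩ {z | 0 ≤ f z} := ⟨hz, h⟩
        rw [he] at this; exact this
      have := hp0 z hz
      linarith
    · obtain ⟨z1, hz1, hm1⟩ := hK'.exists_isMinOn hne hp.continuousOn
      obtain ⟨z2, hz2, hm2⟩ := hK'.exists_isMaxOn hne hf.continuousOn
      have hpos : 0 < p z1 := lt_of_le_of_ne (hp0 _ hz1.1) fun h => by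
        have := hneg z1 hz1.1 h.symm
        have h2 : 0 ≤ f z1 := hz1.2
        linarith
      have hF : 0 ≤ f z2 := hz2.2
      refine ⟨f z2 / p z1 + 1, by positivity, fun z hz => ?_⟩
      by_cases h0 : 0 ≤ f z
      · have a1 : f z ≤ f z2 := hm2 ⟨hz, h0⟩
        have a2 : p z1 ≤ p z := hm1 ⟨hz, h0⟩
        have a3 : f z2 = f z2 / p z1 * p z1 := by field_simp
        have a4 : f z2 / p z1 * p z1 ≤ f z2 / p z1 * p z := by gcongr
        nlinarith
      · have := hp0 z hz
        have : 0 ≤ (f z2 / p z1 + 1) * p z := by positivity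
        linarith
  rcases K.eq_empty_or_nonempty with rfl | hne
  · exact ⟨1, one_pos, 1, one_pos, by simp⟩
  obtain ⟨z1, hz1, hm⟩ := hK.exists_isMaxOn hne (hf.sub (continuous_const.mul hp)).continuousOn (f := fun z => f z - C * p z)
  refine ⟨-(f z1 - C * p z1), by linarith [h1 z1 hz1], C, hC, fun z hz => ?_⟩
  have : f z - C * p z ≤ f z1 - C * p z1 := hm hz
  linarith

theorem cpt_pow {X : Type*} [TopologicalSpace X] {K : Set X} (hK : IsCompact K) {f y : X → ℝ}
    (hf : Continuous f) (hy : Continuous y) (hf0 : ∀ z ∈ K, 0 ≤ f z) (hy0 : ∀ z ∈ K, 0 ≤ y z) (hy1 : ∀ z ∈ K, y z ≤ 1)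
    (hfy : ∀ z ∈ K, y z = 1 → f z = 0) {c : ℝ} (hc : 0 < c) : ∃ N : ℕ, ∀ z ∈ K, y z ^ (2 * N) * f z < c := by
  have hK' : IsCompact (K ∩ {z | c ≤ f z}) := hK.inter_right (isClosed_le continuous_const hf)
  rcases (K ∩ {z | c ≤ f z}).eq_empty_or_nonempty with he | hne
  · refine ⟨0, fun z hz => ?_⟩
    have : ¬ (c ≤ f z) := fun h => by
        have : z ∈ K ∩ {z | c ≤ f z} := ⟨hz, h⟩
        rw [he] at this; exact this
    simp; linarith
  · obtain ⟨z1, hz1, hm1⟩ := hK'.exists_isMaxOn hne hy.continuousOn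
    obtain ⟨z2, hz2, hm2⟩ := hK'.exists_isMaxOn hne hf.continuousOn
    have hlt : y z1 < 1 := lt_of_le_of_ne (hy1 _ hz1.1) fun h => by
      have := hfy z1 hz1.1 h
      have h2 : c ≤ f z1 := hz1.2
      linarith
    have hF : 0 < f z2 := lt_of_lt_of_le hc hz2.2
    obtain ⟨N, hN⟩ := exists_pow_lt_of_lt_one (div_pos hc hF) hlt
    have hyn := hy0 z1 hz1.1
    refine ⟨N, fun z hz => ?_⟩
    have hz0 := hy0 z hz
    by_cases h0 : c ≤ f z
    · have a1 : f z ≤ f z2 := hm2 ⟨hz, h0⟩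
      have a2 : y z ≤ y z1 := hm1 ⟨hz, h0⟩
      calc y z ^ (2*N) * f z ≤ y z1 ^ (2 * N) * f z2 := by gcongr; exact hf0 z hz
        _ ≤ y z1 ^ N * f z2 := by
            gcongr ?_ * _
            exact pow_le_pow_of_le_one hyn hlt.le (by omega)
        _ < c / f z2 * f z2 := by gcongr
        _ = c := by field_simp
    · push Not at h0
      have : y z ^ (2*N) ≤ 1 := pow_le_one₀ hz0 (hy1 z hz)
      have := hf0 z hz
      nlinarith

end cpt

section loc
variable {n m : ℕ} {A : Type*} [CommRing A] [Algebra ℝ A]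
variable {g : Fin m → MvPolynomial (Fin n) ℝ} {Q : Set A} {x u : Fin n → A}

theorem Setup.cross (h : Setup g Q x u) {c : ℝ} (τ : A) (a b : A)
    (hτ : ∀ χ : A →ₐ[ℝ] ℝ, (fun i => χ (x i)) ∈ SolSet g → (fun i => χ (u i)) ∈ SolSet g → |χ τ| < c) :
    algebraMap ℝ A (c/2) * (a ^ 2 + b ^ 2) + τ * (a * b) ∈ Q := by
  have h1 : algebraMap ℝ A c + τ ∈ Q := h.put fun χ hx hu => by
    have := abs_lt.1 (hτ χ hx hu)
    simp; linarith
  have h2 : algebraMap ℝ A c - τ ∈ Q := h.put fun χ hx hu => by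
    have := abs_lt.1 (hτ χ hx hu)
    simp; linarith
  have := h.qm.add (h.qm.sqm (algebraMap ℝ A (1/2) * (a + b)) h1) (h.qm.sqm (algebraMap ℝ A (1/2) * (a - b)) h2)
  convert this using 1
  have e1 : algebraMap ℝ A c = 2 * algebraMap ℝ A (c/2) := by
    rw [← map_ofNat (algebraMap ℝ A) 2, ← map_mul]; congr 1; ring
  have e2 : 2 * algebraMap ℝ A (1/2) = 1 := by
    rw [← map_ofNat (algebraMap ℝ A) 2, ← map_mul, ← map_one (algebraMap ℝ A)]; congr 1; norm_num
  have e3 : 4 * algebraMap ℝ A (1/2) ^ 2 = 1 := by linear_combination (2 * algebraMap ℝ A (1/2) + 1) * e2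
  rw [e1]
  linear_combination -(algebraMap ℝ A (c/2) * (a^2+b^2) + τ * a * b) * e3

theorem Setup.localPsd (h : Setup g Q x u) (H : Fin n → Fin n → MvPolynomial (Fin n) ℝ) (hsym : ∀ i j, H i j = H j i)
    {δ : ℝ} (hδ : 0 < δ)
    (hpos : ∀ z ∈ SolSet g, ∀ v : Fin n → ℝ, 3 * δ * ∑ i, v i ^ 2 ≤ ∑ i, ∑ j, eval z (H i j) * (v i * v j))
    {s : ℝ} (hs0 : 0 ≤ s) (hs1 : s ≤ 1) :
    ∑ i, ∑ j, aeval (zPt x u s) (H i j) * ((x i - u i) * (x j - u j)) ∈ Q := by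
  set w : Fin n → A := fun i => x i - u i with hw
  set W : A := ∑ i, w i ^ 2 with hW
  set p : A := ∑ i, ∑ j, aeval (zPt x u s) (H i j) * (w i * w j) with hp
  have hK : IsCompact (SolSet g ×ˢ SolSet g) := h.cpt.prod h.cpt
  obtain ⟨R0, hR0⟩ := hK.exists_bound_of_continuousOn (f := fun q : (Fin n → ℝ) × (Fin n → ℝ) => ∑ i, (q.1 i - q.2 i) ^ 2)
    (by fun_prop)
  set R := max R0 1 with hR
  have hRpos : 0 < R := by positivity
  have hRle : ∀ a ∈ SolSet g, ∀ b ∈ SolSet g, ∑ i, (a i - b i) ^ 2 ≤ R := fun a ha b hb =>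
    (le_abs_self _).trans ((hR0 (a, b) ⟨ha, hb⟩).trans (le_max_left _ _))
  set Z : (Fin n → ℝ) × (Fin n → ℝ) → Fin n → ℝ := fun q i => q.2 i + s * (q.1 i - q.2 i) with hZ
  set c : ℝ := δ / (n + 1) with hc
  have hcpos : 0 < c := by positivity
  obtain ⟨N, hN⟩ := cpt_pow hK (f := fun q => ∑ i, ∑ j, |eval (Z q) (H i j) - eval q.2 (H i j)|)
    (y := fun q => 1 - R⁻¹ * ∑ i, (q.1 i - q.2 i) ^ 2)
    (by
      refine continuous_finset_sum _ fun i _ => continuous_finset_sum _ fun j _ => ?_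
      refine continuous_abs.comp (Continuous.sub ?_ ?_)
      · exact (MvPolynomial.continuous_eval _).comp (by fun_prop)
      · exact (MvPolynomial.continuous_eval _).comp (by fun_prop))
    (by fun_prop)
    (fun z _ => by positivity)
    (fun z hz => by
      have := hRle z.1 hz.1 z.2 hz.2
      have : R⁻¹ * ∑ i, (z.1 i - z.2 i) ^ 2 ≤ R⁻¹ * R := by gcongr
      rw [inv_mul_cancel₀ hRpos.ne'] at this
      linarith)
    (fun z hz => by
      have : 0 ≤ R⁻¹ * ∑ i, (z.1 i - z.2 i) ^ 2 := by positivity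
      linarith)
    (fun z hz h1 => by
      have h2 : R⁻¹ * ∑ i, (z.1 i - z.2 i) ^ 2 = 0 := by linarith
      have h3 : ∑ i, (z.1 i - z.2 i) ^ 2 = 0 := by
        rcases mul_eq_zero.1 h2 with h | h
        · exact absurd h (by positivity)
        · exact h
      have h4 : ∀ i, z.1 i - z.2 i = 0 := fun i => by
        have := (Finset.sum_eq_zero_iff_of_nonneg (fun i _ => sq_nonneg _)).1 h3 i (Finset.mem_univ _)
        exact pow_eq_zero_iff (two_ne_zero) |>.1 this
      have h5 : Z z = z.2 := by funext i; simp [hZ, h4]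
      simp [h5]) hcpos
  set y : A := 1 - algebraMap ℝ A R⁻¹ * W with hy
  set σ : A := y ^ (2 * N) with hσ
  set τ : A := algebraMap ℝ A R⁻¹ * ∑ j ∈ Finset.range (2 * N), y ^ j with hτ
  have hστ : 1 - σ = W * τ := by
    have := geom_sum_mul y (2 * N)
    rw [hσ, hτ]
    have e : y - 1 = - (algebraMap ℝ A R⁻¹ * W) := by rw [hy]; ring
    rw [e] at this
    linear_combination this
  have hWSB : SB Q W := SB.sum h.qm _ _ fun i _ => SB.sq h.qm _
  -- values at characters
  have hχW : ∀ χ : A →ₐ[ℝ] ℝ, χ W = ∑ i, (χ (x i) - χ (u i)) ^ 2 := fun χ => by simp [hW, hw]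
  have hχy : ∀ χ : A →ₐ[ℝ] ℝ, χ y = 1 - R⁻¹ * ∑ i, (χ (x i) - χ (u i)) ^ 2 := fun χ => by
    rw [hy, map_sub, map_one, map_mul, hχW]; simp
  have hy0 : ∀ χ : A →ₐ[ℝ] ℝ, (fun i => χ (x i)) ∈ SolSet g → (fun i => χ (u i)) ∈ SolSet g → 0 ≤ χ y ∧ χ y ≤ 1 := by
    intro χ hx hu
    rw [hχy]
    have := hRle _ hx _ hu
    have h2 : R⁻¹ * ∑ i, (χ (x i) - χ (u i)) ^ 2 ≤ R⁻¹ * R := by gcongr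
    rw [inv_mul_cancel₀ hRpos.ne'] at h2
    have : 0 ≤ R⁻¹ * ∑ i, (χ (x i) - χ (u i)) ^ 2 := by positivity
    constructor <;> linarith
  have t1 : W * (algebraMap ℝ A (2 * δ) * σ + τ * p - algebraMap ℝ A δ) ∈ Q := by
    refine hWSB _ (h.put fun χ hx hu => ?_)
    obtain ⟨b0, b1⟩ := hy0 χ hx hu
    have hs : χ σ ≤ 1 := by rw [hσ, map_pow]; exact pow_le_one₀ b0 b1
    have hpp : 3 * δ * χ W ≤ χ p := by
      have := hpos _ (h.zmem hx hu hs0 hs1) (fun i => χ (w i))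
      convert this using 1
      · simp [hW]
      · simp only [hp, map_sum, map_mul, chi_aeval]
    have hτ0 : 0 ≤ χ τ := by
      simp only [hτ, map_mul, map_sum, map_pow, AlgHom.commutes]
      have : 0 ≤ R⁻¹ := by positivity
      exact mul_nonneg this (Finset.sum_nonneg fun i _ => pow_nonneg b0 _)
    have e := congrArg χ hστ
    simp only [map_sub, map_one, map_mul] at e
    simp only [map_sub, map_add, map_mul, AlgHom.commutes, Algebra.algebraMap_self, RingHom.id_apply]
    have : χ τ * (3 * δ * χ W) ≤ χ τ * χ p := by gcongr
    have e2 : χ τ * (3 * δ * χ W) = 3 * δ * (1 - χ σ) := by rw [e]; ring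
    simp at *
    nlinarith
  have t2 : σ * ∑ i, ∑ j, aeval u (H i j - (if i = j then C (2 * δ) else 0)) * (w i * w j) ∈ Q := by
    have hσSB : SB Q σ := by rw [hσ, mul_comm, pow_mul]; exact SB.sq h.qm _
    refine hσSB _ (h.psd (fun i j => H i j - (if i = j then C (2 * δ) else 0)) ?_ ?_ w)
    · intro i j
      simp only [hsym i j, eq_comm]
    · intro z hz v
      have := hpos z hz v
      have e : ∑ i, ∑ j, eval z (H i j - (if i = j then C (2 * δ) else 0)) * (v i * v j) =
          ∑ i, ∑ j, eval z (H i j) * (v i * v j) - 2 * δ * ∑ i, v i ^ 2 := by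
        rw [Finset.mul_sum, ← Finset.sum_sub_distrib]
        refine Finset.sum_congr rfl fun i _ => ?_
        simp only [map_sub, sub_mul, Finset.sum_sub_distrib]
        congr 1
        rw [Finset.sum_eq_single i]
        · rw [if_pos rfl, eval_C]; ring
        · intro b _ hb; simp [Ne.symm hb]
        · simp
      rw [e]
      have : 0 ≤ δ * ∑ i, v i ^ 2 := by positivity
      linarith
  have t3 : ∑ i, ∑ j, (algebraMap ℝ A (c/2) * (w i ^ 2 + w j ^ 2) + (σ * (aeval (zPt x u s) (H i j) - aeval u (H i j))) * (w i * w j)) ∈ Q := by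
    refine h.qm.sum _ _ fun i _ => h.qm.sum _ _ fun j _ => h.cross _ _ _ fun χ hx hu => ?_
    have := hN (fun i => χ (x i), fun i => χ (u i)) ⟨hx, hu⟩
    refine lt_of_le_of_lt ?_ this
    rw [map_mul, hσ, map_pow, hχy, abs_mul, abs_of_nonneg (Even.pow_nonneg ⟨N, by ring⟩ _)]
    gcongr
    · exact Even.pow_nonneg ⟨N, by ring⟩ _
    have hZe : Z (fun i => χ (x i), fun i => χ (u i)) = fun i => χ (zPt x u s i) := by
      funext i; simp [hZ, zPt]
    rw [map_sub, chi_aeval, chi_aeval, hZe]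
    refine le_trans ?_ (Finset.single_le_sum (f := fun i => ∑ j, |eval (fun i => χ (zPt x u s i)) (H i j) - eval (fun i => χ (u i)) (H i j)|) (fun i _ => by positivity) (Finset.mem_univ i))
    exact (Finset.single_le_sum (f := fun j => |eval (fun i => χ (zPt x u s i)) (H i j) - eval (fun i => χ (u i)) (H i j)|) (fun i _ => by positivity) (Finset.mem_univ j))
  have t4 : algebraMap ℝ A (δ - c * n) * W ∈ Q := by
    refine SB.cst h.qm ?_ _ (hWSB.mem h.qm)
    have : c * (n+1) = δ := by rw [hc]; field_simp
    nlinarith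
  have := h.qm.add (h.qm.add t1 t2) (h.qm.add t3 t4)
  convert this using 1
  have e2 : ∑ i, ∑ j, aeval u (H i j - (if i = j then C (2 * δ) else 0)) * (w i * w j) =
      ∑ i, ∑ j, aeval u (H i j) * (w i * w j) - algebraMap ℝ A (2 * δ) * W := by
    rw [hW, Finset.mul_sum, ← Finset.sum_sub_distrib]
    refine Finset.sum_congr rfl fun i _ => ?_
    simp only [map_sub, sub_mul, Finset.sum_sub_distrib]
    congr 1
    rw [Finset.sum_eq_single i]
    · rw [if_pos rfl, ← MvPolynomial.algebraMap_eq, AlgHom.commutes]; ring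
    · intro b _ hb; simp [Ne.symm hb]
    · simp
  have e3 : ∑ i, ∑ j, (algebraMap ℝ A (c/2) * (w i ^ 2 + w j ^ 2) + (σ * (aeval (zPt x u s) (H i j) - aeval u (H i j))) * (w i * w j)) =
      algebraMap ℝ A (c * n) * W + σ * (p - ∑ i, ∑ j, aeval u (H i j) * (w i * w j)) := by
    rw [hp, ← Finset.sum_sub_distrib]
    simp only [← Finset.sum_sub_distrib, Finset.mul_sum, Finset.sum_add_distrib]
    congr 1
    · simp only [mul_add, Finset.sum_add_distrib, Finset.sum_const, Finset.card_univ, Fintype.card_fin, ← Finset.mul_sum, ← hW]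
      have : algebraMap ℝ A (c * n) = 2 * (n * algebraMap ℝ A (c / 2)) := by
        rw [← map_natCast (algebraMap ℝ A) n, ← map_mul, ← map_ofNat (algebraMap ℝ A) 2, ← map_mul]; congr 1; ring
      simp only [this, nsmul_eq_mul, ← Finset.mul_sum, ← hW]
      ring
    · refine Finset.sum_congr rfl fun i _ => Finset.sum_congr rfl fun j _ => by ring
  rw [e2, e3, map_sub, map_mul, map_ofNat]
  linear_combination (algebraMap ℝ A δ * 0 + p) * hστ

end loc


section hat

theorem hat_core {φ ρ B ε rv fv fvv : ℝ} (hφ0 : 0 ≤ φ) (hφ1 : φ ≤ 1) (hρ0 : 0 ≤ ρ) (hρ : ρ ≤ B) (hε : 0 < ε)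
    (hεB : ε * B ≤ 1 / 512) (hrv : rv ^ 2 ≤ 4 * B) :
    fvv * ((1 - ε * φ * ρ) * (1 - 3 * ε * φ * ρ)) + (-4 * ε * ρ + 6 * ε ^ 2 * φ * ρ ^ 2) * fv ^ 2 +
      2 * (-4 * ε * φ + 6 * ε ^ 2 * φ ^ 2 * ρ) * fv * rv + 2 * ε ^ 2 * φ ^ 3 * rv ^ 2
      - 2 * ε * φ ^ 2 * (1 - ε * φ * ρ) * 2 ≤
    fvv * ((1 - ε * φ * ρ) * (1 - 3 * ε * φ * ρ)) + 64 * (ε * B) * fv ^ 2 - ε * φ ^ 2 := by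
  have hB : 0 ≤ B := hρ0.trans hρ
  set κ := ε * φ * ρ with hκ
  have hκ0 : 0 ≤ κ := by positivity
  have hκ1 : κ ≤ 1 / 512 := by
    calc κ = φ * (ε * ρ) := by rw [hκ]; ring
      _ ≤ 1 * (ε * B) := by gcongr
      _ ≤ 1 / 512 := by linarith
  have h1 : (-4 * ε * ρ + 6 * ε ^ 2 * φ * ρ ^ 2) * fv ^ 2 ≤ 0 := by
    have : (-4 * ε * ρ + 6 * ε ^ 2 * φ * ρ ^ 2) = -(2 * (ε * ρ) * (2 - 3 * κ)) := by rw [hκ]; ring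
    rw [this]
    have : 0 ≤ 2 - 3 * κ := by linarith
    have : 0 ≤ (2 * (ε * ρ) * (2 - 3 * κ)) * fv ^ 2 := by positivity
    linarith
  have h2 : 2 * (-4 * ε * φ + 6 * ε ^ 2 * φ ^ 2 * ρ) * fv * rv ≤ ε * φ ^ 2 + 64 * (ε * B) * fv ^ 2 := by
    have e : 2 * (-4 * ε * φ + 6 * ε ^ 2 * φ ^ 2 * ρ) * fv * rv = -(ε * (2 * φ * (2 * (2 - 3 * κ) * (fv * rv)))) := by
      rw [hκ]; ring
    have h3 : (2 - 3 * κ) ^ 2 ≤ 4 := by nlinarith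
    have h4 : 0 ≤ (φ + 2 * (2 - 3 * κ) * (fv * rv)) ^ 2 := sq_nonneg _
    have h5 : -(2 * φ * (2 * (2 - 3 * κ) * (fv * rv))) ≤ φ ^ 2 + 4 * (2 - 3 * κ) ^ 2 * (fv ^ 2 * rv ^ 2) := by nlinarith
    have h6 : 4 * (2 - 3 * κ) ^ 2 * (fv ^ 2 * rv ^ 2) ≤ 4 * 4 * (fv ^ 2 * (4 * B)) := by gcongr
    have h7 : -(2 * φ * (2 * (2 - 3 * κ) * (fv * rv))) ≤ φ ^ 2 + 64 * B * fv ^ 2 := by linarith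
    rw [e]
    nlinarith
  have h3 : 2 * ε ^ 2 * φ ^ 3 * rv ^ 2 ≤ ε * φ ^ 2 := by
    calc 2 * ε ^ 2 * φ ^ 3 * rv ^ 2 = ε * φ ^ 2 * (2 * ε * φ * rv ^ 2) := by ring
      _ ≤ ε * φ ^ 2 * (2 * ε * 1 * (4 * B)) := by gcongr
      _ = ε * φ ^ 2 * (8 * (ε * B)) := by ring
      _ ≤ ε * φ ^ 2 * 1 := by gcongr; linarith
      _ = _ := by ring
  have h4 : 3 * (ε * φ ^ 2) ≤ 2 * ε * φ ^ 2 * (1 - κ) * 2 := by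
    have : 0 ≤ ε * φ ^ 2 := by positivity
    nlinarith
  linarith

theorem hat_F {t : ℝ} (h0 : 0 ≤ t) (h1 : t ≤ 1 / 512) : 1 / 2 ≤ (1 - t) * (1 - 3 * t) ∧ (1 - t) * (1 - 3 * t) ≤ 1 := by
  constructor <;> nlinarith

theorem hat_core2 {φ F B ε y a h fv fvv E : ℝ} {k : ℕ} (hF0 : 1 / 2 ≤ F) (hF1 : F ≤ 1) (hy0 : 0 ≤ y) (hy1 : y ≤ 1)
    (hB : 0 ≤ ε * B) (hεB : ε * B ≤ 1 / 512)
    (hfv : fv = (k + 2) * y ^ (k + 1) * a) (hfvv : fvv = (k + 2) * y ^ (k + 1) * h - (k + 2) * (k + 1) * y ^ k * a ^ 2)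
    (hE : E ≤ fvv * F + 64 * (ε * B) * fv ^ 2 - ε * φ ^ 2) :
    E ≤ - ε * φ ^ 2 + (k + 2) * y ^ k * (F * y * h - (k + 1) / 4 * a ^ 2) := by
  have hk : (0 : ℝ) ≤ k := Nat.cast_nonneg k
  have hyk : 0 ≤ y ^ k := pow_nonneg hy0 k
  have h1 : fv ^ 2 ≤ (k + 2) ^ 2 * y ^ k * a ^ 2 := by
    have : fv ^ 2 = (k + 2) ^ 2 * (y ^ k * y ^ (k + 2)) * a ^ 2 := by rw [hfv]; ring
    rw [this]
    have : y ^ (k + 2) ≤ 1 := pow_le_one₀ hy0 hy1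
    have : y ^ k * y ^ (k + 2) ≤ y ^ k * 1 := by gcongr
    rw [mul_one] at this
    gcongr
  have h2 : 64 * (ε * B) * fv ^ 2 ≤ 64 * (1 / 512) * ((k + 2) ^ 2 * y ^ k * a ^ 2) := by gcongr
  have h3 : (k + 2) * (k + 1) * y ^ k * a ^ 2 * (1 / 2) ≤ (k + 2) * (k + 1) * y ^ k * a ^ 2 * F := by gcongr
  have h4 : fvv * F = (k + 2) * y ^ k * (F * y * h) - (k + 2) * (k + 1) * y ^ k * a ^ 2 * F := by rw [hfvv]; ring
  have h5 : (1 / 8 : ℝ) * ((k + 2) ^ 2 * y ^ k * a ^ 2) ≤ 1 / 4 * ((k + 2) * (k + 1) * y ^ k * a ^ 2) := by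
    have : (0:ℝ) ≤ (k + 2) * y ^ k * a ^ 2 := by positivity
    nlinarith
  nlinarith

theorem hat_choose {η K K1 ε : ℝ} (hη : 0 < η) (hη1 : η ≤ 1 / 2) (hε : 0 < ε) :
    ∃ N : ℕ, (((2 * N + 1 : ℕ) : ℝ) + 2) * (1 - η) ^ (2 * N + 1) * K1 < ε / 4 ∧ (1 - η) ^ (2 * N + 1) ≤ 1 / 2 ∧
      K ≤ (((2 * N + 1 : ℕ) : ℝ) + 1) / 4 := by
  have r0 : 0 ≤ 1 - η := by linarith
  have r1 : 1 - η < 1 := by linarith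
  have t1 := tendsto_self_mul_const_pow_of_lt_one r0 r1
  have t2 := tendsto_pow_atTop_nhds_zero_of_lt_one r0 r1
  have t3 : Filter.Tendsto (fun k : ℕ => ((k:ℝ) + 2) * (1 - η) ^ k * K1) Filter.atTop (nhds 0) := by
    have := (t1.add (t2.const_mul 2)).mul_const K1
    simp only [mul_zero, add_zero, zero_mul] at this
    refine this.congr fun k => by ring
  have e1 := t3.eventually (gt_mem_nhds (show (0:ℝ) < ε / 4 by positivity))
  have e2 := t2.eventually (gt_mem_nhds (show (0:ℝ) < 1 / 2 by positivity))
  have e3 := (tendsto_natCast_atTop_atTop (R := ℝ)).eventually (Filter.eventually_ge_atTop (4 * K))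
  obtain ⟨k0, hk0⟩ := Filter.eventually_atTop.1 ((e1.and e2).and e3)
  obtain ⟨⟨a, b⟩, c⟩ := hk0 (2 * k0 + 1) (by omega)
  exact ⟨k0, a, b.le, by linarith⟩

theorem hat_d2 (Φ P : Polynomial ℝ) (ε : ℝ) :
    (Polynomial.derivative (Polynomial.derivative (Φ * (1 - Polynomial.C ε * Φ * P) ^ 2))).eval 0 =
    (Polynomial.derivative (Polynomial.derivative Φ)).eval 0 * ((1 - ε * Φ.eval 0 * P.eval 0) * (1 - 3 * ε * Φ.eval 0 * P.eval 0)) +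
    (-4 * ε * P.eval 0 + 6 * ε ^ 2 * Φ.eval 0 * P.eval 0 ^ 2) * (Polynomial.derivative Φ).eval 0 ^ 2 +
      2 * (-4 * ε * Φ.eval 0 + 6 * ε ^ 2 * Φ.eval 0 ^ 2 * P.eval 0) * (Polynomial.derivative Φ).eval 0 * (Polynomial.derivative P).eval 0 + 2 * ε ^ 2 * Φ.eval 0 ^ 3 * (Polynomial.derivative P).eval 0 ^ 2
      - 2 * ε * Φ.eval 0 ^ 2 * (1 - ε * Φ.eval 0 * P.eval 0) * (Polynomial.derivative (Polynomial.derivative P)).eval 0 := by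
  simp only [pow_two, Polynomial.derivative_mul, Polynomial.derivative_sub, Polynomial.derivative_add, Polynomial.derivative_one, Polynomial.derivative_C,
    Polynomial.eval_mul, Polynomial.eval_add, Polynomial.eval_sub, Polynomial.eval_C, Polynomial.eval_one, Polynomial.derivative_zero, Polynomial.eval_zero]
  ring

theorem geom_sos {R : Type*} [CommRing R] [Algebra ℝ R] (y : R) (N : ℕ) : IsSumSq (∑ j ∈ Finset.range (2 * N + 1), y ^ j) := by
  have h : ∀ N : ℕ, 2 * ∑ j ∈ Finset.range (2 * N + 1), y ^ j = 1 + (y ^ N) ^ 2 + ∑ j ∈ Finset.range N, (y ^ j * (1 + y)) ^ 2 := by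
    intro N
    induction N with
    | zero => simp; norm_num
    | succ N ih =>
      rw [show 2 * (N + 1) + 1 = 2 * N + 1 + 1 + 1 by ring, Finset.sum_range_succ, Finset.sum_range_succ, mul_add, mul_add, ih, Finset.sum_range_succ]
      ring
  have e : ∑ j ∈ Finset.range (2 * N + 1), y ^ j = (algebraMap ℝ R (Real.sqrt (1/2))) ^ 2 * (1 + (y ^ N) ^ 2 + ∑ j ∈ Finset.range N, (y ^ j * (1 + y)) ^ 2) := by
    rw [← h, ← map_pow, Real.sq_sqrt (by norm_num), ← mul_assoc, ← map_ofNat (algebraMap ℝ R) 2, ← map_mul]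
    norm_num
  rw [e]
  refine IsSumSq.mul (IsSquare.sq _).isSumSq ?_
  refine IsSumSq.add (IsSumSq.add (by simpa using (IsSquare.sq (1:R)).isSumSq) (IsSquare.sq _).isSumSq) ?_
  exact IsSumSq.sum fun i _ => (IsSquare.sq _).isSumSq

theorem geom_psi {R : Type*} [CommRing R] (y : R) (M : ℕ) :
    (M : R) - ∑ j ∈ Finset.range M, y ^ j = (1 - y) * ∑ j ∈ Finset.range M, ∑ i ∈ Finset.range j, y ^ i := by
  rw [Finset.mul_sum]
  have : (M : R) = ∑ j ∈ Finset.range M, (1 : R) := by simp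
  rw [this, ← Finset.sum_sub_distrib]
  refine Finset.sum_congr rfl fun j _ => ?_
  have := geom_sum_mul y j
  linear_combination this

variable {n : ℕ}

/-- Hessian form through the line restriction -/
theorem line_hess {A : Type*} [CommRing A] [Algebra ℝ A] (u w : Fin n → A) (p : MvPolynomial (Fin n) ℝ) (r : A) :
    (Polynomial.derivative (Polynomial.derivative (lineP u w p))).eval r =
      ∑ i, ∑ j, aeval (fun i => u i + r * w i) (pderiv i (pderiv j p)) * (w i * w j) := by
  simp only [lineP_deriv, Polynomial.derivative_sum, Polynomial.derivative_mul, Polynomial.derivative_C, mul_zero, add_zero,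
    Polynomial.eval_finsetSum, Polynomial.eval_mul, Polynomial.eval_C, lineP_eval, Finset.sum_mul]
  rw [Finset.sum_comm]
  exact Finset.sum_congr rfl fun i _ => Finset.sum_congr rfl fun j _ => by ring

theorem line_grad {A : Type*} [CommRing A] [Algebra ℝ A] (u w : Fin n → A) (p : MvPolynomial (Fin n) ℝ) (r : A) :
    (Polynomial.derivative (lineP u w p)).eval r =
      ∑ i, aeval (fun i => u i + r * w i) (pderiv i p) * w i := by
  simp only [lineP_deriv, Polynomial.eval_finsetSum, Polynomial.eval_mul, Polynomial.eval_C, lineP_eval]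

/-- compactness of the unit sphere -/
theorem sph_cpt : IsCompact {v : Fin n → ℝ | ∑ i, v i ^ 2 = 1} := by
  refine (isCompact_univ_pi (s := fun _ => Set.Icc (-1:ℝ) 1) fun i => isCompact_Icc).of_isClosed_subset
    (isClosed_eq (by fun_prop) continuous_const) fun v hv i _ => ?_
  have h1 : v i ^ 2 ≤ ∑ i, v i ^ 2 := Finset.single_le_sum (f := fun i => v i ^ 2) (fun i _ => sq_nonneg _) (Finset.mem_univ i)
  rw [Set.mem_ofPred_eq] at hv
  rw [hv] at h1
  exact abs_le.1 (by rw [← sq_le_one_iff_abs_le_one]; exact h1)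

theorem sph_scale (H : Fin n → Fin n → ℝ) {d : ℝ} (h : ∀ v : Fin n → ℝ, ∑ i, v i ^ 2 = 1 → d ≤ ∑ i, ∑ j, H i j * (v i * v j))
    (v : Fin n → ℝ) : d * ∑ i, v i ^ 2 ≤ ∑ i, ∑ j, H i j * (v i * v j) := by
  set S := ∑ i, v i ^ 2 with hS
  have hS0 : 0 ≤ S := by positivity
  rcases hS0.eq_or_lt with h0 | hpos
  · have h4 : ∀ i, v i = 0 := fun i => by
      have := (Finset.sum_eq_zero_iff_of_nonneg (fun i _ => sq_nonneg _)).1 h0.symm i (Finset.mem_univ _)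
      exact pow_eq_zero_iff (two_ne_zero) |>.1 this
    rw [← h0]; simp [h4]
  · set r := Real.sqrt S
    have hr : 0 < r := Real.sqrt_pos.2 hpos
    have hr2 : r ^ 2 = S := Real.sq_sqrt hS0
    have := h (fun i => r⁻¹ * v i) (by
      simp only [mul_pow, ← Finset.mul_sum, ← hS, ← hr2]
      field_simp)
    have e : ∑ i, ∑ j, H i j * (r⁻¹ * v i * (r⁻¹ * v j)) = (r ^ 2)⁻¹ * ∑ i, ∑ j, H i j * (v i * v j) := by
      simp only [Finset.mul_sum]
      refine Finset.sum_congr rfl fun i _ => Finset.sum_congr rfl fun j _ => ?_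
      field_simp
    rw [e, hr2] at this
    rw [← div_eq_inv_mul, le_div_iff₀ hpos] at this
    exact this

set_option maxHeartbeats 4000000 in
theorem hat_exists {S : Set (Fin n → ℝ)} (hS : IsCompact S) (G : MvPolynomial (Fin n) ℝ) (hG : ∀ z ∈ S, 0 ≤ eval z G)
    (hq : ∀ z ∈ S, eval z G = 0 → StrictlyQuasiconcaveAt G z) :
    ∃ (f χ s : MvPolynomial (Fin n) ℝ) (κ : ℝ), 0 < κ ∧ IsSumSq s ∧ f = s * G ∧ C κ * G - f = G ^ 2 * χ ∧
      (∀ z ∈ S, 0 < eval z χ) ∧ ∃ δ > 0, ∀ z ∈ S, ∀ v : Fin n → ℝ,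
        3 * δ * ∑ i, v i ^ 2 ≤ ∑ i, ∑ j, eval z (-pderiv i (pderiv j f)) * (v i * v j) := by
  obtain ⟨B1, hB1⟩ := hS.exists_bound_of_continuousOn (MvPolynomial.continuous_eval G).continuousOn
  set lam : ℝ := 1 / (2 * max B1 1) with hlam
  have hlpos : 0 < lam := by positivity
  set γ : MvPolynomial (Fin n) ℝ := C lam * G with hγ
  have hγe : ∀ z, eval z γ = lam * eval z G := fun z => by simp [hγ]
  have hγ0 : ∀ z ∈ S, 0 ≤ eval z γ := fun z hz => by rw [hγe]; have := hG z hz; positivity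
  have hγ1 : ∀ z ∈ S, eval z γ ≤ 1 / 2 := fun z hz => by
    rw [hγe, hlam, div_mul_eq_mul_div, div_le_div_iff₀ (by positivity) (by positivity)]
    have := (le_abs_self _).trans ((hB1 z hz).trans (le_max_left B1 1))
    linarith
  set ρ : MvPolynomial (Fin n) ℝ := ∑ i, X i ^ 2 with hρ
  have hρe : ∀ z, eval z ρ = ∑ i, z i ^ 2 := fun z => by simp [hρ]
  obtain ⟨B0, hB0⟩ := hS.exists_bound_of_continuousOn (MvPolynomial.continuous_eval ρ).continuousOn
  set B : ℝ := max B0 1 with hB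
  have hBpos : 0 < B := by positivity
  have hρB : ∀ z ∈ S, eval z ρ ≤ B := fun z hz => (le_abs_self _).trans ((hB0 z hz).trans (le_max_left B0 1))
  set ε : ℝ := 1 / (512 * B) with hε
  have hεpos : 0 < ε := by positivity
  have hεB : ε * B ≤ 1 / 512 := by rw [hε]; apply le_of_eq; field_simp
  have hKc : IsCompact (S ×ˢ {v : Fin n → ℝ | ∑ i, v i ^ 2 = 1}) := hS.prod sph_cpt
  set hf : (Fin n → ℝ) × (Fin n → ℝ) → ℝ := fun q => ∑ i, ∑ j, eval q.1 (pderiv i (pderiv j γ)) * (q.2 i * q.2 j) with hhf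
  set af : (Fin n → ℝ) × (Fin n → ℝ) → ℝ := fun q => ∑ i, eval q.1 (pderiv i γ) * q.2 i with haf
  have cev : ∀ p : MvPolynomial (Fin n) ℝ, Continuous fun q : (Fin n → ℝ) × (Fin n → ℝ) => eval q.1 p := fun p =>
    (MvPolynomial.continuous_eval p).comp continuous_fst
  have chf : ∀ H : Fin n → Fin n → MvPolynomial (Fin n) ℝ, Continuous fun q : (Fin n → ℝ) × (Fin n → ℝ) => ∑ i, ∑ j, eval q.1 (H i j) * (q.2 i * q.2 j) := fun H =>
    continuous_finset_sum _ fun i _ => continuous_finset_sum _ fun j _ => (cev _).mul (by fun_prop)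
  have caf : Continuous af := continuous_finset_sum _ fun i _ => (cev _).mul (by fun_prop)
  obtain ⟨δ, hδ, K, hK, hsep⟩ := cpt_sep hKc (f := hf) (p := fun q => af q ^ 2 + eval q.1 γ) (chf _)
    ((caf.pow 2).add (cev _)) (fun z hz => add_nonneg (sq_nonneg _) (hγ0 z.1 hz.1))
    (fun z hz h0 => by
      have h1 : eval z.1 γ = 0 := by nlinarith [hγ0 z.1 hz.1, sq_nonneg (af z)]
      have h2 : af z = 0 := by
        rw [h1, add_zero] at h0; exact pow_eq_zero_iff two_ne_zero |>.1 h0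
      have h3 : eval z.1 G = 0 := by
        rw [hγe] at h1; exact (mul_eq_zero.1 h1).resolve_left hlpos.ne'
      have hv : z.2 ≠ 0 := by
        intro h
        have := hz.2
        simp [h] at this
      have h4 : af z = lam * (gradEval G z.1 ⬝ᵥ z.2) := by
        simp only [haf, hγ, gradEval, dotProduct, Finset.mul_sum]
        exact Finset.sum_congr rfl fun i _ => by simp; ring
      have h5 : hf z = lam * (z.2 ⬝ᵥ (hessEval G z.1) *ᵥ z.2) := by
        simp only [hhf, hγ, hessEval, dotProduct, mulVec, Finset.mul_sum, Matrix.of_apply]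
        exact Finset.sum_congr rfl fun i _ => Finset.sum_congr rfl fun j _ => by simp; ring
      have h6 := hq z.1 hz.1 h3 z.2 hv ((mul_eq_zero.1 (h4.symm.trans h2)).resolve_left hlpos.ne')
      rw [h5]
      exact mul_neg_of_pos_of_neg hlpos h6)
  obtain ⟨K1, hK1⟩ := hKc.exists_bound_of_continuousOn (f := hf) (chf _).continuousOn
  set η : ℝ := min (1/2) (δ / (2 * K)) with hη
  have hηpos : 0 < η := by positivity
  have hη1 : η ≤ 1 / 2 := min_le_left _ _
  have hη2 : K * η ≤ δ / 2 := by
    calc K * η ≤ K * (δ / (2 * K)) := by gcongr; exact min_le_right _ _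
      _ = δ / 2 := by field_simp
  obtain ⟨N, hN1, hN2, hN3⟩ := hat_choose (K := K) (K1 := max K1 1) hηpos hη1 hεpos
  set k := 2 * N + 1 with hk
  set y : MvPolynomial (Fin n) ℝ := 1 - γ with hy
  set φ : MvPolynomial (Fin n) ℝ := 1 - y ^ (k + 2) with hφ
  set gs : MvPolynomial (Fin n) ℝ := ∑ j ∈ Finset.range (k + 2), y ^ j with hgs
  have hφγ : φ = γ * gs := by
    have := geom_sum_mul y (k + 2)
    rw [hφ, hgs]
    have e : y - 1 = -γ := by rw [hy]; ring
    rw [e] at this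
    linear_combination this
  set ψ : MvPolynomial (Fin n) ℝ := ∑ j ∈ Finset.range (k + 2), ∑ i ∈ Finset.range j, y ^ i with hψ
  have hψe : ((k + 2 : ℕ) : MvPolynomial (Fin n) ℝ) - gs = γ * ψ := by
    rw [hgs, geom_psi, hψ, hy]; ring
  have hye : ∀ z, eval z y = 1 - eval z γ := fun z => by simp [hy]
  have hy0 : ∀ z ∈ S, 0 ≤ eval z y := fun z hz => by rw [hye]; linarith [hγ1 z hz]
  have hyh : ∀ z ∈ S, 1 / 2 ≤ eval z y := fun z hz => by rw [hye]; linarith [hγ1 z hz]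
  have hy1 : ∀ z ∈ S, eval z y ≤ 1 := fun z hz => by rw [hye]; linarith [hγ0 z hz]
  have hφe : ∀ z, eval z φ = 1 - eval z y ^ (k + 2) := fun z => by simp [hφ]
  have hφ0 : ∀ z ∈ S, 0 ≤ eval z φ := fun z hz => by
    rw [hφe]; linarith [pow_le_one₀ (n := k + 2) (hy0 z hz) (hy1 z hz)]
  have hφ1 : ∀ z ∈ S, eval z φ ≤ 1 := fun z hz => by
    rw [hφe]; linarith [pow_nonneg (hy0 z hz) (k + 2)]
  have hεφρ : ∀ z ∈ S, ε * eval z φ * eval z ρ ≤ 1 / 512 ∧ 0 ≤ ε * eval z φ * eval z ρ := fun z hz => by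
    have a := hφ0 z hz
    have b := hφ1 z hz
    have c := hρB z hz
    have d : 0 ≤ eval z ρ := by rw [hρe]; positivity
    refine ⟨?_, by positivity⟩
    calc ε * eval z φ * eval z ρ ≤ ε * 1 * B := by gcongr
      _ ≤ 1 / 512 := by linarith
  refine ⟨φ * (1 - C ε * φ * ρ) ^ 2, C (lam ^ 2) * (ψ + gs ^ 2 * (C ε * ρ * (2 - C ε * φ * ρ))),
    C lam * gs * (1 - C ε * φ * ρ) ^ 2, (k + 2 : ℕ) * lam, by positivity, ?_, ?_, ?_, ?_, ?_⟩
  · refine IsSumSq.mul (IsSumSq.mul ?_ ?_) (IsSquare.sq _).isSumSq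
    · have : (C lam : MvPolynomial (Fin n) ℝ) = C (Real.sqrt lam) ^ 2 := by
        rw [← map_pow, Real.sq_sqrt hlpos.le]
      rw [this]; exact (IsSquare.sq _).isSumSq
    · have := geom_sos y (N + 1)
      rw [hgs, hk]
      exact this
  · rw [hφγ, hγ]; ring
  · have e1 : (C ((k + 2 : ℕ) * lam) : MvPolynomial (Fin n) ℝ) = ((k + 2 : ℕ) : MvPolynomial (Fin n) ℝ) * C lam := by
      rw [map_mul, map_natCast]
    have e2 : (C (lam ^ 2) : MvPolynomial (Fin n) ℝ) = C lam ^ 2 := map_pow _ _ _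
    have e3 : ((k + 2 : ℕ) : MvPolynomial (Fin n) ℝ) * γ = φ + γ ^ 2 * ψ := by
      rw [hφγ]; linear_combination γ * hψe
    rw [e1, e2]
    have e4 : ((k + 2 : ℕ) : MvPolynomial (Fin n) ℝ) * C lam * G = φ + γ ^ 2 * ψ := by
      rw [← e3, hγ]; ring
    rw [e4]
    have e5 : φ * φ = (γ * gs) * (γ * gs) := by rw [hφγ]
    have e6 : γ ^ 2 = C lam ^ 2 * G ^ 2 := by rw [hγ]; ring
    linear_combination (C ε * ρ * (2 - C ε * φ * ρ)) * e5 + (ψ + gs ^ 2 * (C ε * ρ * (2 - C ε * φ * ρ))) * e6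
  · intro z hz
    obtain ⟨a1, a2⟩ := hεφρ z hz
    have d : 0 ≤ eval z ρ := by rw [hρe]; positivity
    have p1 : 1 ≤ eval z ψ := by
      simp only [hψ, map_sum, map_pow]
      have : (1:ℝ) = ∑ i ∈ Finset.range 1, eval z y ^ i := by simp
      rw [this]
      exact Finset.single_le_sum (f := fun j => ∑ i ∈ Finset.range j, eval z y ^ i)
        (fun j _ => Finset.sum_nonneg fun i _ => pow_nonneg (hy0 z hz) _) (by simp)
    simp only [map_mul, map_add, map_pow, map_sub, eval_C, map_ofNat]
    have : 0 ≤ 2 - ε * eval z φ * eval z ρ := by linarith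
    have : 0 ≤ eval z gs ^ 2 * (ε * eval z ρ * (2 - ε * eval z φ * eval z ρ)) := by positivity
    have : 0 < eval z ψ + eval z gs ^ 2 * (ε * eval z ρ * (2 - ε * eval z φ * eval z ρ)) := by linarith
    positivity
  · set f := φ * (1 - C ε * φ * ρ) ^ 2 with hf'
    have main : ∀ q ∈ S ×ˢ {v : Fin n → ℝ | ∑ i, v i ^ 2 = 1}, ∑ i, ∑ j, eval q.1 (pderiv i (pderiv j f)) * (q.2 i * q.2 j) < 0 := by
      rintro ⟨z, v⟩ ⟨hz, hv⟩
      simp only [Set.mem_ofPred_eq] at hv hz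
      have hze : (fun i => z i + 0 * v i) = z := by funext i; simp
      have L0 : ∀ p, (lineP z v p).eval 0 = eval z p := fun p => by rw [lineP_eval, hze, aeval_eq_eval]
      have L2 : ∀ p, (Polynomial.derivative (Polynomial.derivative (lineP z v p))).eval 0 = ∑ i, ∑ j, eval z (pderiv i (pderiv j p)) * (v i * v j) :=
        fun p => by rw [line_hess, hze, aeval_eq_eval]
      have L1 : ∀ p, (Polynomial.derivative (lineP z v p)).eval 0 = ∑ i, eval z (pderiv i p) * v i :=
        fun p => by rw [line_grad, hze, aeval_eq_eval]
      have hC : ∀ a : ℝ, lineP z v (C a) = Polynomial.C a := fun a => by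
        rw [← MvPolynomial.algebraMap_eq, AlgHom.commutes]; rfl
      rw [← L2]
      have hfl : lineP z v f = lineP z v φ * (1 - Polynomial.C ε * lineP z v φ * lineP z v ρ) ^ 2 := by
        simp [hf', hC]
      have hφl : lineP z v φ = 1 - (1 - lineP z v γ) ^ (k + 2) := by simp [hφ, hy]
      have hρl : lineP z v ρ = ∑ i, (Polynomial.C (z i) + Polynomial.X * Polynomial.C (v i)) ^ 2 := by
        simp [hρ, lineP]
      rw [hfl, hat_d2]
      have r2 : (Polynomial.derivative (Polynomial.derivative (lineP z v ρ))).eval 0 = 2 := by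
        rw [hρl]
        simp only [Polynomial.derivative_sum, pow_two, Polynomial.derivative_mul, Polynomial.derivative_add, Polynomial.derivative_C, Polynomial.derivative_X,
          Polynomial.eval_finsetSum, Polynomial.eval_add, Polynomial.eval_mul, Polynomial.eval_C, Polynomial.eval_X, Polynomial.derivative_one,
          Polynomial.eval_one, Polynomial.eval_zero, Polynomial.derivative_zero]
        have e2 : (2:ℝ) = 2 * ∑ i, v i ^ 2 := by rw [hv, mul_one]
        rw [e2, Finset.mul_sum]
        exact Finset.sum_congr rfl fun i _ => by ring
      have r1 : (Polynomial.derivative (lineP z v ρ)).eval 0 = 2 * ∑ i, z i * v i := by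
        rw [hρl]
        simp only [Polynomial.derivative_sum, pow_two, Polynomial.derivative_mul, Polynomial.derivative_add, Polynomial.derivative_C, Polynomial.derivative_X,
          Polynomial.eval_finsetSum, Polynomial.eval_add, Polynomial.eval_mul, Polynomial.eval_C, Polynomial.eval_X, Polynomial.derivative_one,
          Polynomial.eval_one, Polynomial.eval_zero, Polynomial.derivative_zero]
        rw [Finset.mul_sum]
        exact Finset.sum_congr rfl fun i _ => by ring
      have r1b : (2 * ∑ i, z i * v i) ^ 2 ≤ 4 * B := by
        have cs := Finset.sum_mul_sq_le_sq_mul_sq Finset.univ z v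
        rw [hv, mul_one, ← hρe] at cs
        have := hρB z hz
        nlinarith
      have f1 : (Polynomial.derivative (lineP z v φ)).eval 0 = ((k:ℝ) + 2) * eval z y ^ (k + 1) * af (z, v) := by
        rw [hφl]
        simp only [Polynomial.derivative_sub, Polynomial.derivative_pow, Polynomial.derivative_one, Polynomial.eval_sub, Polynomial.eval_mul,
          Polynomial.eval_pow, Polynomial.eval_one, L0, L1, Polynomial.eval_C, Polynomial.eval_zero, hye, haf]
        push_cast
        simp
      have f2 : (Polynomial.derivative (Polynomial.derivative (lineP z v φ))).eval 0 =
          ((k:ℝ) + 2) * eval z y ^ (k + 1) * hf (z, v) - (k + 2) * (k + 1) * eval z y ^ k * af (z, v) ^ 2 := by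
        rw [hφl]
        simp only [Polynomial.derivative_sub, Polynomial.derivative_pow, Polynomial.derivative_one, Polynomial.eval_sub, Polynomial.eval_mul, Polynomial.derivative_mul, Polynomial.derivative_C, Polynomial.eval_add,
          Polynomial.eval_pow, Polynomial.eval_one, L0, L1, L2, Polynomial.eval_C, Polynomial.eval_zero, hye, haf, hhf, Polynomial.derivative_zero]
        push_cast
        simp
        ring
      rw [r2, r1, L0, L0]
      have core := hat_core (fv := (Polynomial.derivative (lineP z v φ)).eval 0) (fvv := (Polynomial.derivative (Polynomial.derivative (lineP z v φ))).eval 0)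
        (hφ0 z hz) (hφ1 z hz) (by rw [hρe]; positivity) (hρB z hz) hεpos hεB r1b
      obtain ⟨a1, a2⟩ := hεφρ z hz
      set F := (1 - ε * eval z φ * eval z ρ) * (1 - 3 * ε * eval z φ * eval z ρ) with hF
      have hF' : F = (1 - ε * eval z φ * eval z ρ) * (1 - 3 * (ε * eval z φ * eval z ρ)) := by rw [hF]; ring
      obtain ⟨hF0, hF1⟩ : 1 / 2 ≤ F ∧ F ≤ 1 := by rw [hF']; exact hat_F a2 a1
      have core2 := hat_core2 hF0 hF1 (hy0 z hz) (hy1 z hz) (by positivity) hεB f1 f2 core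
      refine lt_of_le_of_lt core2 ?_
      have hy0' := hy0 z hz
      have hyh' := hyh z hz
      have hy1' := hy1 z hz
      have hmem : (z, v) ∈ S ×ˢ {v : Fin n → ℝ | ∑ i, v i ^ 2 = 1} := ⟨hz, hv⟩
      have hsepz := hsep _ hmem
      simp only at hsepz
      have hK1z := (le_abs_self _).trans ((hK1 _ hmem).trans (le_max_left K1 1))
      have hk0 : (0:ℝ) ≤ k := Nat.cast_nonneg k
      set hh := hf (z, v)
      set aa := af (z, v)
      set yy := eval z y
      have hFy0 : 0 ≤ F * yy := by positivity
      have hFy1 : F * yy ≤ 1 := by nlinarith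
      have hFy4 : 1 / 4 ≤ F * yy := by nlinarith
      by_cases hc : eval z γ < η
      · have h1 : hh ≤ -(δ/2) + K * aa ^ 2 := by nlinarith
        have h2 : F * yy * hh ≤ -(δ/8) + K * aa ^ 2 := by
          calc F * yy * hh ≤ F * yy * (-(δ/2) + K * aa ^ 2) := by gcongr
            _ = -(δ/2) * (F * yy) + (F * yy) * (K * aa ^ 2) := by ring
            _ ≤ -(δ/8) + 1 * (K * aa ^ 2) := by
              have : 0 ≤ K * aa ^ 2 := by positivity
              nlinarith
            _ = _ := by ring
        have h3 : F * yy * hh - (k + 1) / 4 * aa ^ 2 < 0 := by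
          have : K * aa ^ 2 ≤ ((k:ℝ) + 1) / 4 * aa ^ 2 := by gcongr
          linarith
        have h4 : 0 < ((k:ℝ) + 2) * yy ^ k := by positivity
        have h5 := mul_neg_of_pos_of_neg h4 h3
        have : 0 ≤ ε * eval z φ ^ 2 := by positivity
        linarith
      · push Not at hc
        have hyη : yy ≤ 1 - η := by have := hye z; linarith
        have hr0 : 0 ≤ 1 - η := by linarith
        have h1 : F * yy * hh - (k + 1) / 4 * aa ^ 2 ≤ max K1 1 := by
          have : 0 ≤ ((k:ℝ) + 1) / 4 * aa ^ 2 := by positivity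
          have h2 : F * yy * hh ≤ F * yy * max K1 1 := by gcongr
          have h3 : F * yy * max K1 1 ≤ 1 * max K1 1 := by gcongr
          linarith
        have h2 : ((k:ℝ) + 2) * yy ^ k * (F * yy * hh - (k + 1) / 4 * aa ^ 2) ≤ ((k:ℝ) + 2) * (1 - η) ^ k * max K1 1 := by
          calc ((k:ℝ) + 2) * yy ^ k * (F * yy * hh - (k + 1) / 4 * aa ^ 2) ≤ ((k:ℝ) + 2) * yy ^ k * max K1 1 := by gcongr
            _ ≤ ((k:ℝ) + 2) * (1 - η) ^ k * max K1 1 := by gcongr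
        have h3 : 1 / 2 ≤ eval z φ := by
          rw [hφe]
          have : yy ^ (k + 2) ≤ yy ^ k := pow_le_pow_of_le_one hy0' hy1' (by omega)
          have : yy ^ k ≤ (1 - η) ^ k := by gcongr
          linarith
        have h4 : (1/4 : ℝ) ≤ eval z φ ^ 2 := by nlinarith
        nlinarith
    obtain ⟨δ', hδ', _, _, h'⟩ := cpt_sep hKc (chf fun i j => pderiv i (pderiv j f)) (continuous_const (y := (0:ℝ))) (fun _ _ => le_rfl) (fun q hq _ => main q hq)
    refine ⟨δ' / 3, by positivity, fun z hz v => ?_⟩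
    rw [show 3 * (δ' / 3) = δ' by ring]
    refine sph_scale _ (fun v hv => ?_) v
    have := h' (z, v) ⟨hz, hv⟩
    simp only [map_neg, neg_mul, Finset.sum_neg_distrib]
    simp only [mul_zero, add_zero] at this
    linarith

end hat


theorem isSumSq_map {R S : Type*} [CommRing R] [CommRing S] (f : R →+* S) {s : R} (hs : IsSumSq s) : IsSumSq (f s) := by
  induction hs with
  | zero => simpa using IsSumSq.zero
  | sq_add a hs ih =>
    rw [map_add, map_mul]
    exact IsSumSq.sq_add (f a) ih

section sqc
variable {n m : ℕ} {A : Type*} [CommRing A] [Algebra ℝ A]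
variable {g : Fin m → MvPolynomial (Fin n) ℝ} {Q : Set A} {x u : Fin n → A}

theorem zPt_line (x u : Fin n → A) (s : ℝ) (p : MvPolynomial (Fin n) ℝ) :
    (lineP u (fun i => x i - u i) p).eval (algebraMap ℝ A s) = aeval (zPt x u s) p := lineP_eval _ _ _ _

theorem zPt_hess (x u : Fin n → A) (s : ℝ) (p : MvPolynomial (Fin n) ℝ) :
    -(Polynomial.derivative (Polynomial.derivative (lineP u (fun i => x i - u i) p))).eval (algebraMap ℝ A s) =
      ∑ i, ∑ j, aeval (zPt x u s) (-pderiv i (pderiv j p)) * ((x i - u i) * (x j - u j)) := by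
  rw [line_hess]
  simp only [map_neg, neg_mul, Finset.sum_neg_distrib]
  rfl

/-- concavity along the segment in the quadratic module gives the tangent inequality -/
theorem tangent (hQ : IsQMod Q) (f : MvPolynomial (Fin n) ℝ)
    (hx : aeval x f ∈ Q)
    (hs : ∀ s : ℝ, 0 ≤ s → s ≤ 1 → ∑ i, ∑ j, aeval (zPt x u s) (-pderiv i (pderiv j f)) * ((x i - u i) * (x j - u j)) ∈ Q) :
    ∑ a, aeval u (pderiv a f) * (x a - u a) + aeval u f ∈ Q := by
  set T := lineP u (fun i => x i - u i) f with hT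
  obtain ⟨R⟩ := exists_QRule T.natDegree
  have := R.taylor T le_rfl
  have e0 : T.eval 0 = aeval u f := by rw [hT, lineP_eval]; simp
  have e1 : T.eval 1 = aeval x f := by rw [hT, lineP_eval]; simp
  have e2 : (Polynomial.derivative T).eval 0 = ∑ a, aeval u (pderiv a f) * (x a - u a) := by
    rw [hT, line_grad]; simp
  rw [e0, e1, e2] at this
  have h2 : ∑ a, aeval u (pderiv a f) * (x a - u a) + aeval u f = aeval x f + (∑ a, aeval u (pderiv a f) * (x a - u a) + aeval u f - aeval x f) := by ring
  rw [h2, ← this]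
  refine hQ.add hx (hQ.sum _ _ fun j _ => ?_)
  refine SB.cst hQ (R.ω0 j) _ ?_
  rw [← map_one (algebraMap ℝ A), ← map_sub]
  refine SB.cst hQ (sub_nonneg.2 (R.r1 j)) _ ?_
  rw [zPt_hess]
  exact hs _ (R.r0 j) (R.r1 j)

/-- concavity along the segment in the quadratic module gives the chord inequality -/
theorem chordQ (hQ : IsQMod Q) (f : MvPolynomial (Fin n) ℝ)
    (hx : aeval x f ∈ Q) (hu : aeval u f ∈ Q)
    (hs : ∀ s : ℝ, 0 ≤ s → s ≤ 1 → ∑ i, ∑ j, aeval (zPt x u s) (-pderiv i (pderiv j f)) * ((x i - u i) * (x j - u j)) ∈ Q)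
    {t : ℝ} (h0 : 0 ≤ t) (h1 : t ≤ 1) : aeval (zPt x u t) f ∈ Q := by
  set T := lineP u (fun i => x i - u i) f with hT
  obtain ⟨R⟩ := exists_QRule T.natDegree
  have := R.chord T le_rfl (algebraMap ℝ A t)
  have e0 : T.eval 0 = aeval u f := by rw [hT, lineP_eval]; simp
  have e1 : T.eval 1 = aeval x f := by rw [hT, lineP_eval]; simp
  have e2 : T.eval (algebraMap ℝ A t) = aeval (zPt x u t) f := zPt_line _ _ _ _
  rw [e0, e1, e2] at this
  rw [this]
  have h1' : 0 ≤ 1 - t := by linarith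
  simp only [← map_one (algebraMap ℝ A), ← map_sub, ← map_mul]
  refine hQ.add (hQ.add (SB.cst hQ h1' _ hu) (SB.cst hQ h0 _ hx)) (SB.cst hQ (by positivity) _ (hQ.sum _ _ fun j _ => ?_))
  have r0 := R.r0 j
  have r1 := R.r1 j
  have a1 : t * R.r j ≤ 1 := by nlinarith
  have a2 : (1 - t) * R.r j ≤ 1 := by nlinarith
  have a3 : 0 ≤ (1 - t) * R.r j := by positivity
  refine SB.cst hQ (mul_nonneg (R.ω0 j) r0) _ (hQ.add (SB.cst hQ h0 _ ?_) (SB.cst hQ h1' _ ?_))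
  · rw [zPt_hess]; exact hs _ (by positivity) a1
  · rw [zPt_hess]; exact hs _ (by linarith) (by linarith)

theorem hat_zero {f χ G : MvPolynomial (Fin n) ℝ} {κ : ℝ} (h : C κ * G - f = G ^ 2 * χ) {z : Fin n → ℝ} (hz : eval z G = 0) :
    eval z f = 0 ∧ ∀ a, eval z (pderiv a f) = κ * eval z (pderiv a G) := by
  have hf : f = C κ * G - G ^ 2 * χ := by linear_combination -h
  constructor
  · rw [hf]; simp [hz]
  · intro a
    rw [hf]
    simp [pderiv_mul, pow_two, hz]

/-- the conclusion wanted for each constraint -/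
def TangentOK (Q : Set A) (x u : Fin n → A) (G : MvPolynomial (Fin n) ℝ) : Prop :=
  ∃ (f : MvPolynomial (Fin n) ℝ) (κ : ℝ), 0 < κ ∧
    (∑ a, aeval u (pderiv a f) * (x a - u a) + aeval u f ∈ Q) ∧
    ∀ z : Fin n → ℝ, eval z G = 0 → eval z f = 0 ∧ ∀ a, eval z (pderiv a f) = κ * eval z (pderiv a G)

theorem Setup.sqc (h : Setup g Q x u) (l : Fin m) (hq : ∀ z ∈ SolSet g, eval z (g l) = 0 → StrictlyQuasiconcaveAt (g l) z) :
    TangentOK Q x u (g l) ∧ ∀ s : ℝ, 0 ≤ s → s ≤ 1 → ∃ c : ℝ, 0 < c ∧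
      aeval (zPt x u s) (g l) - algebraMap ℝ A c * aeval (zPt x u s) (g l) ^ 2 ∈ Q := by
  obtain ⟨f, χ, σ, κ, hκ, hσ, hf, hχ, hχ0, δ, hδ, hH⟩ := hat_exists h.cpt (g l) (fun z hz => hz l) hq
  have hsym : ∀ i j, -pderiv i (pderiv j f) = -pderiv j (pderiv i f) := fun i j => by rw [pderiv_comm']
  have hloc := fun s h0 h1 => h.localPsd (s := s) (fun i j => -pderiv i (pderiv j f)) hsym hδ hH h0 h1
  have hfQ : ∀ z : Fin n → A, aeval z (g l) ∈ Q → aeval z f ∈ Q := fun z hz => by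
    rw [hf, map_mul]; exact h.qm.sumsq (isSumSq_map (aeval z).toRingHom hσ) hz
  refine ⟨⟨f, κ, hκ, tangent h.qm f (hfQ x (h.hx l)) hloc, fun z hz => hat_zero hχ hz⟩, fun s h0 h1 => ?_⟩
  have hfz := chordQ h.qm f (hfQ x (h.hx l)) (hfQ u (h.hu l)) hloc h0 h1
  obtain ⟨c0, hc0, hc⟩ : ∃ c > 0, ∀ z ∈ SolSet g, c < eval z χ := by
    obtain ⟨d, hd, _, _, h'⟩ := cpt_sep h.cpt (f := fun z => -eval z χ) (MvPolynomial.continuous_eval χ).neg (continuous_const (y := (0:ℝ))) (fun _ _ => le_rfl) (fun q hq _ => by simpa using hχ0 q hq)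
    exact ⟨d / 2, by positivity, fun z hz => by have := h' z hz; simp at this; linarith⟩
  have h3 : aeval (zPt x u s) (χ - C c0) ∈ Q := h.putz h0 h1 fun z hz => by
    have := hc z hz
    simp; linarith
  have h4 := h.qm.add hfz (h.qm.sqm (aeval (zPt x u s) (g l)) h3)
  refine ⟨κ⁻¹ * c0, by positivity, ?_⟩
  have h5 := SB.cst h.qm (inv_nonneg.2 hκ.le) _ h4
  convert h5 using 1
  have e := congrArg (aeval (zPt x u s)) hχ
  simp only [map_sub, map_mul, map_pow] at e
  rw [map_sub, ← MvPolynomial.algebraMap_eq, AlgHom.commutes, map_mul]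
  rw [← MvPolynomial.algebraMap_eq, AlgHom.commutes] at e
  have e2 : algebraMap ℝ A κ⁻¹ * algebraMap ℝ A κ = 1 := by rw [← map_mul, inv_mul_cancel₀ hκ.ne', map_one]
  linear_combination algebraMap ℝ A κ⁻¹ * e - aeval (zPt x u s) (g l) * e2

/-- strict descent direction, strictly quasiconcave case -/
theorem sqc_grad {S : Set (Fin n → ℝ)} (hS : IsCompact S) (hc : Convex ℝ S) (G : MvPolynomial (Fin n) ℝ) (hG : ∀ z ∈ S, 0 ≤ eval z G)
    (hq : ∀ z ∈ S, eval z G = 0 → StrictlyQuasiconcaveAt G z) {y z : Fin n → ℝ} (hy : y ∈ S) (hz : z ∈ S) (hyG : 0 < eval y G) (hzG : eval z G = 0) :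
    0 < ∑ a, eval z (pderiv a G) * (y a - z a) := by
  obtain ⟨f, χ, σ, κ, hκ, hσ, hf, hχ, hχ0, δ, hδ, hH⟩ := hat_exists hS G hG hq
  obtain ⟨z1, z2⟩ := hat_zero hχ hzG
  set T := lineP z (fun i => y i - z i) f with hT
  obtain ⟨R⟩ := exists_QRule (T.natDegree + 1)
  have := R.taylor T (by omega)
  have e0 : T.eval 0 = 0 := by rw [hT, lineP_eval]; simpa [aeval_eq_eval] using z1
  have e1 : T.eval 1 = eval y f := by rw [hT, lineP_eval]; simp [aeval_eq_eval]
  have e2 : (Polynomial.derivative T).eval 0 = κ * ∑ a, eval z (pderiv a G) * (y a - z a) := by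
    rw [hT, line_grad, Finset.mul_sum]; simp [aeval_eq_eval, z2, mul_assoc]
  rw [e0, e1, e2] at this
  have hfy : 0 ≤ eval y f := by
    rw [hf, map_mul]
    exact mul_nonneg ((isSumSq_map (eval y) hσ).nonneg) hyG.le
  have hne : 0 < ∑ i, (y i - z i) ^ 2 := by
    rcases (Finset.sum_nonneg fun i (_ : i ∈ Finset.univ) => sq_nonneg (y i - z i)).eq_or_lt with h | h
    · exfalso
      have h4 : y = z := by
        funext i
        have := (Finset.sum_eq_zero_iff_of_nonneg (fun i _ => sq_nonneg _)).1 h.symm i (Finset.mem_univ _)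
        have := pow_eq_zero_iff (two_ne_zero) |>.1 this
        linarith
      rw [h4] at hyG; linarith
    · exact h
  have hlow : ∑ j, R.ω j * ((1 - R.r j) * (3 * δ * ∑ i, (y i - z i) ^ 2)) ≤ ∑ j, (algebraMap ℝ ℝ) (R.ω j) * ((1 - (algebraMap ℝ ℝ) (R.r j)) * -(Polynomial.derivative (Polynomial.derivative T)).eval ((algebraMap ℝ ℝ) (R.r j))) := by
    refine Finset.sum_le_sum fun j _ => ?_
    rw [zPt_hess]
    simp only [Algebra.algebraMap_self, RingHom.id_apply]
    have w0 := R.ω0 j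
    have r1 := sub_nonneg.2 (R.r1 j)
    have hzm : zPt y z (R.r j) ∈ S := by
      have := hc hz hy r1 (R.r0 j) (by ring)
      convert this using 1
      funext i; simp [zPt]; ring
    gcongr
    simpa [aeval_eq_eval] using hH _ hzm (fun i => y i - z i)
  have m0 := R.mom 0 (by omega)
  have m1 := R.mom 1 (by omega)
  have hsum : ∑ j, R.ω j * ((1 - R.r j) * (3 * δ * ∑ i, (y i - z i) ^ 2)) = (1 / 2) * (3 * δ * ∑ i, (y i - z i) ^ 2) := by
    have : ∀ j, R.ω j * ((1 - R.r j) * (3 * δ * ∑ i, (y i - z i) ^ 2)) = (R.ω j * R.r j ^ 0 - R.ω j * R.r j ^ 1) * (3 * δ * ∑ i, (y i - z i) ^ 2) := fun j => by ring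
    simp only [this, ← Finset.sum_mul, Finset.sum_sub_distrib, m0, m1]
    norm_num
  rw [this, hsum] at hlow
  have : 0 < (1 / 2) * (3 * δ * ∑ i, (y i - z i) ^ 2) := by positivity
  have : 0 < κ * ∑ a, eval z (pderiv a G) * (y a - z a) := by linarith
  exact (mul_pos_iff_of_pos_left hκ).1 this

end sqc


section absstep
variable {A : Type*} [CommRing A] [Algebra ℝ A] {Q : Set A}

theorem arch_pos (hQ : IsQMod Q) (harch : ∀ a, ∃ N : ℝ, algebraMap ℝ A N - a ∈ Q) (a : A) :
    ∃ N : ℝ, 1 ≤ N ∧ algebraMap ℝ A N - a ∈ Q := by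
  obtain ⟨N, hN⟩ := harch a
  refine ⟨max N 1, le_max_right _ _, ?_⟩
  have := hQ.add hN (SB.mem hQ (SB.cst hQ (sub_nonneg.2 (le_max_left N 1))))
  convert this using 1
  rw [map_sub]; ring

theorem cauchyQ (hQ : IsQMod Q) (harch : ∀ a, ∃ N : ℝ, algebraMap ℝ A N - a ∈ Q) {ι : Type*} (s : Finset ι)
    (α : ι → ℝ) (hα : ∀ i, 0 ≤ α i) (c d : ι → A) :
    ∃ C : ℝ, 0 < C ∧ algebraMap ℝ A C * ∑ i ∈ s, algebraMap ℝ A (α i) * c i ^ 2 -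
      (∑ i ∈ s, algebraMap ℝ A (α i) * (c i * d i)) ^ 2 ∈ Q := by
  classical
  induction s using Finset.induction_on with
  | empty => exact ⟨1, one_pos, by simpa using hQ.zero⟩
  | insert i s hi ih =>
    obtain ⟨C, hC, h⟩ := ih
    obtain ⟨N, hN1, hN⟩ := arch_pos hQ harch (d i ^ 2)
    have hai := hα i
    refine ⟨2 * C + 2 * α i * N, by positivity, ?_⟩
    rw [Finset.sum_insert hi, Finset.sum_insert hi]
    set S := ∑ i ∈ s, algebraMap ℝ A (α i) * (c i * d i)
    set W := ∑ i ∈ s, algebraMap ℝ A (α i) * c i ^ 2 with hW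
    have hWQ : W ∈ Q := SB.mem hQ (SB.sum hQ _ _ fun i _ => (SB.cst hQ (hα i)).mul (SB.sq hQ _))
    have h1 := SB.cst hQ (c := 2) (by norm_num) _ h
    have h2 := SB.cst hQ (c := 2) (by norm_num) _ (hQ.sqm (algebraMap ℝ A (α i) * c i) hN)
    have h3 := hQ.sq (S - algebraMap ℝ A (α i) * (c i * d i))
    have h4 := SB.cst hQ (c := 2 * α i * N) (by positivity) _ hWQ
    have h5 := SB.cst hQ (c := 2 * C * α i) (by positivity) _ (hQ.sq (c i))
    have := hQ.add (hQ.add (hQ.add (hQ.add h1 h2) h3) h4) h5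
    convert this using 1
    simp only [map_add, map_mul]
    have : algebraMap ℝ A 2 = 2 := map_ofNat _ 2
    rw [this]
    ring

theorem mem_sub_sq (hQ : IsQMod Q) (harch : ∀ a, ∃ N : ℝ, algebraMap ℝ A N - a ∈ Q) {a : A} (ha : a ∈ Q) :
    ∃ c : ℝ, 0 < c ∧ a - algebraMap ℝ A c * a ^ 2 ∈ Q := by
  obtain ⟨N, hN1, hN⟩ := arch_pos hQ harch a
  refine ⟨N⁻¹, by positivity, ?_⟩
  have h1 := hQ.sqm (1 - algebraMap ℝ A N⁻¹ * a) ha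
  have h2 := hQ.sqm (algebraMap ℝ A N⁻¹ * a) hN
  convert hQ.add h1 h2 using 1
  have e : algebraMap ℝ A N⁻¹ * algebraMap ℝ A N = 1 := by rw [← map_mul, inv_mul_cancel₀ (by positivity), map_one]
  linear_combination (-algebraMap ℝ A N⁻¹ * a ^ 2) * e

theorem sub_sq_mono (hQ : IsQMod Q) {a r : A} {c c' : ℝ} (hc : c' ≤ c) (h : a - algebraMap ℝ A c * r ^ 2 ∈ Q) :
    a - algebraMap ℝ A c' * r ^ 2 ∈ Q := by
  convert hQ.add h (SB.cst hQ (sub_nonneg.2 hc) _ (hQ.sq r)) using 1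
  rw [map_sub]; ring

/-- the key estimate on the nodes -/
theorem key_abs (hQ : IsQMod Q) (harch : ∀ a, ∃ N : ℝ, algebraMap ℝ A N - a ∈ Q) {D : ℕ} (R : QRule D)
    {ι : Type*} [Fintype ι] [DecidableEq ι] (B1 : Finset ι) (T y v Yp ρ : ι → Polynomial A) (κ : ι → ℝ) (η : Polynomial A)
    (hη : η = ∑ b, T b * v b * y b)
    (hη' : Polynomial.derivative η = ∑ b, ((ρ b - Polynomial.C (algebraMap ℝ A (κ b)) * T b) * y b ^ 2 + 2 * T b * Yp b * y b - T b * y b ^ 2))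
    (hdeg : (Polynomial.X * (1 - Polynomial.X) * η).natDegree ≤ D + 1)
    (hρ0 : ∀ b ∉ B1, ρ b = 0) {c : ℝ} (hc : 0 < c)
    (hρ1 : ∀ b ∈ B1, ∀ s : ℝ, 0 ≤ s → s ≤ 1 → (ρ b).eval (algebraMap ℝ A s) - algebraMap ℝ A c ∈ Q) :
    ∃ C : ℝ, 0 < C ∧ algebraMap ℝ A C * ∑ b, NF R.ω R.r (T b * y b) -
      (∑ b ∈ B1, NF (fun j => R.ω j * (R.r j * (1 - R.r j))) R.r (y b)) ^ 2 ∈ Q := by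
  set N := ∑ b ∈ B1, NF (fun j => R.ω j * (R.r j * (1 - R.r j))) R.r (y b) with hN
  have hw : ∀ j, 0 ≤ R.ω j * (R.r j * (1 - R.r j)) := fun j =>
    mul_nonneg (R.ω0 j) (mul_nonneg (R.r0 j) (sub_nonneg.2 (R.r1 j)))
  have hNSB : SB Q N := SB.sum hQ _ _ fun b _ => NF_SB hQ hw _ _
  set k := algebraMap ℝ A with hk
  let L : A := ∑ p : ι × Fin R.k, k (R.ω p.2 * (R.r p.2 * (1 - R.r p.2))) * ((ρ p.1).eval (k (R.r p.2)) * ((y p.1).eval (k (R.r p.2))) ^ 2)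
  let d : ι × Fin R.k → A := fun p =>
    (2 * k (R.r p.2) - 1) * (v p.1).eval (k (R.r p.2)) - k (R.r p.2) * (1 - k (R.r p.2)) * (2 * (Yp p.1).eval (k (R.r p.2)) - (y p.1).eval (k (R.r p.2))) +
      k (κ p.1) * (k (R.r p.2) * (1 - k (R.r p.2))) * (y p.1).eval (k (R.r p.2))
  have hL : L = ∑ p : ι × Fin R.k, k (R.ω p.2) * ((T p.1 * y p.1).eval (k (R.r p.2)) * d p) := by
    have hf := R.ftc (Polynomial.X * (1 - Polynomial.X) * η) hdeg
    have hz : (Polynomial.X * (1 - Polynomial.X) * η).eval 1 - (Polynomial.X * (1 - Polynomial.X) * η).eval 0 = 0 := by simp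
    rw [hz, ← hk] at hf
    rw [← sub_eq_zero, ← hf, ← Finset.sum_sub_distrib, Fintype.sum_prod_type, Finset.sum_comm]
    refine Finset.sum_congr rfl fun j _ => ?_
    simp only [Polynomial.derivative_mul, Polynomial.derivative_sub, Polynomial.derivative_X, Polynomial.derivative_one, hη']
    rw [hη]
    simp only [Polynomial.eval_add, Polynomial.eval_mul, Polynomial.eval_sub, Polynomial.eval_X, Polynomial.eval_one, Polynomial.eval_zero,
      Polynomial.eval_finsetSum, Finset.mul_sum]
    rw [← Finset.sum_add_distrib, Finset.mul_sum]
    refine Finset.sum_congr rfl fun b _ => ?_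
    simp only [Polynomial.eval_add, Polynomial.eval_mul, Polynomial.eval_sub, Polynomial.eval_pow, Polynomial.eval_C, Polynomial.eval_ofNat, d, map_mul, map_sub, map_one]
    ring
  have hLc : L - k c * N ∈ Q := by
    have : L - k c * N = ∑ b ∈ B1, ∑ j, k (R.ω j * (R.r j * (1 - R.r j))) * (((y b).eval (k (R.r j))) ^ 2 * ((ρ b).eval (k (R.r j)) - k c)) := by
      have e1 : L = ∑ b ∈ B1, ∑ j, k (R.ω j * (R.r j * (1 - R.r j))) * ((ρ b).eval (k (R.r j)) * ((y b).eval (k (R.r j))) ^ 2) := by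
        simp only [L]
        rw [Fintype.sum_prod_type]
        refine (Finset.sum_subset (Finset.subset_univ B1) fun b _ hb => ?_).symm
        refine Finset.sum_eq_zero fun j _ => ?_
        simp [hρ0 b hb]
      rw [e1, hN, Finset.mul_sum, ← Finset.sum_sub_distrib]
      refine Finset.sum_congr rfl fun b _ => ?_
      rw [NF, Finset.mul_sum, ← Finset.sum_sub_distrib]
      refine Finset.sum_congr rfl fun j _ => ?_
      ring
    rw [this]
    refine hQ.sum _ _ fun b hb => hQ.sum _ _ fun j _ => SB.cst hQ (hw j) _ (hQ.sqm _ (hρ1 b hb _ (R.r0 j) (R.r1 j)))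
  obtain ⟨C, hC, h⟩ := cauchyQ hQ harch (Finset.univ : Finset (ι × Fin R.k)) (fun p => R.ω p.2) (fun p => R.ω0 _)
    (fun p => (T p.1 * y p.1).eval (k (R.r p.2))) d
  rw [← hL] at h
  have hΓ : ∑ p : ι × Fin R.k, k (R.ω p.2) * (T p.1 * y p.1).eval (k (R.r p.2)) ^ 2 = ∑ b, NF R.ω R.r (T b * y b) := by
    rw [Fintype.sum_prod_type]; rfl
  rw [hΓ] at h
  refine ⟨(c ^ 2)⁻¹ * C, by positivity, ?_⟩
  have h2 := SB.cst hQ (c := 2 * c) (by positivity) _ (hNSB _ hLc)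
  have h3 := SB.cst hQ (c := (c ^ 2)⁻¹) (by positivity) _ (hQ.add (hQ.add h (hQ.sq (L - k c * N))) h2)
  convert h3 using 1
  have e : k (c ^ 2)⁻¹ * k c ^ 2 = 1 := by rw [← map_pow, ← map_mul, inv_mul_cancel₀ (by positivity), map_one]
  have e2 : k 2 = 2 := map_ofNat _ 2
  simp only [← hk, map_mul, e2]
  linear_combination (N ^ 2) * e
end absstep


section absstep2
variable {A : Type*} [CommRing A] [Algebra ℝ A] {Q : Set A}

theorem exists_common_lb {ι : Type*} [Finite ι] (P : ι → ℝ → Prop) (hP : ∀ i, ∃ c : ℝ, 0 < c ∧ P i c)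
    (hmono : ∀ i c c', c' ≤ c → P i c → P i c') : ∃ c : ℝ, 0 < c ∧ ∀ i, P i c := by
  classical
  haveI := Fintype.ofFinite ι
  choose c hc h using hP
  rcases isEmpty_or_nonempty ι with he | he
  · exact ⟨1, one_pos, fun i => he.elim i⟩
  obtain ⟨i0, hi0⟩ := Finite.exists_min c
  exact ⟨c i0, hc i0, fun i => hmono i _ _ (hi0 i) (h i)⟩

set_option maxHeartbeats 1000000 in
/-- one step of the bootstrap -/
theorem step_abs (hQ : IsQMod Q) (harch : ∀ a, ∃ N : ℝ, algebraMap ℝ A N - a ∈ Q) {D E : ℕ} (R : QRule D)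
    (hE : 2 * E + 2 ≤ D)
    {ι : Type*} [Fintype ι] [DecidableEq ι] (B1 : Finset ι) (T y : ι → Polynomial A) (F : Polynomial A)
    (hF : F.natDegree ≤ D) (hFd : -Polynomial.derivative (Polynomial.derivative F) = ∑ b, T b * y b ^ 2)
    (hy : ∀ b, (y b).natDegree < E) (hTy : ∀ b, (T b * y b).natDegree < E)
    (hF0 : F.eval 0 ∈ Q) (hF1 : F.eval 1 ∈ Q) (N : A)
    (hN : N = ∑ b ∈ B1, NF (fun j => R.ω j * (R.r j * (1 - R.r j))) R.r (y b))
    (hkey : ∃ C : ℝ, 0 < C ∧ algebraMap ℝ A C * ∑ b, NF R.ω R.r (T b * y b) - N ^ 2 ∈ Q)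
    (e : A) (he : SB Q e)
    (h0 : ∀ b ∉ B1, ∀ s : ℝ, 0 ≤ s → s ≤ 1 → ∃ c : ℝ, 0 < c ∧
      (T b).eval (algebraMap ℝ A s) - algebraMap ℝ A c * (T b).eval (algebraMap ℝ A s) ^ 2 ∈ Q)
    (h1 : ∀ b ∈ B1, ∀ s : ℝ, 0 ≤ s → s ≤ 1 → ∃ c : ℝ, 0 < c ∧ ∀ ε : ℝ, 0 < ε →
      (T b).eval (algebraMap ℝ A s) - algebraMap ℝ A c * (T b).eval (algebraMap ℝ A s) ^ 2 + algebraMap ℝ A ε * e ∈ Q)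
    {t : ℝ} (ht0 : 0 ≤ t) (ht1 : t ≤ 1) :
    ∃ c : ℝ, 0 < c ∧ ∀ ε : ℝ, 0 < ε →
      F.eval (algebraMap ℝ A t) - algebraMap ℝ A c * F.eval (algebraMap ℝ A t) ^ 2 -
        algebraMap ℝ A (c * (t * (1 - t))) * N ^ 2 + algebraMap ℝ A (ε * (t * (1 - t))) * (N * e) ∈ Q := by
  have h1t : 0 ≤ 1 - t := by linarith
  have hα : ∀ p, 0 ≤ chα R t p := fun p => by
    have := R.ω0 p.1; have := R.r0 p.1
    unfold chα; split_ifs <;> positivity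
  have hρ : ∀ p, 0 ≤ chρ R t p ∧ chρ R t p ≤ 1 := fun p => by
    have r0 := R.r0 p.1; have r1 := R.r1 p.1
    unfold chρ; split_ifs
    · exact ⟨by positivity, by nlinarith⟩
    · have a3 : 0 ≤ (1 - t) * R.r p.1 := by positivity
      exact ⟨by nlinarith, by linarith⟩
  have hw : ∀ j, 0 ≤ R.ω j * (R.r j * (1 - R.r j)) := fun j =>
    mul_nonneg (R.ω0 j) (mul_nonneg (R.r0 j) (sub_nonneg.2 (R.r1 j)))
  set k := algebraMap ℝ A with hk
  have hNSB : SB Q N := hN ▸ SB.sum hQ _ _ fun b _ => NF_SB hQ hw _ _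
  -- the chord remainder
  let G : A := ∑ p : ι × (Fin R.k × Bool), k (chα R t p.2) * ((T p.1 * y p.1).eval (k (chρ R t p.2)) * (y p.1).eval (k (chρ R t p.2)))
  let W : A := ∑ b, NF (chα R t) (chρ R t) (T b * y b)
  have hWe : W = ∑ p : ι × (Fin R.k × Bool), k (chα R t p.2) * (T p.1 * y p.1).eval (k (chρ R t p.2)) ^ 2 := by
    rw [Fintype.sum_prod_type]; rfl
  have hWQ : W ∈ Q := SB.mem hQ (SB.sum hQ _ _ fun b _ => NF_SB hQ hα _ _)
  have hchord : F.eval (k t) = (1 - k t) * F.eval 0 + k t * F.eval 1 + k t * (1 - k t) * G := by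
    rw [R.chord F hF (k t)]
    congr 2
    simp only [← Polynomial.eval_neg, hFd, G]
    rw [Fintype.sum_prod_type, Finset.sum_comm, Fintype.sum_prod_type]
    refine Finset.sum_congr rfl fun j _ => ?_
    simp only [Fintype.sum_bool, chα, chρ, if_true, Bool.false_eq_true, if_false, Polynomial.eval_finsetSum, Polynomial.eval_mul, Polynomial.eval_pow,
      map_mul, map_sub, map_one, ← hk]
    rw [Finset.mul_sum, Finset.mul_sum, ← Finset.sum_add_distrib, Finset.mul_sum, ← Finset.sum_add_distrib]
    refine Finset.sum_congr rfl fun b _ => ?_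
    ring
  -- bounds
  obtain ⟨C4, hC4, hG2⟩ := cauchyQ hQ harch (Finset.univ : Finset (ι × (Fin R.k × Bool))) (fun p => chα R t p.2) (fun p => hα _)
    (fun p => (T p.1 * y p.1).eval (k (chρ R t p.2))) (fun p => (y p.1).eval (k (chρ R t p.2)))
  rw [← hk, ← hWe] at hG2
  replace hG2 : k C4 * W - G ^ 2 ∈ Q := hG2
  obtain ⟨C1, hC1, hcmp1⟩ := form_cmp hQ (chα R t) (chρ R t) (fun j => R.ω j * (R.r j * (1 - R.r j))) R.r E
    (fun Y hY hY0 => R.psi_pos hE Y hY hY0)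
  obtain ⟨C3, hC3, hcmp3⟩ := form_cmp hQ R.ω R.r (chα R t) (chρ R t) E
    (fun Y hY hY0 => R.ch_pos hE ht0 ht1 Y hY hY0)
  obtain ⟨C2, hC2, hN2⟩ := hkey
  have hN2W : k (C2 * C3) * W - N ^ 2 ∈ Q := by
    have h3 : k C3 * W - ∑ b, NF R.ω R.r (T b * y b) ∈ Q := by
      simp only [W]
      rw [Finset.mul_sum, ← Finset.sum_sub_distrib]
      exact hQ.sum _ _ fun b _ => SB.mem hQ (hcmp3 _ (hTy b))
    convert hQ.add (SB.cst hQ hC2.le _ h3) hN2 using 1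
    rw [map_mul]; ring
  have hNe : k C1 * (N * e) - (∑ b ∈ B1, NF (chα R t) (chρ R t) (y b)) * e ∈ Q := by
    have : SB Q (k C1 * N - ∑ b ∈ B1, NF (chα R t) (chρ R t) (y b)) := by
      rw [hN, Finset.mul_sum, ← Finset.sum_sub_distrib]
      exact SB.sum hQ _ _ fun b _ => hcmp1 _ (hy b)
    convert this.mul he |>.mem hQ using 1
    ring
  -- common constant
  obtain ⟨c, hc, hcQ⟩ : ∃ c : ℝ, 0 < c ∧ ∀ p : ι × (Fin R.k × Bool), ∀ ε : ℝ, 0 < ε →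
      (T p.1).eval (k (chρ R t p.2)) - k c * (T p.1).eval (k (chρ R t p.2)) ^ 2 + (if p.1 ∈ B1 then k ε * e else 0) ∈ Q := by
    refine exists_common_lb (fun (p : ι × (Fin R.k × Bool)) (c : ℝ) => ∀ ε : ℝ, 0 < ε →
      (T p.1).eval (k (chρ R t p.2)) - k c * (T p.1).eval (k (chρ R t p.2)) ^ 2 + (if p.1 ∈ B1 then k ε * e else 0) ∈ Q) ?_ ?_
    · intro p
      by_cases hp : p.1 ∈ B1
      · simpa [hp] using h1 p.1 hp _ (hρ p.2).1 (hρ p.2).2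
      · obtain ⟨c, hc, h⟩ := h0 p.1 hp _ (hρ p.2).1 (hρ p.2).2
        exact ⟨c, hc, fun ε hε => by simpa [hp] using h⟩
    · intro p c c' hcc h ε hε
      have := h ε hε
      convert hQ.add this (SB.cst hQ (sub_nonneg.2 hcc) _ (hQ.sq ((T p.1).eval (k (chρ R t p.2))))) using 1
      rw [map_sub]; ring
  have hGW : ∀ ε : ℝ, 0 < ε → G - k c * W + k ε * (N * e) ∈ Q := by
    intro ε hε
    have h2 : G - k c * W + k (ε / C1) * ((∑ b ∈ B1, NF (chα R t) (chρ R t) (y b)) * e) ∈ Q := by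
      have : G - k c * W + k (ε / C1) * ((∑ b ∈ B1, NF (chα R t) (chρ R t) (y b)) * e) =
          ∑ p : ι × (Fin R.k × Bool), k (chα R t p.2) * ((y p.1).eval (k (chρ R t p.2)) ^ 2 *
            ((T p.1).eval (k (chρ R t p.2)) - k c * (T p.1).eval (k (chρ R t p.2)) ^ 2 + (if p.1 ∈ B1 then k (ε / C1) * e else 0))) := by
        have e1 : (∑ b ∈ B1, NF (chα R t) (chρ R t) (y b)) = ∑ p : ι × (Fin R.k × Bool), if p.1 ∈ B1 then k (chα R t p.2) * (y p.1).eval (k (chρ R t p.2)) ^ 2 else 0 := by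
          rw [Fintype.sum_prod_type, ← Finset.sum_filter_add_sum_filter_not Finset.univ (fun b => b ∈ B1)]
          have z : ∑ b with b ∉ B1, ∑ q : Fin R.k × Bool, (if b ∈ B1 then k (chα R t q) * (y b).eval (k (chρ R t q)) ^ 2 else 0) = 0 := by
            refine Finset.sum_eq_zero fun b hb => Finset.sum_eq_zero fun q _ => ?_
            rw [if_neg (Finset.mem_filter.1 hb).2]
          rw [z, add_zero]
          have : Finset.univ.filter (fun b => b ∈ B1) = B1 := by ext; simp
          rw [this]
          refine Finset.sum_congr rfl fun b hb => ?_
          simp [hb, NF, hk]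
        rw [e1, hWe]
        simp only [G]
        rw [Finset.mul_sum, ← Finset.sum_sub_distrib, Finset.sum_mul, Finset.mul_sum, ← Finset.sum_add_distrib]
        refine Finset.sum_congr rfl fun p _ => ?_
        split_ifs
        · rw [Polynomial.eval_mul]; ring
        · rw [Polynomial.eval_mul]; ring
      rw [this]
      exact hQ.sum _ _ fun p _ => SB.cst hQ (hα _) _ (hQ.sqm _ (hcQ p _ (by positivity)))
    convert hQ.add h2 (SB.cst hQ (c := ε / C1) (by positivity) _ hNe) using 1
    have : k ε = k (ε / C1) * k C1 := by rw [← map_mul, div_mul_cancel₀ _ hC1.ne']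
    rw [← hk, this]; ring
  obtain ⟨ca, hca, hqa⟩ := mem_sub_sq hQ harch hF0
  obtain ⟨cb, hcb, hqb⟩ := mem_sub_sq hQ harch hF1
  rw [← hk] at hqa hqb
  -- final constant
  let c' : ℝ := min (min (ca / 3) (cb / 3)) (c / (3 * C4 + C2 * C3))
  have hc' : 0 < c' := by simp only [c']; positivity
  have l1 : 3 * c' ≤ ca := by
    have : c' ≤ ca / 3 := (min_le_left _ _).trans (min_le_left _ _)
    linarith
  have l2 : 3 * c' ≤ cb := by
    have : c' ≤ cb / 3 := (min_le_left _ _).trans (min_le_right _ _)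
    linarith
  have l3 : c' * (3 * C4 + C2 * C3) ≤ c := by
    have : c' ≤ c / (3 * C4 + C2 * C3) := min_le_right _ _
    rwa [le_div_iff₀ (by positivity)] at this
  have hθ0 : 0 ≤ t * (1 - t) := by positivity
  have hθ1 : t * (1 - t) ≤ 1 := by nlinarith
  refine ⟨c', hc', fun ε hε => ?_⟩
  have q1 := SB.cst hQ h1t _ (sub_sq_mono hQ (c' := 3 * c' * (1 - t)) (by nlinarith) hqa)
  have q2 := SB.cst hQ ht0 _ (sub_sq_mono hQ (c' := 3 * c' * t) (by nlinarith) hqb)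
  have q3 := hGW ε hε
  have q4 := SB.cst hQ (c := 3 * c' * (t * (1 - t))) (by positivity) _ hG2
  have q5 := SB.cst hQ (c := c') (by positivity) _ hN2W
  have q6 := SB.cst hQ (c := c - (3 * c' * (t * (1 - t)) * C4 + c' * (C2 * C3))) (by
    have : 3 * c' * (t * (1 - t)) * C4 ≤ 3 * c' * 1 * C4 := by gcongr
    nlinarith) _ hWQ
  have q7 := SB.cst hQ hθ0 _ (hQ.add (hQ.add (hQ.add q3 q4) q5) q6)
  set a := F.eval 0
  set b := F.eval 1
  have q8 := SB.cst hQ hc'.le _ (hQ.add (hQ.add (hQ.sq ((1 - k t) * a - k t * b)) (hQ.sq (k t * b - k t * (1 - k t) * G)))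
    (hQ.sq ((1 - k t) * a - k t * (1 - k t) * G)))
  convert hQ.add (hQ.add (hQ.add q1 q2) q7) q8 using 1
  rw [hchord]
  have k3 : k 3 = 3 := map_ofNat _ 3
  simp only [map_mul, map_sub, map_add, map_one, ← hk, k3]
  ring
end absstep2


section sosstep
variable {n m : ℕ} 

/-- the radial derivation centred at `x0` -/
def Dx (x0 : Fin n → ℝ) (p : MvPolynomial (Fin n) ℝ) : MvPolynomial (Fin n) ℝ := ∑ a, (C (x0 a) - X a) * pderiv a p

theorem Dx_mul (x0 : Fin n → ℝ) (p q : MvPolynomial (Fin n) ℝ) : Dx x0 (p * q) = Dx x0 p * q + p * Dx x0 q := by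
  simp only [Dx, pderiv_mul, Finset.sum_mul, Finset.mul_sum, ← Finset.sum_add_distrib]
  exact Finset.sum_congr rfl fun a _ => by ring

theorem Dx_sum (x0 : Fin n → ℝ) {ι : Type*} (s : Finset ι) (p : ι → MvPolynomial (Fin n) ℝ) :
    Dx x0 (∑ i ∈ s, p i) = ∑ i ∈ s, Dx x0 (p i) := by
  simp only [Dx, map_sum, Finset.mul_sum]
  exact Finset.sum_comm

theorem pderiv_radial (x0 : Fin n → ℝ) (f : MvPolynomial (Fin n) ℝ) (b c : Fin n) :
    pderiv c (∑ a, (C (x0 a) - X a) * (-pderiv a (pderiv b f))) =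
      Dx x0 (-pderiv c (pderiv b f)) - (-pderiv c (pderiv b f)) := by
  classical
  have : ∀ a, pderiv c ((C (x0 a) - X a) * (-pderiv a (pderiv b f))) =
      (C (x0 a) - X a) * pderiv a (-pderiv c (pderiv b f)) - (if a = c then -pderiv a (pderiv b f) else 0) := by
    intro a
    rw [pderiv_mul, map_neg, map_neg, pderiv_comm' c a]
    rw [map_sub, pderiv_C, pderiv_X]
    by_cases hac : a = c
    · subst hac; simp; ring
    · have : Pi.single (M := fun _ => MvPolynomial (Fin n) ℝ) c 1 a = 0 := by
        simp [Pi.single_apply, hac]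
      simp [hac, this]
  rw [map_sum]
  simp only [this, Finset.sum_sub_distrib, Dx]
  simp

variable {A : Type*} [CommRing A] [Algebra ℝ A]
variable {g : Fin m → MvPolynomial (Fin n) ℝ} {Q : Set A} {x u : Fin n → A}

/-- the linear form of a polynomial vector along a line -/
def yP (u w : Fin n → A) (q : Fin n → MvPolynomial (Fin n) ℝ) : Polynomial A :=
  ∑ c, lineP u w (q c) * Polynomial.C (w c)

theorem yP_form (u w : Fin n → A) (p q : Fin n → MvPolynomial (Fin n) ℝ) (G : MvPolynomial (Fin n) ℝ) :
    lineP u w G * yP u w p * yP u w q = ∑ b, ∑ c, lineP u w (G * p c * q b) * Polynomial.C (w c) * Polynomial.C (w b) := by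
  simp only [yP]
  rw [Finset.mul_sum]
  refine Finset.sum_congr rfl fun b _ => ?_
  rw [Finset.mul_sum, Finset.sum_mul]
  refine Finset.sum_congr rfl fun c _ => ?_
  simp only [map_mul]; ring

theorem sum_comm3 {ι κ τ M : Type*} [Fintype ι] [Fintype κ] [Fintype τ] [AddCommMonoid M] (f : ι → κ → τ → M) :
    ∑ k, ∑ b, ∑ c, f k b c = ∑ b, ∑ c, ∑ k, f k b c := by
  rw [Finset.sum_comm]
  exact Finset.sum_congr rfl fun b _ => Finset.sum_comm

set_option maxHeartbeats 1000000 in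
theorem sos_step (h : Setup g Q x u) (f : MvPolynomial (Fin n) ℝ) {ι : Type*} [Fintype ι] [DecidableEq ι]
    (G : ι → MvPolynomial (Fin n) ℝ) (P : ι → Fin n → MvPolynomial (Fin n) ℝ)
    (hH : ∀ a b, -pderiv a (pderiv b f) = ∑ k, G k * P k a * P k b) (B1 : Finset ι) (x0 : Fin n → ℝ)
    (hB0 : ∀ k ∉ B1, G k = 0 ∨ G k = 1)
    (hB1 : ∀ k ∈ B1, ∃ c : ℝ, ∀ z ∈ SolSet g, 0 < eval z (Dx x0 (G k)) + c * eval z (G k))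
    (hx : aeval x f ∈ Q) (hu : aeval u f ∈ Q) :
    ∃ N : A, SB Q N ∧ ∀ e, SB Q e → 
      (∀ b ∈ B1, ∀ s : ℝ, 0 ≤ s → s ≤ 1 → ∃ c : ℝ, 0 < c ∧ ∀ ε : ℝ, 0 < ε →
        aeval (zPt x u s) (G b) - algebraMap ℝ A c * aeval (zPt x u s) (G b) ^ 2 + algebraMap ℝ A ε * e ∈ Q) →
      ∀ t : ℝ, 0 ≤ t → t ≤ 1 → ∃ c : ℝ, 0 < c ∧ ∀ ε : ℝ, 0 < ε →
        aeval (zPt x u t) f - algebraMap ℝ A c * aeval (zPt x u t) f ^ 2 -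
          algebraMap ℝ A (c * (t * (1 - t))) * N ^ 2 + algebraMap ℝ A (ε * (t * (1 - t))) * (N * e) ∈ Q := by
  classical
  have hQ := h.qm
  choose! κ1 hκ1 using hB1
  let κ : ι → ℝ := fun k => if k ∈ B1 then κ1 k else 0
  let ρ : ι → MvPolynomial (Fin n) ℝ := fun k => Dx x0 (G k) + C (κ k) * G k
  have hρ0 : ∀ k ∉ B1, ρ k = 0 := by
    intro k hk
    have h1 : Dx x0 (G k) = 0 := by
      rcases hB0 k hk with h | h <;> simp [h, Dx]
    simp [ρ, κ, hk, h1]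
  obtain ⟨c, hc, hcρ⟩ : ∃ c : ℝ, 0 < c ∧ ∀ k : ι, k ∈ B1 → ∀ z ∈ SolSet g, c < eval z (ρ k) := by
    refine exists_common_lb (fun (k : ι) (c : ℝ) => k ∈ B1 → ∀ z ∈ SolSet g, c < eval z (ρ k)) ?_ ?_
    · intro k
      by_cases hk : k ∈ B1
      · obtain ⟨d, hd, _, _, h'⟩ := cpt_sep h.cpt (f := fun z => -eval z (ρ k)) (MvPolynomial.continuous_eval (ρ k)).neg (continuous_const (y := (0:ℝ))) (fun _ _ => le_rfl) (fun q hq _ => by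
          have := hκ1 k hk q hq
          simp [ρ, κ, hk]; linarith)
        exact ⟨d / 2, by positivity, fun _ z hz => by have := h' z hz; simp at this; linarith⟩
      · exact ⟨1, one_pos, fun h => absurd h hk⟩
    · intro k c c' hcc hk hkB z hz
      exact lt_of_le_of_lt hcc (hk hkB z hz)
  let w : Fin n → A := fun i => x i - u i
  let ℓ := lineP u w
  let F := ℓ f
  let T : ι → Polynomial A := fun k => ℓ (G k)
  let y : ι → Polynomial A := fun k => yP u w (P k)
  let v : ι → Polynomial A := fun k => ℓ (∑ a, (C (x0 a) - X a) * P k a)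
  let Yp : ι → Polynomial A := fun k => yP u w (fun a => Dx x0 (P k a))
  let η : Polynomial A := ∑ b, ℓ (∑ a, (C (x0 a) - X a) * (-pderiv a (pderiv b f))) * Polynomial.C (w b)
  have hη : η = ∑ k, T k * v k * y k := by
    simp only [η, hH, T, v, y, yP, Finset.mul_sum]
    rw [Finset.sum_comm]
    refine Finset.sum_congr rfl fun b _ => ?_
    rw [Finset.sum_comm, map_sum, Finset.sum_mul]
    refine Finset.sum_congr rfl fun k _ => ?_
    rw [← mul_assoc, ← map_mul, ← map_mul, Finset.mul_sum, Finset.sum_mul]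
    congr 2
    refine Finset.sum_congr rfl fun a _ => ?_
    ring
  have hη' : Polynomial.derivative η = ∑ k, ((ℓ (ρ k) - Polynomial.C (algebraMap ℝ A (κ k)) * T k) * y k ^ 2 + 2 * T k * Yp k * y k - T k * y k ^ 2) := by
    have e1 : Polynomial.derivative η = ∑ b, ∑ c, ℓ (Dx x0 (-pderiv c (pderiv b f)) - (-pderiv c (pderiv b f))) * Polynomial.C (w c) * Polynomial.C (w b) := by
      simp only [η, Polynomial.derivative_sum, Polynomial.derivative_mul, Polynomial.derivative_C, mul_zero, add_zero]
      refine Finset.sum_congr rfl fun b _ => ?_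
      rw [lineP_deriv, Finset.sum_mul]
      simp only [pderiv_radial]
      rfl
    have e2 : ∀ k, (ℓ (ρ k) - Polynomial.C (algebraMap ℝ A (κ k)) * T k) * y k ^ 2 + 2 * T k * Yp k * y k - T k * y k ^ 2 =
        ∑ b, ∑ c, ℓ (Dx x0 (G k * P k c * P k b) - G k * P k c * P k b) * Polynomial.C (w c) * Polynomial.C (w b) := by
      intro k
      have e3 : ℓ (ρ k) - Polynomial.C (algebraMap ℝ A (κ k)) * T k = ℓ (Dx x0 (G k)) := by
        simp only [ρ, map_add, map_mul, T]
        rw [← MvPolynomial.algebraMap_eq, AlgHom.commutes, Polynomial.algebraMap_apply]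
        ring
      rw [e3]
      have f1 := yP_form u w (P k) (P k) (Dx x0 (G k))
      have f2 := yP_form u w (fun a => Dx x0 (P k a)) (P k) (G k)
      have f3 := yP_form u w (P k) (fun a => Dx x0 (P k a)) (G k)
      have f4 := yP_form u w (P k) (P k) (G k)
      have : ℓ (Dx x0 (G k)) * y k ^ 2 + 2 * T k * Yp k * y k - T k * y k ^ 2 =
        ℓ (Dx x0 (G k)) * y k * y k + T k * Yp k * y k + T k * y k * Yp k - T k * y k * y k := by ring
      rw [this]
      simp only [ℓ, T, y, Yp]
      rw [f1, f2, f3, f4]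
      simp only [← Finset.sum_add_distrib, ← Finset.sum_sub_distrib]
      refine Finset.sum_congr rfl fun b _ => Finset.sum_congr rfl fun c _ => ?_
      simp only [Dx_mul, map_add, map_sub, map_mul]
      ring
    rw [e1]
    simp only [e2]
    rw [sum_comm3]
    refine Finset.sum_congr rfl fun b _ => ?_
    refine Finset.sum_congr rfl fun c _ => ?_
    rw [hH, Dx_sum, ← Finset.sum_sub_distrib, map_sum, Finset.sum_mul, Finset.sum_mul]
  have hFd : -Polynomial.derivative (Polynomial.derivative F) = ∑ k, T k * y k ^ 2 := by
    have : ∀ k, T k * y k ^ 2 = ∑ b, ∑ c, ℓ (G k * P k c * P k b) * Polynomial.C (w c) * Polynomial.C (w b) := fun k => by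
      rw [← yP_form]; ring
    simp only [this]
    rw [sum_comm3]
    simp only [F, ℓ]
    rw [lineP_deriv, Polynomial.derivative_sum, ← Finset.sum_neg_distrib]
    refine Finset.sum_congr rfl fun b _ => ?_
    rw [Polynomial.derivative_mul, Polynomial.derivative_C, mul_zero, add_zero, lineP_deriv, Finset.sum_mul, ← Finset.sum_neg_distrib]
    refine Finset.sum_congr rfl fun c _ => ?_
    rw [← Finset.sum_mul, ← Finset.sum_mul, ← map_sum, ← hH, map_neg]
    ring
  let E : ℕ := (∑ k, (y k).natDegree) + (∑ k, (T k * y k).natDegree) + 1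
  let D : ℕ := 2 * E + 2 + F.natDegree + (Polynomial.X * (1 - Polynomial.X) * η).natDegree
  obtain ⟨R⟩ := exists_QRule D
  have hy : ∀ k, (y k).natDegree < E := fun k => by
    have := Finset.single_le_sum (f := fun k => (y k).natDegree) (fun _ _ => Nat.zero_le _) (Finset.mem_univ k)
    simp only [E]; omega
  have hTy : ∀ k, (T k * y k).natDegree < E := fun k => by
    have := Finset.single_le_sum (f := fun k => (T k * y k).natDegree) (fun _ _ => Nat.zero_le _) (Finset.mem_univ k)
    simp only [E]; omega
  have hw : ∀ j, 0 ≤ R.ω j * (R.r j * (1 - R.r j)) := fun j =>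
    mul_nonneg (R.ω0 j) (mul_nonneg (R.r0 j) (sub_nonneg.2 (R.r1 j)))
  have hev : ∀ (s : ℝ) (p : MvPolynomial (Fin n) ℝ), (ℓ p).eval (algebraMap ℝ A s) = aeval (zPt x u s) p := fun s p => zPt_line x u s p
  have hkey := key_abs hQ h.arch R B1 T y v Yp (fun k => ℓ (ρ k)) κ η hη hη' (by simp only [D]; omega) (fun b hb => by simp [hρ0 b hb]) hc
    (by
      intro b hb s s0 s1
      rw [hev]
      have := h.putz s0 s1 (p := ρ b - C c) (fun z hz => by have := hcρ b hb z hz; simp only [map_sub, eval_C]; linarith)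
      rwa [map_sub, ← MvPolynomial.algebraMap_eq, AlgHom.commutes] at this)
  refine ⟨∑ b ∈ B1, NF (fun j => R.ω j * (R.r j * (1 - R.r j))) R.r (y b), SB.sum hQ _ _ fun b _ => NF_SB hQ hw _ _, ?_⟩
  intro e he h1 t ht0 ht1
  have := step_abs hQ h.arch R (E := E) (by simp only [D]; omega) B1 T y F (by simp only [D]; omega) hFd hy hTy
    (by have := hev 0 f; rw [map_zero, zPt_zero] at this; simp only [F]; rw [this]; exact hu)
    (by have := hev 1 f; rw [map_one, zPt_one] at this; simp only [F]; rw [this]; exact hx)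
    _ rfl hkey e he
    (by
      intro b hb s s0 s1
      refine ⟨1, one_pos, ?_⟩
      rw [hev]
      rcases hB0 b hb with h | h <;> simp [h, hQ.zero])
    (by
      intro b hb s s0 s1
      simp only [T, hev]
      exact h1 b hb s s0 s1)
    ht0 ht1
  simp only [F, hev] at this
  exact this
end sosstep


section boot
variable {A : Type*} [CommRing A] [Algebra ℝ A] {Q : Set A}

theorem bootstrap (hQ : IsQMod Q) (harch : ∀ a, ∃ N : ℝ, algebraMap ℝ A N - a ∈ Q)
    {ι : Type*} [Fintype ι] [DecidableEq ι] (T : ι → ℝ → A) (N : ι → A) (hN : ∀ l, SB Q (N l))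
    (hbase : ∀ l, ∀ s : ℝ, 0 ≤ s → s ≤ 1 → ∃ c : ℝ, 0 < c ∧ ∀ ε : ℝ, 0 < ε →
        T l s - algebraMap ℝ A c * T l s ^ 2 + algebraMap ℝ A ε * 1 ∈ Q)
    (hstep : ∀ l, (∀ s : ℝ, 0 ≤ s → s ≤ 1 → ∃ c : ℝ, 0 < c ∧ T l s - algebraMap ℝ A c * T l s ^ 2 ∈ Q) ∨
      ∀ e, SB Q e → 
      (∀ b, ∀ s : ℝ, 0 ≤ s → s ≤ 1 → ∃ c : ℝ, 0 < c ∧ ∀ ε : ℝ, 0 < ε →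
        T b s - algebraMap ℝ A c * T b s ^ 2 + algebraMap ℝ A ε * e ∈ Q) →
      ∀ t : ℝ, 0 ≤ t → t ≤ 1 → ∃ c : ℝ, 0 < c ∧ ∀ ε : ℝ, 0 < ε →
        T l t - algebraMap ℝ A c * T l t ^ 2 -
          algebraMap ℝ A (c * (t * (1 - t))) * N l ^ 2 + algebraMap ℝ A (ε * (t * (1 - t))) * (N l * e) ∈ Q) :
    ∀ l, ∀ s : ℝ, 0 ≤ s → s ≤ 1 → T l s ∈ Q := by
  have hsum : ∀ W : Finset ι, SB Q (∑ a ∈ W, N a) := fun W => SB.sum hQ _ _ fun a _ => hN a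
  let Good : Finset ι → Prop := fun V => ∀ l, ∀ s : ℝ, 0 ≤ s → s ≤ 1 → ∃ c : ℝ, 0 < c ∧ ∀ ε : ℝ, 0 < ε →
        T l s - algebraMap ℝ A c * T l s ^ 2 + algebraMap ℝ A ε * (∑ a ∈ V, N a) ∈ Q
  have claim : ∀ V : Finset ι, (∀ l ∉ V, Good (insert l V)) → Good V := by
    intro V hV l s s0 s1
    have hθ0 : 0 ≤ s * (1 - s) := mul_nonneg s0 (by linarith)
    have hθ1 : s * (1 - s) ≤ 1 := by nlinarith
    rcases hstep l with h | h
    · obtain ⟨c, hc, h⟩ := h s s0 s1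
      exact ⟨c, hc, fun ε hε => hQ.add h (SB.cst hQ hε.le _ ((hsum V).mem hQ))⟩
    · by_cases hl : l ∈ V
      · obtain ⟨c, hc, h⟩ := h 1 SB.one hbase s s0 s1
        refine ⟨c, hc, fun ε hε => ?_⟩
        have q1 := h ε hε
        have q2 := SB.cst hQ (c := c * (s * (1 - s))) (by positivity) _ (hQ.sq (N l))
        have q3 := SB.cst hQ (c := ε * (1 - s * (1 - s))) (mul_nonneg hε.le (by linarith)) _ ((hN l).mem hQ)
        have q4 := SB.cst hQ hε.le _ ((hsum (V.erase l)).mem hQ)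
        convert hQ.add (hQ.add (hQ.add q1 q2) q3) q4 using 1
        rw [← Finset.add_sum_erase V N hl]
        simp only [map_mul, map_sub, map_one]
        ring
      · obtain ⟨c, hc, h⟩ := h _ (hsum (insert l V)) (hV l hl) s s0 s1
        obtain ⟨M, hM1, hM⟩ := arch_pos hQ harch (N l)
        refine ⟨c, hc, fun ε hε => ?_⟩
        have hM0 : 0 < M := by linarith
        let ε' := min c (ε / M)
        have hε' : 0 < ε' := by simp only [ε']; positivity
        have l1 : ε' ≤ c := min_le_left _ _
        have l2 : ε' * M ≤ ε := by
          have : ε' ≤ ε / M := min_le_right _ _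
          rwa [le_div_iff₀ hM0] at this
        have q1 := h ε' hε'
        rw [Finset.sum_insert hl] at q1
        set S := ∑ a ∈ V, N a with hS
        have q2 := SB.cst hQ (c := (c - ε') * (s * (1 - s))) (mul_nonneg (by linarith) hθ0) _ (hQ.sq (N l))
        have q3 := SB.cst hQ (c := ε' * (s * (1 - s))) (by positivity) _ (hsum V _ hM)
        have q4 := SB.cst hQ (c := ε - ε' * (s * (1 - s)) * M) (by
          have : ε' * (s * (1 - s)) * M ≤ ε' * 1 * M := by gcongr
          linarith) _ ((hsum V).mem hQ)
        convert hQ.add (hQ.add (hQ.add q1 q2) q3) q4 using 1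
        simp only [map_mul, map_sub, map_one, ← hS]
        ring
  have all : ∀ k : ℕ, ∀ V : Finset ι, Vᶜ.card < k → Good V := by
    intro k
    induction k with
    | zero => intro V hV; omega
    | succ k ih =>
      intro V hV
      refine claim V fun l hl => ih _ ?_
      have : (insert l V)ᶜ.card < Vᶜ.card := by
        apply Finset.card_lt_card
        rw [Finset.compl_ssubset_compl]
        exact Finset.ssubset_insert hl
      omega
  intro l s s0 s1
  obtain ⟨c, hc, h⟩ := all _ ∅ (Nat.lt_succ_self _) l s s0 s1
  have q := h 1 one_pos
  simp only [Finset.sum_empty, mul_zero, add_zero] at q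
  convert hQ.add q (SB.cst hQ hc.le _ (hQ.sq (T l s))) using 1
  ring
end boot

section tangents
variable {n m : ℕ} {A : Type*} [CommRing A] [Algebra ℝ A]
variable {g : Fin m → MvPolynomial (Fin n) ℝ} {Q : Set A} {x u : Fin n → A}

/-- hypotheses on a good interior point -/
def GoodPt (g : Fin m → MvPolynomial (Fin n) ℝ) (x0 : Fin n → ℝ) : Prop :=
  ∀ l, g l ≠ 0 → ∀ z ∈ SolSet g, eval z (g l) = 0 → 0 < ∑ a, eval z (pderiv a (g l)) * (x0 a - z a)

theorem eval_Dx (x0 z : Fin n → ℝ) (p : MvPolynomial (Fin n) ℝ) :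
    eval z (Dx x0 p) = ∑ a, eval z (pderiv a p) * (x0 a - z a) := by
  simp only [Dx, map_sum, map_mul, map_sub, eval_C, eval_X]
  exact Finset.sum_congr rfl fun a _ => mul_comm _ _

theorem sos_data {f : MvPolynomial (Fin n) ℝ} (hf : SosConcave g f) : ∃ M : ℕ, 
    ∃ P : (Fin (m + 1) × Fin M × Fin n) → Fin n → MvPolynomial (Fin n) ℝ,
      ∀ a b, -pderiv a (pderiv b f) = ∑ k, withOne g k.1 * P k a * P k b := by
  obtain ⟨d, M, P, hP, hH⟩ := hf
  refine ⟨M, fun k a => P k.1 k.2.1 k.2.2 a, fun a b => ?_⟩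
  have := congrFun (congrFun hH a) b
  simp only [Matrix.of_apply, Matrix.sum_apply, Matrix.smul_apply, Matrix.mul_apply, Matrix.transpose_apply, smul_eq_mul, Finset.mul_sum] at this
  rw [this, Fintype.sum_prod_type]
  refine Finset.sum_congr rfl fun i _ => ?_
  rw [Fintype.sum_prod_type]
  exact Finset.sum_congr rfl fun j _ => Finset.sum_congr rfl fun e _ => by ring

theorem Setup.all_tangent (h : Setup g Q x u) {x0 : Fin n → ℝ} (hx0 : GoodPt g x0)
    (hg : ∀ i, (∀ x ∈ SolSet g ∩ ZSet (g i), StrictlyQuasiconcaveAt (g i) x) ∨ SosConcave g (g i)) (l : Fin m) :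
    TangentOK Q x u (g l) := by
  classical
  have hQ := h.qm
  have hstep : ∀ l, ∃ N : A, SB Q N ∧ ((∀ s : ℝ, 0 ≤ s → s ≤ 1 → ∃ c : ℝ, 0 < c ∧ aeval (zPt x u s) (g l) - algebraMap ℝ A c * aeval (zPt x u s) (g l) ^ 2 ∈ Q) ∨
      ∀ e, SB Q e → 
      (∀ b, ∀ s : ℝ, 0 ≤ s → s ≤ 1 → ∃ c : ℝ, 0 < c ∧ ∀ ε : ℝ, 0 < ε →
        aeval (zPt x u s) (g b) - algebraMap ℝ A c * aeval (zPt x u s) (g b) ^ 2 + algebraMap ℝ A ε * e ∈ Q) →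
      ∀ t : ℝ, 0 ≤ t → t ≤ 1 → ∃ c : ℝ, 0 < c ∧ ∀ ε : ℝ, 0 < ε →
        aeval (zPt x u t) (g l) - algebraMap ℝ A c * aeval (zPt x u t) (g l) ^ 2 -
          algebraMap ℝ A (c * (t * (1 - t))) * N ^ 2 + algebraMap ℝ A (ε * (t * (1 - t))) * (N * e) ∈ Q) := by
    intro l
    rcases hg l with hl | hl
    · exact ⟨0, SB.zero hQ, Or.inl (h.sqc l fun z hz hz0 => hl z ⟨hz, hz0⟩).2⟩
    · obtain ⟨M, P, hP⟩ := sos_data hl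
      obtain ⟨N, hN, hs⟩ := sos_step h (g l) (fun k : Fin (m + 1) × Fin M × Fin n => withOne g k.1) P hP
        (Finset.univ.filter fun k => k.1 ≠ 0 ∧ withOne g k.1 ≠ 0) x0
        (by
          intro k hk
          simp only [Finset.mem_filter, Finset.mem_univ, true_and, not_and, not_not] at hk
          by_cases h0 : k.1 = 0
          · right; rw [h0]; rfl
          · left; exact hk h0)
        (by
          intro k hk
          simp only [Finset.mem_filter, Finset.mem_univ, true_and] at hk
          obtain ⟨j, hj⟩ := Fin.exists_succ_eq.2 hk.1
          rw [← hj] at hk ⊢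
          have e : withOne g j.succ = g j := rfl
          rw [e] at hk ⊢
          obtain ⟨δ, hδ, C, hC, h'⟩ := cpt_sep h.cpt (f := fun z => -eval z (Dx x0 (g j))) (p := fun z => eval z (g j))
            (MvPolynomial.continuous_eval _).neg (MvPolynomial.continuous_eval _) (fun z hz => hz j)
            (fun z hz hz0 => by
              have := hx0 j hk.2 z hz hz0
              rw [← eval_Dx] at this
              simpa using this)
          exact ⟨C, fun z hz => by have := h' z hz; linarith⟩)
        (h.hx l) (h.hu l)
      refine ⟨N, hN, Or.inr fun e he hb => hs e he fun k hk => ?_⟩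
      simp only [Finset.mem_filter, Finset.mem_univ, true_and] at hk
      obtain ⟨j, hj⟩ := Fin.exists_succ_eq.2 hk.1
      rw [← hj]
      exact hb j
  choose N hN hs using hstep
  have hTQ := bootstrap hQ h.arch (fun l s => aeval (zPt x u s) (g l)) N hN (by
    intro l s s0 s1
    obtain ⟨B, hB, hbd⟩ := h.bdd (g l)
    refine ⟨B⁻¹, by positivity, fun ε hε => ?_⟩
    have := h.putz s0 s1 (p := g l - C B⁻¹ * g l ^ 2 + C ε) (fun z hz => by
      simp only [map_add, map_sub, map_mul, map_pow, eval_C]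
      have h1 := (abs_le.1 (hbd z hz)).2
      have h2 := hz l
      have h3 : B⁻¹ * eval z (g l) ≤ 1 := by
        rw [inv_mul_le_iff₀ hB]; linarith
      nlinarith)
    simpa [← MvPolynomial.algebraMap_eq, AlgHom.commutes] using this) hs
  rcases hg l with hl | hl
  · exact (h.sqc l fun z hz hz0 => hl z ⟨hz, hz0⟩).1
  · refine ⟨g l, 1, one_pos, tangent hQ (g l) (h.hx l) ?_, fun z hz => ⟨hz, fun a => by ring⟩⟩
    intro s s0 s1
    obtain ⟨M, P, hP⟩ := sos_data hl
    have : ∑ i, ∑ j, aeval (zPt x u s) (-pderiv i (pderiv j (g l))) * ((x i - u i) * (x j - u j)) =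
        ∑ k : Fin (m + 1) × Fin M × Fin n, (∑ i, aeval (zPt x u s) (P k i) * (x i - u i)) ^ 2 * aeval (zPt x u s) (withOne g k.1) := by
      simp only [hP, map_sum, Finset.sum_mul]
      rw [← sum_comm3]
      refine Finset.sum_congr rfl fun k _ => ?_
      rw [pow_two, Finset.sum_mul_sum, Finset.sum_mul]
      refine Finset.sum_congr rfl fun i _ => ?_
      rw [Finset.sum_mul]
      refine Finset.sum_congr rfl fun j _ => ?_
      simp only [map_mul]; ring
    rw [this]
    refine hQ.sum _ _ fun k _ => hQ.sqm _ ?_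
    by_cases h0 : k.1 = 0
    · rw [h0]
      have e : withOne g 0 = 1 := rfl
      rw [e, map_one]; exact hQ.one
    · obtain ⟨j, hj⟩ := Fin.exists_succ_eq.2 h0
      rw [← hj]
      exact hTQ j s s0 s1
end tangents


section final
variable {n m : ℕ} {g : Fin m → MvPolynomial (Fin n) ℝ}

theorem FamSetup (hconv : Convex ℝ (SolSet g)) (harch : IsArchimedeanQM (QM g)) :
    Setup g (FamQ g) (famX g) (famU harch) := by
  refine ⟨FamQ.isQMod, FamQ.arch harch, FamQ.X, FamQ.U harch, hconv, SolSet.compact harch, ?_⟩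
  intro H hsym hpos w
  have hfac : ∀ z : SolSet g, ∃ B : Matrix (Fin n) (Fin n) ℝ, ∀ i j, eval z.1 (H i j) = ∑ e, B e i * B e j := by
    intro z
    have hps : (Matrix.of fun i j => eval z.1 (H i j) : Matrix (Fin n) (Fin n) ℝ).PosSemidef := by
      refine Matrix.PosSemidef.of_dotProduct_mulVec_nonneg ?_ ?_
      · ext i j
        simp [Matrix.conjTranspose_apply, hsym j i]
      · intro v
        have := hpos z.1 z.2 v
        refine le_of_le_of_eq this ?_
        simp only [dotProduct, mulVec, Matrix.of_apply, Finset.mul_sum, star_trivial, Pi.star_apply]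
        exact Finset.sum_congr rfl fun i _ => Finset.sum_congr rfl fun j _ => by ring
    obtain ⟨B, hB⟩ := psd_factor _ hps
    exact ⟨B, fun i j => by simpa using hB i j⟩
  choose B hB using hfac
  have hbd : ∀ e i, ∃ K, ∀ z : SolSet g, |B z e i| ≤ K := by
    intro e i
    obtain ⟨K, hK⟩ := SolSet.bdd harch (H i i)
    refine ⟨K + 1, fun z => ?_⟩
    have h1 := (abs_le.1 (hK z.1 z.2)).2
    rw [hB z i i] at h1
    have h2 : B z e i * B z e i ≤ ∑ e, B z e i * B z e i :=
      Finset.single_le_sum (f := fun e => B z e i * B z e i) (fun e _ => mul_self_nonneg _) (Finset.mem_univ e)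
    rw [abs_le]
    constructor <;> nlinarith
  have : ∑ i, ∑ j, aeval (famU harch) (H i j) * (w i * w j) =
      ∑ e, (∑ i, famC (fun z => B z e i) (hbd e i) * w i) ^ 2 := by
    apply Subtype.ext
    funext z
    rw [famEv_eq, famEv_eq]
    simp only [map_sum, map_mul, map_pow, famEv_U]
    have hc : ∀ e i, famEv g z (famC (fun z => B z e i) (hbd e i)) = C (B z e i) := fun e i => rfl
    simp only [hc, hB z, map_sum, map_mul, Finset.sum_mul]
    rw [← sum_comm3]
    refine Finset.sum_congr rfl fun e _ => ?_
    rw [pow_two, Finset.sum_mul_sum]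
    exact Finset.sum_congr rfl fun i _ => Finset.sum_congr rfl fun j _ => by ring
  rw [this]
  exact FamQ.isQMod.sum _ _ fun e _ => FamQ.isQMod.sq _

theorem exists_int_pt (hint : (interior (SolSet g)).Nonempty) :
    ∃ x0 ∈ SolSet g, ∀ l, g l ≠ 0 → 0 < eval x0 (g l) := by
  classical
  by_contra hcon
  push Not at hcon
  obtain ⟨y, hy⟩ := hint
  obtain ⟨ε, hε, hb⟩ := Metric.isOpen_iff.1 isOpen_interior y hy
  let p : MvPolynomial (Fin n) ℝ := ∏ l ∈ Finset.univ.filter (fun l => g l ≠ 0), g l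
  have hp : p ≠ 0 := Finset.prod_ne_zero_iff.2 fun l hl => (Finset.mem_filter.1 hl).2
  apply hp
  refine MvPolynomial.funext_set (fun i => Metric.ball (y i) ε) (fun i => ?_) fun z hz => ?_
  · rw [Real.ball_eq_Ioo]; exact Set.Ioo_infinite (by linarith)
  · have hzS : z ∈ SolSet g := interior_subset (hb (by rw [ball_pi _ hε]; exact hz))
    obtain ⟨l, hl, hl0⟩ := hcon z hzS
    have h0 : eval z (g l) = 0 := le_antisymm hl0 (hzS l)
    rw [map_zero]
    simp only [p, map_prod]
    exact Finset.prod_eq_zero (Finset.mem_filter.2 ⟨Finset.mem_univ l, hl⟩) h0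

theorem goodPt (hconv : Convex ℝ (SolSet g)) (hcpt : IsCompact (SolSet g))
    (hg : ∀ i, (∀ x ∈ SolSet g ∩ ZSet (g i), StrictlyQuasiconcaveAt (g i) x) ∨ SosConcave g (g i))
    {x0 : Fin n → ℝ} (hx0 : x0 ∈ SolSet g) (hpos : ∀ l, g l ≠ 0 → 0 < eval x0 (g l)) : GoodPt g x0 := by
  intro l hl z hz hz0
  have hlp := hpos l hl
  rcases hg l with h | h
  · exact sqc_grad hcpt hconv (g l) (fun z hz => hz l) (fun z hz hz0 => h z ⟨hz, hz0⟩) hx0 hz hlp hz0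
  · obtain ⟨M, P, hP⟩ := sos_data h
    have hR : IsQMod {a : ℝ | 0 ≤ a} :=
      ⟨fun {a b} (ha : (0:ℝ) ≤ a) (hb : (0:ℝ) ≤ b) => show (0:ℝ) ≤ a + b from add_nonneg ha hb,
        fun q a (ha : (0:ℝ) ≤ a) => show (0:ℝ) ≤ q ^ 2 * a from mul_nonneg (sq_nonneg q) ha,
        show (0:ℝ) ≤ 1 from zero_le_one⟩
    have ht := tangent (A := ℝ) (Q := {a : ℝ | 0 ≤ a}) (x := x0) (u := z)
      hR (g l - C (eval x0 (g l))) (by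
        simp [aeval_eq_eval]) (by
        intro s s0 s1
        have hm : zPt x0 z s ∈ SolSet g := by
          have := hconv hz hx0 (sub_nonneg.2 s1) s0 (by ring)
          convert this using 1
          funext i; simp [zPt]; ring
        have : ∑ i, ∑ j, aeval (zPt x0 z s) (-pderiv i (pderiv j (g l - C (eval x0 (g l))))) * ((x0 i - z i) * (x0 j - z j)) =
            ∑ k : Fin (m + 1) × Fin M × Fin n, (∑ i, eval (zPt x0 z s) (P k i) * (x0 i - z i)) ^ 2 * eval (zPt x0 z s) (withOne g k.1) := by
          simp only [map_sub, pderiv_C, sub_zero]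
          simp only [← map_neg, hP, map_sum, Finset.sum_mul, aeval_eq_eval, RingHom.coe_coe]
          rw [← sum_comm3]
          refine Finset.sum_congr rfl fun k _ => ?_
          rw [pow_two, Finset.sum_mul_sum, Finset.sum_mul]
          refine Finset.sum_congr rfl fun i _ => ?_
          rw [Finset.sum_mul]
          refine Finset.sum_congr rfl fun j _ => ?_
          simp only [map_mul]; ring
        rw [this]
        show (0:ℝ) ≤ _
        refine Finset.sum_nonneg fun k _ => mul_nonneg (sq_nonneg _) ?_
        by_cases h0 : k.1 = 0
        · rw [h0]
          have e : withOne g 0 = 1 := rfl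
          rw [e, map_one]; exact zero_le_one
        · obtain ⟨j, hj⟩ := Fin.exists_succ_eq.2 h0
          rw [← hj]
          exact hm j)
    simp only [aeval_eq_eval, RingHom.coe_coe, map_sub, pderiv_C, sub_zero, hz0, eval_C, Set.mem_setOf_eq] at ht
    have : (0:ℝ) ≤ (∑ a, eval z (pderiv a (g l)) * (x0 a - z a)) + (0 - eval x0 (g l)) := ht
    linarith

theorem affine_repr {f : MvPolynomial (Fin n) ℝ} (hf : f.totalDegree ≤ 1) (u : Fin n → ℝ) (y : Fin n → ℝ) :
    eval y f = eval u f + ∑ a, eval u (pderiv a f) * (y a - u a) := by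
  classical
  have h2 : ∀ a b, pderiv b (pderiv a f) = 0 := by
    intro a b
    rw [f.as_sum, map_sum, map_sum]
    refine Finset.sum_eq_zero fun s hs => ?_
    rw [pderiv_monomial, pderiv_monomial]
    have h1 := (le_totalDegree hs).trans hf
    rw [Finsupp.sum_fintype _ _ (fun _ => rfl)] at h1
    have : ((s a : ℕ) : ℝ) * (((s - Finsupp.single a 1 : Fin n →₀ ℕ) b : ℕ) : ℝ) = 0 := by
      rw [Finsupp.tsub_apply]
      have ha := Finset.single_le_sum (f := fun i => s i) (fun _ _ => Nat.zero_le _) (Finset.mem_univ a)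
      by_cases hab : a = b
      · subst hab
        have : s a - 1 = 0 := by beta_reduce at ha; omega
        simp [this]
      · have hab2 := Finset.add_le_sum (f := fun i => s i) (s := Finset.univ) (fun _ _ => Nat.zero_le _) (Finset.mem_univ a) (Finset.mem_univ b) hab
        rw [Finsupp.single_eq_of_ne (Ne.symm hab)]
        have : s a = 0 ∨ s b = 0 := by beta_reduce at hab2; omega
        rcases this with h | h <;> simp [h]
    rw [mul_assoc, this]; simp
  set T := lineP u (fun i => y i - u i) f with hT
  obtain ⟨R⟩ := exists_QRule T.natDegree
  have := R.taylor T le_rfl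
  have e0 : T.eval 0 = eval u f := by rw [hT, lineP_eval]; simp [aeval_eq_eval]
  have e1 : T.eval 1 = eval y f := by rw [hT, lineP_eval]; simp [aeval_eq_eval]
  have e2 : (Polynomial.derivative T).eval 0 = ∑ a, eval u (pderiv a f) * (y a - u a) := by
    rw [hT, line_grad]; simp [aeval_eq_eval]
  rw [e0, e1, e2] at this
  have hz : ∀ r : ℝ, (Polynomial.derivative (Polynomial.derivative T)).eval r = 0 := fun r => by
    rw [hT, line_hess]; simp [h2]
  simp only [hz, neg_zero, mul_zero, Finset.sum_const_zero] at this
  linarith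

theorem kkt (hx : ∃ x0 ∈ SolSet g, GoodPt g x0) {u : Fin n → ℝ} (hu : u ∈ SolSet g) (a : Fin n → ℝ)
    (hmin : ∀ y ∈ SolSet g, 0 ≤ ∑ i, a i * (y i - u i)) (K : Set (Fin n → ℝ)) (K0 : (0 : Fin n → ℝ) ∈ K)
    (Kadd : ∀ v ∈ K, ∀ w ∈ K, v + w ∈ K) (Ksm : ∀ c : ℝ, 0 ≤ c → ∀ v ∈ K, c • v ∈ K)
    (hK : ∀ l, g l ≠ 0 → eval u (g l) = 0 → (fun i => eval u (pderiv i (g l))) ∈ K) : a ∈ K := by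
  classical
  obtain ⟨x0, hx0, hgp⟩ := hx
  let b : Fin m → Fin n → ℝ := fun l i => eval u (pderiv i (g l))
  let I : Set (Fin m) := {l | g l ≠ 0 ∧ eval u (g l) = 0}
  let s : Set (Fin n → ℝ) := insert (-a) (b '' I)
  have hsf : s.Finite := ((Set.toFinite I).image b).insert _
  by_cases h0 : (0 : Fin n → ℝ) ∈ convexHull ℝ s
  · rw [mem_convexHull_iff_exists_fintype] at h0
    obtain ⟨ι, _, w, z, hw, hw1, hz, hsum⟩ := h0
    let J := Finset.univ.filter fun i => z i ∈ b '' I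
    have hz' : ∀ i ∈ Finset.univ.filter (fun i => ¬ z i ∈ b '' I), w i • z i = -(w i • a) := by
      intro i hi
      rcases hz i with h | h
      · rw [h, smul_neg]
      · exact absurd h (Finset.mem_filter.1 hi).2
    set lam := ∑ i ∈ Finset.univ.filter (fun i => ¬ z i ∈ b '' I), w i with hlam
    have hsplit : ∑ i ∈ J, w i • z i = lam • a := by
      have := Finset.sum_filter_add_sum_filter_not Finset.univ (fun i => z i ∈ b '' I) (fun i => w i • z i)
      rw [hsum, Finset.sum_congr rfl hz', Finset.sum_neg_distrib, ← Finset.sum_smul] at this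
      exact (add_neg_eq_zero.1 this)
    have hsplitw : ∑ i ∈ J, w i + lam = 1 := by
      rw [← hw1]; exact Finset.sum_filter_add_sum_filter_not Finset.univ (fun i => z i ∈ b '' I) w
    have hlam0 : 0 ≤ lam := Finset.sum_nonneg fun i _ => hw i
    have hlampos : 0 < lam := by
      rcases hlam0.eq_or_lt with h | h
      · exfalso
        rw [← h, add_zero] at hsplitw
        rw [← h, zero_smul] at hsplit
        have hdot : ∑ i ∈ J, w i * ∑ k, z i k * (x0 k - u k) = 0 := by
          have : ∑ k, (∑ i ∈ J, w i • z i) k * (x0 k - u k) = 0 := by rw [hsplit]; simp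
          rw [← this]
          simp only [Finset.sum_apply, Pi.smul_apply, smul_eq_mul, Finset.mul_sum, Finset.sum_mul]
          rw [Finset.sum_comm]
          exact Finset.sum_congr rfl fun k _ => Finset.sum_congr rfl fun i _ => by ring
        have hp : ∀ i ∈ J, 0 < ∑ k, z i k * (x0 k - u k) := by
          intro i hi
          obtain ⟨l, hl, hlz⟩ := (Finset.mem_filter.1 hi).2
          rw [← hlz]
          exact hgp l hl.1 u hu hl.2
        have hz0 := (Finset.sum_eq_zero_iff_of_nonneg fun i hi => mul_nonneg (hw i) (hp i hi).le).1 hdot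
        have : ∑ i ∈ J, w i = 0 := Finset.sum_eq_zero fun i hi =>
          (mul_eq_zero.1 (hz0 i hi)).resolve_right (hp i hi).ne'
        linarith
      · exact h
    have hmem : ∀ J' : Finset ι, J' ⊆ J → ∑ i ∈ J', w i • z i ∈ K := by
      intro J'
      induction J' using Finset.induction_on with
      | empty => intro _; simpa using K0
      | insert i J' hi ih =>
        intro hJ
        rw [Finset.sum_insert hi]
        refine Kadd _ (Ksm _ (hw i) _ ?_) _ (ih fun j hj => hJ (Finset.mem_insert_of_mem hj))
        obtain ⟨l, hl, hlz⟩ := (Finset.mem_filter.1 (hJ (Finset.mem_insert_self i J'))).2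
        rw [← hlz]
        exact hK l hl.1 hl.2
    have := Ksm lam⁻¹ (by positivity) _ (hmem J subset_rfl)
    rwa [hsplit, smul_smul, inv_mul_cancel₀ hlampos.ne', one_smul] at this
  · exfalso
    obtain ⟨φ, c, hφ0, hφ⟩ := geometric_hahn_banach_point_closed (convex_convexHull ℝ s)
      (isCompact_convexHull_fd hsf.isCompact).isClosed h0
    rw [map_zero] at hφ0
    let v : Fin n → ℝ := fun i => φ (Pi.single i 1)
    have hφv : ∀ y : Fin n → ℝ, φ y = ∑ i, y i * v i := by
      intro y
      conv_lhs => rw [pi_eq_sum_univ' y]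
      rw [map_sum]
      refine Finset.sum_congr rfl fun i _ => ?_
      rw [map_smul, smul_eq_mul]
    have hφpos : ∀ y ∈ s, 0 < φ y := fun y hy => hφ0.trans (hφ y (subset_convexHull ℝ s hy))
    have hev : ∀ l, ∀ᶠ t : ℝ in nhdsWithin 0 (Set.Ioi 0), 0 ≤ eval (fun i => u i + t * v i) (g l) := by
      intro l
      have hT : ∀ t : ℝ, (lineP u v (g l)).eval t = eval (fun i => u i + t * v i) (g l) := fun t => by
        rw [lineP_eval, aeval_eq_eval]
      by_cases hl : g l = 0
      · simp [hl]
      rcases (hu l).eq_or_lt with h | h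
      · have hd := (lineP u v (g l)).hasDerivAt (0:ℝ)
        have hpos : 0 < (Polynomial.derivative (lineP u v (g l))).eval 0 := by
          have := hφpos (b l) (Or.inr ⟨l, ⟨hl, h.symm⟩, rfl⟩)
          rw [hφv] at this
          rw [line_grad]
          simpa [aeval_eq_eval, b] using this
        have hs := hd.tendsto_slope_zero_right
        filter_upwards [hs.eventually (lt_mem_nhds hpos), self_mem_nhdsWithin] with t ht ht0
        rw [zero_add, hT, hT, smul_eq_mul] at ht
        have e : eval (fun i => u i + 0 * v i) (g l) = 0 := by simpa using h.symm
        rw [e, sub_zero] at ht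
        exact ((pos_iff_pos_of_mul_pos ht).1 (inv_pos.2 ht0)).le
      · have hc : Continuous fun t : ℝ => eval (fun i => u i + t * v i) (g l) :=
          (MvPolynomial.continuous_eval (g l)).comp (by fun_prop)
        have := hc.tendsto 0
        simp only [zero_mul, add_zero] at this
        filter_upwards [(this.mono_left nhdsWithin_le_nhds).eventually (lt_mem_nhds h)] with t ht
        exact ht.le
    obtain ⟨t, ht, ht0⟩ := ((Filter.eventually_all.2 hev).and self_mem_nhdsWithin).exists
    have h1 := hmin _ ht
    have h2 := hφpos (-a) (Or.inl rfl)
    rw [map_neg, hφv] at h2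
    have h3 : ∑ i, a i * (u i + t * v i - u i) = t * ∑ i, a i * v i := by
      rw [Finset.mul_sum]; exact Finset.sum_congr rfl fun i _ => by ring
    rw [h3] at h1
    have ht0' : 0 < t := ht0
    nlinarith
end final


theorem stmt_13 {n m : ℕ} (g : Fin m → MvPolynomial (Fin n) ℝ)
    (hconv : Convex ℝ (SolSet g)) (hint : (interior (SolSet g)).Nonempty)
    (harch : IsArchimedeanQM (QM g))
    (hg : ∀ i, (∀ x ∈ SolSet g ∩ ZSet (g i), StrictlyQuasiconcaveAt (g i) x) ∨
      SosConcave g (g i)) :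
    ∃ d : ℕ, ∀ f : MvPolynomial (Fin n) ℝ, f.totalDegree ≤ 1 →
      (∀ x ∈ SolSet g, 0 ≤ eval x f) → f ∈ TruncQM d g := by
  obtain ⟨x0, hx0, hpos⟩ := exists_int_pt hint
  have hcpt := SolSet.compact harch
  have hgp := goodPt hconv hcpt hg hx0 hpos
  have hS := FamSetup hconv harch
  have hscale : ∀ (d : ℕ) (c : ℝ), 0 ≤ c → ∀ p ∈ TruncQM d g, C c * p ∈ TruncQM d g := by
    intro d c hc p hp
    have := TQ.sqm (e := 0) (q := C (Real.sqrt c)) (by simp) hp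
    rwa [← map_pow, Real.sq_sqrt hc] at this
  have hl : ∀ l, ∃ d, ∀ u ∈ SolSet g, eval u (g l) = 0 →
      ∑ a, C (eval u (pderiv a (g l))) * (X a - C (u a)) ∈ TruncQM d g := by
    intro l
    obtain ⟨f, κ, hκ, ⟨d, hd⟩, hf⟩ := hS.all_tangent hgp hg l
    refine ⟨d, fun u hu hu0 => ?_⟩
    have h1 := hd ⟨u, hu⟩
    obtain ⟨hf0, hf1⟩ := hf u hu0
    have hX : ∀ a, famEv g ⟨u, hu⟩ (famX g a) = X a := fun a => rfl
    have hU : ∀ a, famEv g ⟨u, hu⟩ (famU harch a) = C (u a) := fun a => rfl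
    rw [famEv_eq] at h1
    simp only [map_add, map_sum, map_mul, map_sub, famEv_U, hX, hU, hf0, hf1, map_zero, add_zero] at h1
    have h2 := hscale d κ⁻¹ (by positivity) _ h1
    convert h2 using 1
    rw [Finset.mul_sum]
    refine Finset.sum_congr rfl fun a _ => ?_
    rw [mul_assoc, ← mul_assoc (C κ⁻¹), ← map_mul, inv_mul_cancel₀ hκ.ne', map_one, one_mul]
  choose dl hdl using hl
  refine ⟨∑ l, dl l, fun f hf hfn => ?_⟩
  set d := ∑ l, dl l with hd
  obtain ⟨u, hu, hmin⟩ := hcpt.exists_isMinOn ⟨x0, hx0⟩ (MvPolynomial.continuous_eval f).continuousOn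
  have hK := kkt (g := g) ⟨x0, hx0, hgp⟩ hu (fun i => eval u (pderiv i f)) (by
      intro y hy
      have h1 := affine_repr hf u y
      have h2 : eval u f ≤ eval y f := hmin hy
      linarith)
    {v | ∑ a, C (v a) * (X a - C (u a)) ∈ TruncQM d g}
    (by
      show ∑ a, C ((0 : Fin n → ℝ) a) * (X a - C (u a)) ∈ TruncQM d g
      simpa using TQ.zero (g := g) d)
    (by
      intro v hv w hw
      show ∑ a, C ((v + w) a) * (X a - C (u a)) ∈ TruncQM d g
      have := TQ.add hv hw
      rw [← Finset.sum_add_distrib] at this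
      simpa [add_mul] using this)
    (by
      intro c hc v hv
      show ∑ a, C ((c • v) a) * (X a - C (u a)) ∈ TruncQM d g
      have := hscale d c hc _ hv
      rw [Finset.mul_sum] at this
      simpa [mul_assoc] using this)
    (by
      intro l _ hl0
      exact TQ.mono (Finset.single_le_sum (f := dl) (fun _ _ => Nat.zero_le _) (Finset.mem_univ l)) (hdl l u hu hl0))
  have hK' : ∑ a, C (eval u (pderiv a f)) * (X a - C (u a)) ∈ TruncQM d g := hK
  have hfe : f = C (eval u f) + ∑ a, C (eval u (pderiv a f)) * (X a - C (u a)) := by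
    refine MvPolynomial.funext fun y => ?_
    rw [affine_repr hf u y]
    simp
  rw [hfe]
  exact TQ.add (TQ.C (hfn u hu) d) hK'
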